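/- arXiv:2401.02623 — 2 statements merged into one kernel-verified Lean document; each statement's English description precedes it below -/
import Mathlib

section
/- For every β with 0 < β < 4/3 there exist constants c > 0 and δ₀ > 0, and for every bounded interval I ⊂ ℝ a constant C > 0 (depending only on β and I), such that the following holds for all δ ∈ (0, δ₀). Let φ : [0,∞) × ℝ → ℝ be a smooth global solution of the Sine–Gordon equation ∂ₜ²φ − ∂ₓ²φ + sin φ = 0 such that u(t,x) := φ(t,x) − K(x) is odd in x for every t ≥ 0, such that for every t ≥ 0 the functions u(t,·), ∂ₓu(t,·) and ∂ₜu(t,·) are square integrable, and such that at time t = 0 one has (∫_ℝ [u(0,x)² + (∂ₓu(0,x))² + (∂ₜu(0,x))²] dx)^{1/2} ≤ δ. Then, with T_max := exp(c δ^{−β}), one has ∫₀^{T_max} ∫_I (1 + t)^{−1} [ (∂ₜu(t,x))² + (∂ₓu(t,x))² + u(t,x)² ] dx dt ≤ C δ². -/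
/-!
Since `u` is odd it vanishes at `x = 0` and may be studied on the half-line `x ≥ 0`, where the
operator linearised at the kink is `-∂ₓ² + 1 - 2 sech²`. It has no odd eigenfunction, but it has
the odd threshold resonance `tanh`, which is the obstruction to a plain virial estimate.

*Uniform smallness.* The Bogomolny quantity `b = φₓ - 2 sin (φ / 2)` vanishes for the kink, and
`uₜ² + b²` is the density of a conserved energy. Its propagation in light cones, together with the
first order equation which `b` provides for `u`, bounds `u` in the energy space and in `L^∞` by
`E = 100 δ` for all `t ≥ 0`.

*Virial estimate.* Put `p = uₓ - (sech² / tanh) u`, which is zero exactly when `u` is a multiple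
of the resonance. For a bump of width `A` and the weight `ψ` of size at most `A` that solves
`ψ' + 2 (sech² / tanh) ψ = bump`, the time derivative of `∫ (ψ p + bump · u / 2) uₜ` is at most
`-c ∫ bump · p² + C E² / A²` plus nonlinear terms. These are quartic, up to exponentially localised
cubic ones; since `bump · u²` is bounded pointwise by `E² / A + ∫ bump |u| |p|`, they are absorbed
at the cost of `C E⁶`. Integration in time gives
`∫_{t₀}^{t₁} ∫ bump · p² ≤ C (A E² + (t₁ - t₀) (E² / A² + E⁶))`,
and recovering `u`, `uₓ` and `uₜ` on a fixed interval costs one more factor `A`.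

*Dyadic summation.* On `[2 ^ k - 1, 2 ^ (k + 1) - 1]` the choice `A ∼ (k + 1)²` and the weight
`(1 + t)⁻¹ ≤ 2⁻ᵏ` give the bound `C ((k + 1)⁴ 2⁻ᵏ E² + (k + 1)⁻² E² + (k + 1)² E⁶)`. Summing over
`k < n` yields `C (E² + n³ E⁶)`, and `n ∼ δ ^ (-4 / 3)` intervals reach the time
`exp (c δ ^ (-4 / 3))`, up to which the last term is still of size `δ²`.
-/

open MeasureTheory Real Filter

/-- The static kink of the Sine-Gordon equation. -/
noncomputable def K (x : ℝ) : ℝ := 4 * Real.arctan (Real.exp x)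

namespace SineGordonKink

noncomputable section

/-! ### Hyperbolic functions and the kink -/

/-- The hyperbolic secant, in terms of which the kink and the potential `1 - 2 sech²` of the
operator linearised at it are expressed. -/
def sech (x : ℝ) : ℝ := (cosh x)⁻¹

lemma sech_pos (x : ℝ) : 0 < sech x := inv_pos.2 (cosh_pos x)

lemma sech_le_one (x : ℝ) : sech x ≤ 1 := inv_le_one_of_one_le₀ (one_le_cosh x)

lemma sinh_mul_sech (x : ℝ) : sinh x * sech x = tanh x := by
  rw [tanh_eq_sinh_div_cosh, sech, div_eq_mul_inv]

lemma tanh_sq_add_sech_sq (x : ℝ) : tanh x ^ 2 + sech x ^ 2 = 1 := by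
  have := cosh_pos x
  rw [tanh_eq_sinh_div_cosh, sech]
  field_simp
  rw [cosh_sq]

lemma hasDerivAt_sech (x : ℝ) : HasDerivAt sech (-(sech x * tanh x)) x := by
  refine ((hasDerivAt_cosh x).fun_inv (cosh_pos x).ne').congr_deriv ?_
  rw [← sinh_mul_sech, sech]
  field_simp

lemma hasDerivAt_tanh (x : ℝ) : HasDerivAt tanh (sech x ^ 2) x := by
  have hmul : tanh = fun y => sinh y * sech y := funext fun y => (sinh_mul_sech y).symm
  rw [hmul]
  refine ((hasDerivAt_sinh x).fun_mul (hasDerivAt_sech x)).congr_deriv ?_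
  have hcosh : cosh x * sech x = 1 := mul_inv_cancel₀ (cosh_pos x).ne'
  linear_combination hcosh - tanh x * sinh_mul_sech x - tanh_sq_add_sech_sq x

@[fun_prop]
lemma continuous_tanh : Continuous tanh :=
  continuous_iff_continuousAt.2 fun x => (hasDerivAt_tanh x).continuousAt

@[fun_prop]
lemma continuous_sech : Continuous sech :=
  continuous_iff_continuousAt.2 fun x => (hasDerivAt_sech x).continuousAt

lemma tanh_pos {x : ℝ} (hx : 0 < x) : 0 < tanh x := by
  rw [← sinh_mul_sech]
  exact mul_pos (sinh_pos_iff.2 hx) (sech_pos x)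

lemma tanh_nonneg {x : ℝ} (hx : 0 ≤ x) : 0 ≤ tanh x := by
  rw [← sinh_mul_sech]
  exact mul_nonneg (sinh_nonneg_iff.2 hx) (sech_pos x).le

lemma monotone_tanh : Monotone tanh :=
  monotone_of_hasDerivAt_nonneg hasDerivAt_tanh fun x => by positivity

lemma one_sub_tanh_le_sech {x : ℝ} (hx : 0 ≤ x) : 1 - tanh x ≤ sech x := by
  have hcosh := cosh_pos x
  rw [tanh_eq_sinh_div_cosh, sech]
  field_simp
  rw [cosh_sub_sinh]
  simpa using hx

lemma mul_sech_le_tanh {x : ℝ} (hx : 0 ≤ x) : x * sech x ≤ tanh x := by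
  rw [← sinh_mul_sech]
  have := sech_pos x
  gcongr
  exact self_le_sinh_iff.2 hx

lemma one_add_mul_sech_le {x : ℝ} (hx : 0 ≤ x) : (1 + x) * sech x ≤ 32 / (1 + x ^ 2) := by
  have cubic_le_exp : 1 + x + x ^ 2 / 2 + x ^ 3 / 6 ≤ exp x := by
    have := Real.sum_le_exp_of_nonneg hx 4
    simp only [Finset.sum_range_succ, Finset.range_zero, Finset.sum_empty, Nat.factorial] at this
    norm_num at this
    linarith
  have exp_le_two_cosh : exp x ≤ 2 * cosh x := by
    rw [cosh_eq]
    linarith [exp_pos (-x)]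
  rw [sech, ← div_eq_mul_inv, div_le_div_iff₀ (cosh_pos x) (by positivity)]
  nlinarith [pow_nonneg hx 2, pow_nonneg hx 3]

lemma K_pos (x : ℝ) : 0 < K x := by
  have := arctan_pos.2 (exp_pos x)
  unfold K
  positivity

lemma K_lt_two_pi (x : ℝ) : K x < 2 * π := by
  have := arctan_lt_pi_div_two (exp x)
  unfold K
  linarith

lemma hasDerivAt_K (x : ℝ) : HasDerivAt K (2 * sech x) x := by
  have := exp_pos x
  refine ((hasDerivAt_exp x).arctan.const_mul 4).congr_deriv ?_
  simp only [sech, cosh_eq, exp_neg]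
  field_simp
  ring

lemma contDiff_K {n : WithTop ℕ∞} : ContDiff ℝ n K :=
  contDiff_const.mul (contDiff_arctan.comp contDiff_exp)

@[fun_prop]
lemma continuous_K : Continuous K := (contDiff_K (n := 0)).continuous

lemma K_div_two (x : ℝ) : K x / 2 = 2 * arctan (exp x) := by
  unfold K
  ring

lemma sin_half_K (x : ℝ) : sin (K x / 2) = sech x := by
  have := exp_pos x
  have hsqrt : √(1 + exp x ^ 2) ^ 2 = 1 + exp x ^ 2 := sq_sqrt (by positivity)
  rw [K_div_two, sin_two_mul, sin_arctan, cos_arctan, sech, cosh_eq, exp_neg]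
  field_simp
  rw [hsqrt]
  ring

lemma cos_half_K (x : ℝ) : cos (K x / 2) = -tanh x := by
  have := exp_pos x
  have hsqrt : √(1 + exp x ^ 2) ^ 2 = 1 + exp x ^ 2 := sq_sqrt (by positivity)
  rw [K_div_two, cos_two_mul, cos_arctan, tanh_eq, exp_neg, div_pow, hsqrt]
  field_simp
  ring

lemma sin_K (x : ℝ) : sin (K x) = -(2 * sech x * tanh x) := by
  rw [← mul_div_cancel₀ (K x) (two_ne_zero' ℝ), sin_two_mul, sin_half_K, cos_half_K]
  ring

lemma cos_K (x : ℝ) : cos (K x) = 1 - 2 * sech x ^ 2 := by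
  rw [← mul_div_cancel₀ (K x) (two_ne_zero' ℝ), cos_two_mul, cos_half_K]
  linear_combination 2 * tanh_sq_add_sech_sq x

lemma abs_sin_K_le (x : ℝ) : |sin (K x)| ≤ 2 * sech x := by
  have hsech := sech_pos x
  rw [sin_K, abs_neg, abs_mul, abs_of_pos (by positivity)]
  exact mul_le_of_le_one_right (by positivity) (abs_tanh_lt_one x).le

/-! ### Calculus on intervals -/

lemma hasDerivAt_unique_of_eqOn_Ici {f g : ℝ → ℝ} {a b t₀ t : ℝ} (hfg : Set.EqOn f g (Set.Ici t₀))
    (ht : t₀ ≤ t) (hf : HasDerivAt f a t) (hg : HasDerivAt g b t) : a = b :=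
  (uniqueDiffOn_Ici t₀ t ht).eq_deriv _ hf.hasDerivWithinAt
    (hg.hasDerivWithinAt.congr hfg (hfg ht))

lemma hasDerivAt_max_zero_sq (x : ℝ) :
    HasDerivAt (fun y : ℝ => max y 0 ^ 2) (2 * max x 0) x := by
  refine hasDerivAt_of_hasDerivAt_of_ne' (x := 0) (g := fun y => 2 * max y 0) (fun y hy => ?_)
    (by fun_prop) (by fun_prop) x
  rcases hy.lt_or_gt with hneg | hpos
  · have hzero : (fun y : ℝ => max y 0 ^ 2) =ᶠ[nhds y] fun _ => 0 := by
      filter_upwards [Iio_mem_nhds hneg] with z (hz : z < 0)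
      rw [max_eq_right hz.le, sq, mul_zero]
    rw [max_eq_right hneg.le, mul_zero]
    exact (hasDerivAt_const y (0 : ℝ)).congr_of_eventuallyEq hzero
  · have hsq : (fun y : ℝ => max y 0 ^ 2) =ᶠ[nhds y] fun z => z ^ 2 := by
      filter_upwards [Ioi_mem_nhds hpos] with z (hz : 0 < z)
      rw [max_eq_left hz.le]
    rw [max_eq_left hpos.le]
    simpa using (hasDerivAt_pow 2 y).congr_of_eventuallyEq hsq

lemma continuous_slice {f : ℝ → ℝ → ℝ} (hf : Continuous (Function.uncurry f)) (t : ℝ) :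
    Continuous (f t) :=
  hf.comp (by fun_prop : Continuous fun x => (t, x))

lemma continuous_slice_left {f : ℝ → ℝ → ℝ} (hf : Continuous (Function.uncurry f)) (x : ℝ) :
    Continuous fun t => f t x :=
  hf.comp (by fun_prop : Continuous fun t => (t, x))

lemma integral_sub_integral_eq_integral_deriv {F Ft : ℝ → ℝ → ℝ}
    (hF : Continuous (Function.uncurry F)) (hFt : Continuous (Function.uncurry Ft))
    (hderiv : ∀ t x, HasDerivAt (fun s => F s x) (Ft t x) t) (t₀ t₁ a b : ℝ) :
    (∫ x in a..b, F t₁ x) - ∫ x in a..b, F t₀ x = ∫ t in t₀..t₁, ∫ x in a..b, Ft t x := by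
  rw [← intervalIntegral.integral_sub ((continuous_slice hF t₁).intervalIntegrable _ _)
    ((continuous_slice hF t₀).intervalIntegrable _ _), intervalIntegral_intervalIntegral_swap]
  · refine intervalIntegral.integral_congr fun x _ => ?_
    exact (intervalIntegral.integral_eq_sub_of_hasDerivAt (fun t _ => hderiv t x)
      ((continuous_slice_left hFt x).intervalIntegrable _ _)).symm
  · have : IntegrableOn (Function.uncurry Ft) (Set.uIcc t₀ t₁ ×ˢ Set.uIcc a b)
        (volume.prod volume) :=
      hFt.continuousOn.integrableOn_compact (isCompact_uIcc.prod isCompact_uIcc)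
    exact this.mono_set (Set.prod_mono Set.uIoc_subset_uIcc Set.uIoc_subset_uIcc)

lemma integral_le_sub_of_le_deriv {g g' f : ℝ → ℝ} {a b : ℝ} (hab : a ≤ b)
    (hg : ContinuousOn g (Set.Icc a b)) (hderiv : ∀ x, a < x → x < b → HasDerivAt g (g' x) x)
    (hf : ContinuousOn f (Set.Icc a b)) (hle : ∀ x, a < x → x < b → f x ≤ g' x) :
    ∫ x in a..b, f x ≤ g b - g a :=
  intervalIntegral.integral_le_sub_of_hasDeriv_right_of_le hab hg
    (fun x hx => (hderiv x hx.1 hx.2).hasDerivWithinAt)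
    (hf.integrableOn_compact isCompact_Icc) fun x hx => hle x hx.1 hx.2

lemma sub_le_integral_of_deriv_le {g g' f : ℝ → ℝ} {a b : ℝ} (hab : a ≤ b)
    (hg : ContinuousOn g (Set.Icc a b)) (hderiv : ∀ x, a < x → x < b → HasDerivAt g (g' x) x)
    (hf : ContinuousOn f (Set.Icc a b)) (hle : ∀ x, a < x → x < b → g' x ≤ f x) :
    g b - g a ≤ ∫ x in a..b, f x :=
  intervalIntegral.sub_le_integral_of_hasDeriv_right_of_le hab hg
    (fun x hx => (hderiv x hx.1 hx.2).hasDerivWithinAt)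
    (hf.integrableOn_compact isCompact_Icc) fun x hx => hle x hx.1 hx.2

lemma integral_le_integral_of_continuous {f g : ℝ → ℝ} {a b : ℝ} (hab : a ≤ b)
    (hf : Continuous f) (hg : Continuous g) (hle : ∀ x, a ≤ x → x ≤ b → f x ≤ g x) :
    ∫ x in a..b, f x ≤ ∫ x in a..b, g x :=
  intervalIntegral.integral_mono_on hab (hf.intervalIntegrable _ _) (hg.intervalIntegrable _ _)
    fun x hx => hle x hx.1 hx.2

lemma integral_sq_nonneg {a b : ℝ} (f : ℝ → ℝ) (hab : a ≤ b) : 0 ≤ ∫ x in a..b, f x ^ 2 :=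
  intervalIntegral.integral_nonneg hab fun x _ => sq_nonneg (f x)

lemma sq_integral_mul_le {f g : ℝ → ℝ} {a b : ℝ} (hab : a ≤ b) (hf : Continuous f)
    (hg : Continuous g) :
    (∫ x in a..b, f x * g x) ^ 2 ≤ (∫ x in a..b, f x ^ 2) * ∫ x in a..b, g x ^ 2 := by
  have hquad : ∀ s : ℝ, 0 ≤ (∫ x in a..b, g x ^ 2) * (s * s)
      + -(2 * ∫ x in a..b, f x * g x) * s + ∫ x in a..b, f x ^ 2 := by
    intro s
    calc 0 ≤ ∫ x in a..b, (s * g x - f x) ^ 2 := integral_sq_nonneg _ hab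
      _ = ∫ x in a..b, (s ^ 2 * g x ^ 2 - 2 * s * (f x * g x) + f x ^ 2) := by
          refine intervalIntegral.integral_congr fun x _ => ?_
          ring
      _ = _ := by
          rw [intervalIntegral.integral_add (Continuous.intervalIntegrable (by fun_prop) _ _)
            (Continuous.intervalIntegrable (by fun_prop) _ _),
            intervalIntegral.integral_sub (Continuous.intervalIntegrable (by fun_prop) _ _)
            (Continuous.intervalIntegrable (by fun_prop) _ _), intervalIntegral.integral_const_mul,
            intervalIntegral.integral_const_mul]
          ring
  have hdiscrim := discrim_le_zero hquad
  rw [discrim] at hdiscrim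
  linarith

lemma le_of_forall_pos_le {f g : ℝ → ℝ} (hf : Continuous f) (hg : Continuous g)
    (hle : ∀ x, 0 < x → f x ≤ g x) {x : ℝ} (hx : 0 ≤ x) : f x ≤ g x := by
  have hclosure : closure (Set.Ioi (0 : ℝ)) ⊆ {x | f x ≤ g x} :=
    (isClosed_le hf hg).closure_subset_iff.2 hle
  rw [closure_Ioi] at hclosure
  exact hclosure hx

/-! ### The virial weight -/

/-- A `C¹` bump of width `A`, equal to one at the origin, that localises the virial estimate. -/
def bump (A x : ℝ) : ℝ := max (1 - x ^ 2 / A ^ 2) 0 ^ 2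

/-- The derivative of `bump A`, needed for the error terms of the localisation. -/
def bumpDeriv (A x : ℝ) : ℝ := 2 * max (1 - x ^ 2 / A ^ 2) 0 * (-(2 * x / A ^ 2))

lemma hasDerivAt_bump (A x : ℝ) : HasDerivAt (bump A) (bumpDeriv A x) x := by
  have hinner : HasDerivAt (fun y : ℝ => 1 - y ^ 2 / A ^ 2) (-(2 * x / A ^ 2)) x := by
    simpa using ((hasDerivAt_pow 2 x).div_const (A ^ 2)).const_sub 1
  exact (hasDerivAt_max_zero_sq _).comp x hinner

@[fun_prop]
lemma continuous_bump (A : ℝ) : Continuous (bump A) :=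
  continuous_iff_continuousAt.2 fun x => (hasDerivAt_bump A x).continuousAt

@[fun_prop]
lemma continuous_bumpDeriv (A : ℝ) : Continuous (bumpDeriv A) := by
  unfold bumpDeriv
  fun_prop

lemma bump_nonneg (A x : ℝ) : 0 ≤ bump A x := sq_nonneg _

lemma bump_le_one (A x : ℝ) : bump A x ≤ 1 := by
  have : 0 ≤ x ^ 2 / A ^ 2 := by positivity
  exact pow_le_one₀ (le_max_right _ _) (max_le (by linarith) zero_le_one)

lemma bump_eq_zero {A x : ℝ} (hA : 0 < A) (hx : A ≤ x) : bump A x = 0 := by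
  have : 1 ≤ x ^ 2 / A ^ 2 := by
    rw [le_div_iff₀ (by positivity), one_mul]
    gcongr
  rw [bump, max_eq_right (by linarith), sq, mul_zero]

lemma le_bump {A x c : ℝ} (hA : 0 < A) (hx : 0 ≤ x) (hc : 0 ≤ c) (hc1 : c ≤ 1)
    (hxA : x ≤ c * A) : (1 - c ^ 2) ^ 2 ≤ bump A x := by
  have hratio : x ^ 2 / A ^ 2 ≤ c ^ 2 := by
    rw [div_le_iff₀ (by positivity), ← mul_pow]
    gcongr
  have hnonneg : 0 ≤ 1 - c ^ 2 := by nlinarith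
  unfold bump
  gcongr
  exact le_max_of_le_left (by linarith)

lemma le_bump_of_le_half {A x : ℝ} (hA : 0 < A) (hx : 0 ≤ x) (hxA : x ≤ A / 2) :
    9 / 16 ≤ bump A x := by
  have := le_bump (c := 1 / 2) hA hx (by norm_num) (by norm_num) (by linarith)
  norm_num at this ⊢
  exact this

lemma bumpDeriv_sq_le {A : ℝ} (hA : 0 < A) (x : ℝ) :
    bumpDeriv A x ^ 2 ≤ 16 / A ^ 2 * bump A x := by
  rcases le_total (1 - x ^ 2 / A ^ 2) 0 with hout | hin
  · simp [bumpDeriv, bump, max_eq_right hout]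
  · calc bumpDeriv A x ^ 2 = 16 / A ^ 2 * (x ^ 2 / A ^ 2) * bump A x := by
          rw [bumpDeriv, bump]
          field_simp
          ring
      _ ≤ 16 / A ^ 2 * 1 * bump A x := by
          have := bump_nonneg A x
          gcongr
          linarith
      _ = _ := by ring

lemma abs_bumpDeriv_le {A : ℝ} (hA : 0 < A) (x : ℝ) : |bumpDeriv A x| ≤ 4 / A := by
  refine abs_le_of_sq_le_sq ((bumpDeriv_sq_le hA x).trans ?_) (by positivity)
  calc 16 / A ^ 2 * bump A x ≤ 16 / A ^ 2 * 1 := by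
        gcongr
        exact bump_le_one A x
    _ = (4 / A) ^ 2 := by ring

/-- The continuous extension of `tanh x / x` to the origin, written as an average so that
continuity of quotients by `tanh` comes for free. -/
def tanhSlope (x : ℝ) : ℝ := ∫ y in (0 : ℝ)..1, sech (x * y) ^ 2

@[fun_prop]
lemma continuous_tanhSlope : Continuous tanhSlope := by
  unfold tanhSlope
  refine intervalIntegral.continuous_parametric_intervalIntegral_of_continuous' ?_ 0 1
  unfold Function.uncurry
  fun_prop

lemma mul_tanhSlope (x : ℝ) : x * tanhSlope x = tanh x := by
  rw [tanhSlope, intervalIntegral.mul_integral_comp_mul_left (f := fun z => sech z ^ 2),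
    intervalIntegral.integral_eq_sub_of_hasDerivAt (fun z _ => hasDerivAt_tanh z)
      ((continuous_sech.pow 2).intervalIntegrable _ _)]
  simp

lemma tanhSlope_pos (x : ℝ) : 0 < tanhSlope x :=
  intervalIntegral.intervalIntegral_pos_of_pos
    (Continuous.intervalIntegrable (by fun_prop) _ _) (fun y => pow_pos (sech_pos _) 2) zero_lt_one

/-- The continuous extension to the origin of `tanh⁻³ ∫₀ˣ tanh² bump`; the virial weight is
`tanh` times this quotient. -/
def weightQuot (A x : ℝ) : ℝ :=
  (tanhSlope x ^ 3)⁻¹ * ∫ y in (0 : ℝ)..1, y ^ 2 * tanhSlope (x * y) ^ 2 * bump A (x * y)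

/-- The virial weight: the solution of `ψ' = bump - 2 (sech² / tanh) ψ` that is regular at the
origin. The choice makes the quadratic virial form equal to `∫ ψ' p²`, with
`p = uₓ - (sech² / tanh) u`, up to errors of size `A⁻²`. -/
def virialWeight (A x : ℝ) : ℝ := tanh x * weightQuot A x

/-- The derivative of `virialWeight A` on the half-line. -/
def virialWeightDeriv (A x : ℝ) : ℝ := bump A x - 2 * sech x ^ 2 * weightQuot A x

@[fun_prop]
lemma continuous_weightQuot (A : ℝ) : Continuous (weightQuot A) := by
  unfold weightQuot
  refine (Continuous.inv₀ (by fun_prop) fun x => (pow_pos (tanhSlope_pos x) 3).ne').mul ?_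
  refine intervalIntegral.continuous_parametric_intervalIntegral_of_continuous' ?_ 0 1
  unfold Function.uncurry
  fun_prop

@[fun_prop]
lemma continuous_virialWeight (A : ℝ) : Continuous (virialWeight A) :=
  continuous_tanh.mul (continuous_weightQuot A)

lemma tanh_pow_three_mul_weightQuot (A x : ℝ) :
    tanh x ^ 3 * weightQuot A x = ∫ y in (0 : ℝ)..x, tanh y ^ 2 * bump A y := by
  have hslope := tanhSlope_pos x
  have hrescale : ∫ y in (0 : ℝ)..x, tanh y ^ 2 * bump A y
      = x * ∫ y in (0 : ℝ)..1, tanh (x * y) ^ 2 * bump A (x * y) := by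
    rw [intervalIntegral.mul_integral_comp_mul_left (f := fun z => tanh z ^ 2 * bump A z)]
    simp
  have hfactor : ∫ y in (0 : ℝ)..1, tanh (x * y) ^ 2 * bump A (x * y)
      = x ^ 2 * ∫ y in (0 : ℝ)..1, y ^ 2 * tanhSlope (x * y) ^ 2 * bump A (x * y) := by
    rw [← intervalIntegral.integral_const_mul]
    refine intervalIntegral.integral_congr fun y _ => ?_
    rw [← mul_tanhSlope (x * y)]
    ring
  rw [hrescale, hfactor, weightQuot, ← mul_tanhSlope x]
  field_simp

lemma weightQuot_nonneg (A x : ℝ) : 0 ≤ weightQuot A x := by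
  refine mul_nonneg (inv_nonneg.2 (pow_pos (tanhSlope_pos x) 3).le) ?_
  refine intervalIntegral.integral_nonneg zero_le_one fun y _ => ?_
  have := bump_nonneg A (x * y)
  positivity

lemma virialWeight_nonneg {x : ℝ} (A : ℝ) (hx : 0 ≤ x) : 0 ≤ virialWeight A x :=
  mul_nonneg (tanh_nonneg hx) (weightQuot_nonneg A x)

lemma virialWeight_zero (A : ℝ) : virialWeight A 0 = 0 := by simp [virialWeight]

lemma hasDerivAt_virialWeight (A : ℝ) {x : ℝ} (hx : 0 < x) :
    HasDerivAt (virialWeight A) (virialWeightDeriv A x) x := by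
  have htanh := tanh_pos hx
  have hcont : Continuous fun y => tanh y ^ 2 * bump A y := by fun_prop
  have hnum : HasDerivAt (fun z => ∫ y in (0 : ℝ)..z, tanh y ^ 2 * bump A y)
      (tanh x ^ 2 * bump A x) x :=
    intervalIntegral.integral_hasDerivAt_right (hcont.intervalIntegrable _ _)
      (hcont.stronglyMeasurableAtFilter _ _) hcont.continuousAt
  have hden : HasDerivAt (fun z => tanh z ^ 2) (2 * tanh x * sech x ^ 2) x := by
    simpa using (hasDerivAt_tanh x).fun_pow 2
  have heq : virialWeight A =ᶠ[nhds x]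
      fun z => (∫ y in (0 : ℝ)..z, tanh y ^ 2 * bump A y) / tanh z ^ 2 := by
    filter_upwards [Ioi_mem_nhds hx] with z hz
    have := tanh_pos hz
    rw [← tanh_pow_three_mul_weightQuot, virialWeight]
    field_simp
  refine ((hnum.div hden (by positivity)).congr_of_eventuallyEq heq).congr_deriv ?_
  rw [← tanh_pow_three_mul_weightQuot, virialWeightDeriv]
  field_simp

lemma virialWeight_le_integral_bump (A : ℝ) {x : ℝ} (hx : 0 ≤ x) :
    virialWeight A x ≤ ∫ y in (0 : ℝ)..x, bump A y := by
  rcases hx.eq_or_lt with rfl | hx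
  · simp [virialWeight_zero]
  refine le_of_mul_le_mul_left ?_ (pow_pos (tanh_pos hx) 2)
  calc tanh x ^ 2 * virialWeight A x = tanh x ^ 3 * weightQuot A x := by
        rw [virialWeight]
        ring
    _ = ∫ y in (0 : ℝ)..x, tanh y ^ 2 * bump A y := tanh_pow_three_mul_weightQuot A x
    _ ≤ ∫ y in (0 : ℝ)..x, tanh x ^ 2 * bump A y := by
      refine integral_le_integral_of_continuous hx.le (by fun_prop) (by fun_prop) fun y hy hyx => ?_
      have := tanh_nonneg hy
      have := monotone_tanh hyx
      have := bump_nonneg A y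
      gcongr
    _ = tanh x ^ 2 * ∫ y in (0 : ℝ)..x, bump A y := intervalIntegral.integral_const_mul _ _

lemma integral_bump_le_self (A : ℝ) {x : ℝ} (hx : 0 ≤ x) : ∫ y in (0 : ℝ)..x, bump A y ≤ x :=
  calc ∫ y in (0 : ℝ)..x, bump A y ≤ ∫ _y in (0 : ℝ)..x, (1 : ℝ) :=
        integral_le_integral_of_continuous hx (by fun_prop) (by fun_prop)
          fun y _ _ => bump_le_one A y
    _ = x := by simp

lemma virialWeight_le_self (A : ℝ) {x : ℝ} (hx : 0 ≤ x) : virialWeight A x ≤ x :=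
  (virialWeight_le_integral_bump A hx).trans (integral_bump_le_self A hx)

lemma virialWeight_le_width {A x : ℝ} (hA : 0 < A) (hx : 0 ≤ x) : virialWeight A x ≤ A := by
  rcases le_total x A with hxA | hAx
  · exact (virialWeight_le_self A hx).trans hxA
  have hint : ∀ a b, IntervalIntegrable (bump A) volume a b :=
    fun a b => (continuous_bump A).intervalIntegrable a b
  have htail : ∫ y in A..x, bump A y ≤ 0 := by
    calc ∫ y in A..x, bump A y ≤ ∫ _y in A..x, (0 : ℝ) :=
        integral_le_integral_of_continuous hAx (by fun_prop) (by fun_prop)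
          fun y hy _ => (bump_eq_zero hA hy).le
      _ = 0 := by simp
  calc virialWeight A x ≤ ∫ y in (0 : ℝ)..x, bump A y := virialWeight_le_integral_bump A hx
    _ = (∫ y in (0 : ℝ)..A, bump A y) + ∫ y in A..x, bump A y :=
      (intervalIntegral.integral_add_adjacent_intervals (hint 0 A) (hint A x)).symm
    _ ≤ A := by linarith [integral_bump_le_self A hA.le]

lemma sech_sq_mul_weightQuot_le_sech (A : ℝ) {x : ℝ} (hx : 0 ≤ x) :
    sech x ^ 2 * weightQuot A x ≤ sech x := by
  refine le_of_forall_pos_le (f := fun x => sech x ^ 2 * weightQuot A x) (by fun_prop)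
    continuous_sech (fun x hx => ?_) hx
  have hsech := sech_pos x
  refine le_of_mul_le_mul_left ?_ (tanh_pos hx)
  calc tanh x * (sech x ^ 2 * weightQuot A x) = sech x ^ 2 * virialWeight A x := by
        rw [virialWeight]
        ring
    _ ≤ sech x ^ 2 * x := by
        gcongr
        exact virialWeight_le_self A hx.le
    _ = sech x * (x * sech x) := by ring
    _ ≤ sech x * tanh x := by
        gcongr
        exact mul_sech_le_tanh hx.le
    _ = tanh x * sech x := mul_comm _ _

lemma integral_tanh_sq (x : ℝ) : ∫ y in (0 : ℝ)..x, tanh y ^ 2 = x - tanh x := by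
  have hderiv : ∀ y, HasDerivAt (fun z => z - tanh z) (tanh y ^ 2) y := fun y =>
    ((hasDerivAt_id' y).fun_sub (hasDerivAt_tanh y)).congr_deriv
      (by linarith [tanh_sq_add_sech_sq y])
  rw [intervalIntegral.integral_eq_sub_of_hasDerivAt (fun y _ => hderiv y)
    (Continuous.intervalIntegrable (by fun_prop) _ _)]
  simp

lemma self_sub_tanh_le {x : ℝ} (hx : 0 ≤ x) : x - tanh x ≤ sinh x ^ 2 * tanh x / 3 := by
  have hderiv : ∀ y, HasDerivAt (fun y => sinh y ^ 2 * tanh y / 3)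
      ((2 * sinh y * cosh y * tanh y + sinh y ^ 2 * sech y ^ 2) / 3) y := fun y => by
    have hsq : HasDerivAt (fun z => sinh z ^ 2) (2 * sinh y * cosh y) y := by
      simpa using (hasDerivAt_sinh y).fun_pow 2
    exact (hsq.mul (hasDerivAt_tanh y)).div_const 3
  have hle : ∀ y, tanh y ^ 2
      ≤ (2 * sinh y * cosh y * tanh y + sinh y ^ 2 * sech y ^ 2) / 3 := fun y => by
    have hsinh : cosh y * tanh y = sinh y := by
      rw [tanh_eq_sinh_div_cosh, mul_div_cancel₀ _ (cosh_pos y).ne']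
    have htanh : tanh y ^ 2 ≤ sinh y ^ 2 := by
      rw [← sinh_mul_sech, mul_pow]
      exact mul_le_of_le_one_right (sq_nonneg _)
        (pow_le_one₀ (sech_pos y).le (sech_le_one y))
    calc tanh y ^ 2 ≤ (2 * sinh y ^ 2 + tanh y ^ 2) / 3 := by linarith
      _ = _ := by
        rw [mul_assoc _ (cosh y), hsinh, ← mul_pow (sinh y) (sech y), sinh_mul_sech]
        ring
  have hcompare := integral_le_sub_of_le_deriv (f := fun y => tanh y ^ 2) hx
    (fun y _ => (hderiv y).continuousAt.continuousWithinAt) (fun y _ _ => hderiv y)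
    (by fun_prop) fun y _ _ => hle y
  simpa [integral_tanh_sq] using hcompare

lemma sech_sq_mul_weightQuot_le_third (A : ℝ) {x : ℝ} (hx : 0 ≤ x) :
    sech x ^ 2 * weightQuot A x ≤ 1 / 3 := by
  refine le_of_forall_pos_le (f := fun x => sech x ^ 2 * weightQuot A x) (g := fun _ => 1 / 3)
    (by fun_prop) (by fun_prop) (fun x hx => ?_) hx
  have hquot : tanh x ^ 3 * weightQuot A x ≤ x - tanh x := by
    rw [tanh_pow_three_mul_weightQuot, ← integral_tanh_sq]
    refine integral_le_integral_of_continuous hx.le (by fun_prop) (by fun_prop) fun y _ _ => ?_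
    exact mul_le_of_le_one_right (sq_nonneg _) (bump_le_one A y)
  refine le_of_mul_le_mul_left ?_ (pow_pos (tanh_pos hx) 3)
  calc tanh x ^ 3 * (sech x ^ 2 * weightQuot A x)
      = sech x ^ 2 * (tanh x ^ 3 * weightQuot A x) := by ring
    _ ≤ sech x ^ 2 * (sinh x ^ 2 * tanh x / 3) := by
        gcongr
        exact hquot.trans (self_sub_tanh_le hx.le)
    _ = (sinh x * sech x) ^ 2 * tanh x / 3 := by ring
    _ = tanh x ^ 3 * (1 / 3) := by
        rw [sinh_mul_sech]
        ring

/- Near the origin `ψ'` is bounded below by `bump - 2 / 3 ≥ bump / 4`, and for `x ≥ A / 5` the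
negative part of `ψ'` is exponentially small. -/
lemma le_virialWeightDeriv {A x : ℝ} (hA : 0 < A) (hx : 0 ≤ x) :
    bump A x / 4 - 2000 / A ^ 2 ≤ virialWeightDeriv A x := by
  have hbump := bump_nonneg A x
  have herr : 0 ≤ 800 / A ^ 2 := by positivity
  have herr' : 2000 / A ^ 2 = 5 / 2 * (800 / A ^ 2) := by ring
  rw [virialWeightDeriv]
  rcases le_total x (1 / 5 * A) with hnear | hfar
  · have := le_bump (c := 1 / 5) hA hx (by norm_num) (by norm_num) hnear
    linarith [sech_sq_mul_weightQuot_le_third A hx]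
  · have hdecay : 32 / (1 + x ^ 2) ≤ 800 / A ^ 2 := by
      rw [div_le_div_iff₀ (by positivity) (by positivity)]
      nlinarith [mul_self_le_mul_self (by positivity) hfar]
    have hsech : sech x ≤ (1 + x) * sech x := by nlinarith [sech_pos x]
    linarith [sech_sq_mul_weightQuot_le_sech A hx, one_add_mul_sech_le hx]

lemma abs_virialWeightDeriv_le (A : ℝ) {x : ℝ} (hx : 0 ≤ x) :
    |virialWeightDeriv A x| ≤ bump A x + 2 * sech x := by
  have hbump := bump_nonneg A x
  have hquot : 0 ≤ sech x ^ 2 * weightQuot A x :=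
    mul_nonneg (sq_nonneg _) (weightQuot_nonneg A x)
  have hquot_le := sech_sq_mul_weightQuot_le_sech A hx
  rw [virialWeightDeriv, abs_le]
  constructor <;> linarith

/-! ### Perturbations of the kink and their Bogomolny energy -/

/-- A perturbation `u` of the kink, together with its first and second partial derivatives,
that solves the perturbed Sine-Gordon equation for nonnegative times and vanishes at `x = 0`.
Oddness enters only through the boundary condition, since everything happens on `x ≥ 0`. -/
structure KinkPerturbation (u ut ux utt uxx utx : ℝ → ℝ → ℝ) : Prop where
  continuous_u : Continuous (Function.uncurry u)
  continuous_ut : Continuous (Function.uncurry ut)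
  continuous_ux : Continuous (Function.uncurry ux)
  continuous_utt : Continuous (Function.uncurry utt)
  continuous_utx : Continuous (Function.uncurry utx)
  hasDerivAt_time : ∀ t x, HasDerivAt (fun s => u s x) (ut t x) t
  hasDerivAt_space : ∀ t x, HasDerivAt (u t) (ux t x) x
  hasDerivAt_ut_time : ∀ t x, HasDerivAt (fun s => ut s x) (utt t x) t
  hasDerivAt_ux_space : ∀ t x, HasDerivAt (ux t) (uxx t x) x
  hasDerivAt_ux_time : ∀ t x, HasDerivAt (fun s => ux s x) (utx t x) t
  hasDerivAt_ut_space : ∀ t x, HasDerivAt (ut t) (utx t x) x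
  wave_eq : ∀ t, 0 ≤ t → ∀ x, utt t x = uxx t x - (sin (K x + u t x) - sin (K x))
  u_zero : ∀ t, 0 ≤ t → u t 0 = 0

variable {u ut ux utt uxx utx : ℝ → ℝ → ℝ}

lemma KinkPerturbation.ut_zero (h : KinkPerturbation u ut ux utt uxx utx) {t : ℝ} (ht : 0 ≤ t) :
    ut t 0 = 0 :=
  hasDerivAt_unique_of_eqOn_Ici (fun s hs => h.u_zero s hs) ht (h.hasDerivAt_time t 0)
    (hasDerivAt_const t 0)

/-- The Bogomolny quantity `φₓ - 2 sin (φ / 2)` of `φ = K + u`, which vanishes for the kink. -/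
def bogomolny (u ux : ℝ → ℝ → ℝ) (t x : ℝ) : ℝ :=
  ux t x + 2 * sech x - 2 * sin ((K x + u t x) / 2)

/-- The time derivative of `bogomolny`. -/
def bogomolnyTimeDeriv (u ut utx : ℝ → ℝ → ℝ) (t x : ℝ) : ℝ :=
  utx t x - cos ((K x + u t x) / 2) * ut t x

/-- The spatial derivative of `bogomolny`. -/
def bogomolnySpaceDeriv (u ux uxx : ℝ → ℝ → ℝ) (t x : ℝ) : ℝ :=
  uxx t x - 2 * sech x * tanh x - cos ((K x + u t x) / 2) * (2 * sech x + ux t x)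

/-- The density of the conserved Bogomolny energy, which measures the distance to the kink; its
flux is `2 uₜ bogomolny`. -/
def bogomolnyDensity (u ut ux : ℝ → ℝ → ℝ) (t x : ℝ) : ℝ := ut t x ^ 2 + bogomolny u ux t x ^ 2

lemma bogomolnyDensity_nonneg (u ut ux : ℝ → ℝ → ℝ) (t x : ℝ) :
    0 ≤ bogomolnyDensity u ut ux t x := by
  unfold bogomolnyDensity
  positivity

lemma KinkPerturbation.continuous_bogomolny (h : KinkPerturbation u ut ux utt uxx utx) :
    Continuous (Function.uncurry (bogomolny u ux)) := by
  have := h.continuous_u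
  have := h.continuous_ux
  unfold Function.uncurry at *
  unfold bogomolny
  fun_prop

lemma KinkPerturbation.continuous_bogomolnyDensity (h : KinkPerturbation u ut ux utt uxx utx) :
    Continuous (Function.uncurry (bogomolnyDensity u ut ux)) :=
  (h.continuous_ut.pow 2).add (h.continuous_bogomolny.pow 2)

lemma KinkPerturbation.hasDerivAt_bogomolny_time (h : KinkPerturbation u ut ux utt uxx utx)
    (t x : ℝ) :
    HasDerivAt (fun s => bogomolny u ux s x) (bogomolnyTimeDeriv u ut utx t x) t := by
  refine (((h.hasDerivAt_ux_time t x).add_const _).sub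
    ((((h.hasDerivAt_time t x).const_add (K x)).div_const 2).sin.const_mul 2)).congr_deriv ?_
  rw [bogomolnyTimeDeriv]
  ring

lemma KinkPerturbation.hasDerivAt_bogomolny_space (h : KinkPerturbation u ut ux utt uxx utx)
    (t x : ℝ) :
    HasDerivAt (bogomolny u ux t) (bogomolnySpaceDeriv u ux uxx t x) x := by
  refine (((h.hasDerivAt_ux_space t x).add ((hasDerivAt_sech x).const_mul 2)).sub
    ((((hasDerivAt_K x).add (h.hasDerivAt_space t x)).div_const 2).sin.const_mul 2)).congr_deriv ?_
  simp only [bogomolnySpaceDeriv, Pi.add_apply]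
  ring

lemma KinkPerturbation.bogomolny_conservation (h : KinkPerturbation u ut ux utt uxx utx) {t : ℝ}
    (ht : 0 ≤ t) (x : ℝ) :
    ut t x * utt t x + bogomolny u ux t x * bogomolnyTimeDeriv u ut utx t x
      = utx t x * bogomolny u ux t x + ut t x * bogomolnySpaceDeriv u ux uxx t x := by
  have hsin : sin (K x + u t x) = 2 * sin ((K x + u t x) / 2) * cos ((K x + u t x) / 2) := by
    rw [← sin_two_mul, mul_div_cancel₀ _ (two_ne_zero' ℝ)]
  rw [h.wave_eq t ht x, hsin, sin_K, bogomolny, bogomolnyTimeDeriv, bogomolnySpaceDeriv]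
  ring

lemma abs_bogomolny_sub_le (u ux : ℝ → ℝ → ℝ) (t x : ℝ) :
    |bogomolny u ux t x - ux t x| ≤ |u t x| := by
  have hlip := abs_sin_sub_sin_le (K x / 2) ((K x + u t x) / 2)
  calc |bogomolny u ux t x - ux t x| = 2 * |sin (K x / 2) - sin ((K x + u t x) / 2)| := by
        rw [bogomolny, sin_half_K, ← abs_two (α := ℝ), ← abs_mul, abs_two]
        ring_nf
    _ ≤ 2 * |K x / 2 - (K x + u t x) / 2| := by gcongr
    _ = |u t x| := by
        rw [← sub_div, sub_add_cancel_left, abs_div, abs_neg, abs_two]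
        ring

lemma bogomolny_sq_le (u ux : ℝ → ℝ → ℝ) (t x : ℝ) :
    bogomolny u ux t x ^ 2 ≤ 2 * u t x ^ 2 + 2 * ux t x ^ 2 := by
  have hdiff := sq_le_sq.2 (abs_bogomolny_sub_le u ux t x)
  nlinarith [sq_nonneg (bogomolny u ux t x - 2 * ux t x)]

lemma ux_sq_le (u ux : ℝ → ℝ → ℝ) (t x : ℝ) :
    ux t x ^ 2 ≤ 2 * u t x ^ 2 + 2 * bogomolny u ux t x ^ 2 := by
  have hdiff := sq_le_sq.2 (abs_bogomolny_sub_le u ux t x)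
  nlinarith [sq_nonneg (ux t x - 2 * bogomolny u ux t x)]

/-! ### Finite speed of propagation -/

/-- A weight supported in `|x| ≤ r`. With `r = L - t` it decreases along the backward light cone,
and being `C¹` it avoids boundary terms on moving intervals. -/
def coneWeight (r x : ℝ) : ℝ := max (r ^ 2 - x ^ 2) 0 ^ 2

/-- The common factor of the two partial derivatives of `coneWeight`. -/
def coneSlope (r x : ℝ) : ℝ := 2 * max (r ^ 2 - x ^ 2) 0

lemma hasDerivAt_coneWeight_time (L t x : ℝ) :
    HasDerivAt (fun s => coneWeight (L - s) x) (-(2 * (L - t)) * coneSlope (L - t) x) t := by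
  have hinner : HasDerivAt (fun s : ℝ => (L - s) ^ 2 - x ^ 2) (-(2 * (L - t))) t := by
    simpa using (((hasDerivAt_id t).const_sub L).fun_pow 2).sub_const (x ^ 2)
  exact ((hasDerivAt_max_zero_sq _).comp t hinner).congr_deriv (mul_comm _ _)

lemma hasDerivAt_coneWeight_space (r x : ℝ) :
    HasDerivAt (coneWeight r) (-(2 * x) * coneSlope r x) x := by
  have hinner : HasDerivAt (fun y : ℝ => r ^ 2 - y ^ 2) (-(2 * x)) x := by
    simpa using ((hasDerivAt_id x).fun_pow 2).const_sub (r ^ 2)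
  exact ((hasDerivAt_max_zero_sq _).comp x hinner).congr_deriv (mul_comm _ _)

@[fun_prop]
lemma continuous_coneWeight_comp {α : Type*} [TopologicalSpace α] {f g : α → ℝ} (hf : Continuous f)
    (hg : Continuous g) : Continuous fun a => coneWeight (f a) (g a) := by
  unfold coneWeight
  fun_prop

lemma coneWeight_nonneg (r x : ℝ) : 0 ≤ coneWeight r x := sq_nonneg _

lemma coneWeight_eq_zero {r x : ℝ} (hr : 0 ≤ r) (hrx : r ≤ x) : coneWeight r x = 0 := by
  rw [coneWeight, max_eq_right (by nlinarith), sq, mul_zero]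

lemma coneWeight_le (r x : ℝ) : coneWeight r x ≤ r ^ 4 := by
  have hbase : max (r ^ 2 - x ^ 2) 0 ≤ r ^ 2 := max_le (by nlinarith) (sq_nonneg r)
  calc coneWeight r x ≤ (r ^ 2) ^ 2 := pow_le_pow_left₀ (le_max_right _ _) hbase 2
    _ = r ^ 4 := by ring

lemma le_coneWeight {L r x : ℝ} (hr : 3 * L / 4 ≤ r) (hx : 0 ≤ x) (hxL : x ≤ L / 4) :
    L ^ 4 / 4 ≤ coneWeight r x := by
  have hr_sq : (3 * L / 4) ^ 2 ≤ r ^ 2 := pow_le_pow_left₀ (by linarith) hr 2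
  have hx_sq : x ^ 2 ≤ (L / 4) ^ 2 := pow_le_pow_left₀ hx hxL 2
  calc L ^ 4 / 4 = (L ^ 2 / 2) ^ 2 := by ring
    _ ≤ coneWeight r x :=
      pow_le_pow_left₀ (by positivity) (le_max_of_le_left (by linarith)) 2

lemma mul_coneSlope_le {r x : ℝ} (hr : 0 ≤ r) : x * coneSlope r x ≤ r * coneSlope r x := by
  rcases le_total (r ^ 2 - x ^ 2) 0 with hout | hin
  · simp [coneSlope, max_eq_right hout]
  · have hxr : x ≤ r := le_of_abs_le (abs_le_of_sq_le_sq (sub_nonneg.1 hin) hr)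
    exact mul_le_mul_of_nonneg_right hxr (mul_nonneg zero_le_two (le_max_right _ _))

/-- The time derivative of the localised energy density `coneWeight (L - t) · bogomolnyDensity`. -/
def coneEnergyDeriv (u ut ux utt utx : ℝ → ℝ → ℝ) (L t x : ℝ) : ℝ :=
  -(2 * (L - t)) * coneSlope (L - t) x * bogomolnyDensity u ut ux t x
    + coneWeight (L - t) x
      * (2 * (ut t x * utt t x + bogomolny u ux t x * bogomolnyTimeDeriv u ut utx t x))

lemma KinkPerturbation.hasDerivAt_coneEnergy (h : KinkPerturbation u ut ux utt uxx utx)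
    (L t x : ℝ) :
    HasDerivAt (fun s => coneWeight (L - s) x * bogomolnyDensity u ut ux s x)
      (coneEnergyDeriv u ut ux utt utx L t x) t := by
  refine ((hasDerivAt_coneWeight_time L t x).mul (((h.hasDerivAt_ut_time t x).fun_pow 2).add
    ((h.hasDerivAt_bogomolny_time t x).fun_pow 2))).congr_deriv ?_
  simp only [coneEnergyDeriv, bogomolnyDensity, Pi.add_apply]
  push_cast
  ring

lemma KinkPerturbation.continuous_coneEnergyDeriv (h : KinkPerturbation u ut ux utt uxx utx)
    (L : ℝ) : Continuous (Function.uncurry (coneEnergyDeriv u ut ux utt utx L)) := by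
  have := h.continuous_u
  have := h.continuous_ut
  have := h.continuous_utt
  have := h.continuous_utx
  have := h.continuous_bogomolny
  have := h.continuous_bogomolnyDensity
  unfold Function.uncurry at *
  unfold coneEnergyDeriv coneSlope bogomolnyTimeDeriv
  fun_prop

/- The density dominates its flux, so the loss of weight along the cone outweighs the inflow. -/
lemma KinkPerturbation.integral_coneEnergyDeriv_nonpos (h : KinkPerturbation u ut ux utt uxx utx)
    {L t : ℝ} (ht : 0 ≤ t) (htL : t ≤ L) :
    ∫ x in (0 : ℝ)..L, coneEnergyDeriv u ut ux utt utx L t x ≤ 0 := by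
  let flux : ℝ → ℝ := fun x => coneWeight (L - t) x * (2 * ut t x * bogomolny u ux t x)
  let fluxDeriv : ℝ → ℝ := fun x =>
    -(2 * x) * coneSlope (L - t) x * (2 * ut t x * bogomolny u ux t x)
      + coneWeight (L - t) x * (2 * utx t x * bogomolny u ux t x
        + 2 * ut t x * bogomolnySpaceDeriv u ux uxx t x)
  have hflux : ∀ x, HasDerivAt flux (fluxDeriv x) x := fun x =>
    (hasDerivAt_coneWeight_space (L - t) x).mul
      (((h.hasDerivAt_ut_space t x).const_mul 2).mul (h.hasDerivAt_bogomolny_space t x))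
  have hle : ∀ x, 0 < x → coneEnergyDeriv u ut ux utt utx L t x ≤ fluxDeriv x := by
    intro x hx
    have hslope : 0 ≤ coneSlope (L - t) x := mul_nonneg zero_le_two (le_max_right _ _)
    have hdensity : 2 * ut t x * bogomolny u ux t x ≤ bogomolnyDensity u ut ux t x :=
      two_mul_le_add_sq _ _
    have hloss : x * coneSlope (L - t) x * (2 * ut t x * bogomolny u ux t x)
        ≤ (L - t) * coneSlope (L - t) x * bogomolnyDensity u ut ux t x :=
      (mul_le_mul_of_nonneg_left hdensity (by positivity)).trans
        (mul_le_mul_of_nonneg_right (mul_coneSlope_le (sub_nonneg.2 htL))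
          (bogomolnyDensity_nonneg u ut ux t x))
    simp only [coneEnergyDeriv, fluxDeriv, h.bogomolny_conservation ht x]
    linarith
  have hFTC := integral_le_sub_of_le_deriv (ht.trans htL)
    (fun x _ => (hflux x).continuousAt.continuousWithinAt) (fun x _ _ => hflux x)
    (continuous_slice (h.continuous_coneEnergyDeriv L) t).continuousOn fun x hx _ => hle x hx
  have hflux_zero : flux 0 = 0 := by simp [flux, h.ut_zero ht]
  have hflux_end : flux L = 0 := by
    simp [flux, coneWeight_eq_zero (sub_nonneg.2 htL) (sub_le_self L ht)]
  linarith

lemma KinkPerturbation.cone_energy_le (h : KinkPerturbation u ut ux utt uxx utx) {t L : ℝ}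
    (ht : 0 ≤ t) (htL : t ≤ L) :
    ∫ x in (0 : ℝ)..L, coneWeight (L - t) x * bogomolnyDensity u ut ux t x
      ≤ ∫ x in (0 : ℝ)..L, coneWeight L x * bogomolnyDensity u ut ux 0 x := by
  have hcont : Continuous (Function.uncurry fun s x =>
      coneWeight (L - s) x * bogomolnyDensity u ut ux s x) := by
    have := h.continuous_bogomolnyDensity
    unfold Function.uncurry at *
    fun_prop
  have hevol := integral_sub_integral_eq_integral_deriv hcont (h.continuous_coneEnergyDeriv L)
    (h.hasDerivAt_coneEnergy L) 0 t 0 L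
  have hdecrease : ∫ s in (0 : ℝ)..t, ∫ x in (0 : ℝ)..L, coneEnergyDeriv u ut ux utt utx L s x
      ≤ 0 := by
    rw [← neg_nonneg, ← intervalIntegral.integral_neg]
    exact intervalIntegral.integral_nonneg ht fun s hs =>
      neg_nonneg.2 (h.integral_coneEnergyDeriv_nonpos hs.1 (hs.2.trans htL))
  simp only [sub_zero] at hevol
  linarith

/-! ### Energy bounds that are uniform in time -/

/- For `L` much larger than `t + R`, the cone weight is comparable to `L⁴` on `[0, R]`. -/
lemma KinkPerturbation.integral_bogomolnyDensity_le (h : KinkPerturbation u ut ux utt uxx utx)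
    {δ : ℝ}
    (hE : ∀ L, 0 ≤ L → ∫ x in (0 : ℝ)..L, (u 0 x ^ 2 + ux 0 x ^ 2 + ut 0 x ^ 2) ≤ δ ^ 2)
    {t R : ℝ} (ht : 0 ≤ t) (hR : 0 ≤ R) :
    ∫ x in (0 : ℝ)..R, bogomolnyDensity u ut ux t x ≤ 8 * δ ^ 2 := by
  obtain ⟨L, hL, htL, hRL⟩ : ∃ L, 0 < L ∧ t ≤ L / 4 ∧ R ≤ L / 4 :=
    ⟨4 * (t + R + 1), by positivity, by linarith, by linarith⟩
  have := continuous_slice h.continuous_u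
  have := continuous_slice h.continuous_ut
  have := continuous_slice h.continuous_ux
  have := continuous_slice h.continuous_bogomolnyDensity
  refine le_of_mul_le_mul_left ?_ (by positivity : 0 < L ^ 4 / 4)
  calc L ^ 4 / 4 * ∫ x in (0 : ℝ)..R, bogomolnyDensity u ut ux t x
      = ∫ x in (0 : ℝ)..R, L ^ 4 / 4 * bogomolnyDensity u ut ux t x :=
        (intervalIntegral.integral_const_mul _ _).symm
    _ ≤ ∫ x in (0 : ℝ)..R, coneWeight (L - t) x * bogomolnyDensity u ut ux t x :=
        integral_le_integral_of_continuous hR (by fun_prop) (by fun_prop) fun x hx hxR =>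
          mul_le_mul_of_nonneg_right (le_coneWeight (by linarith) hx (hxR.trans hRL))
            (bogomolnyDensity_nonneg u ut ux t x)
    _ ≤ ∫ x in (0 : ℝ)..L, coneWeight (L - t) x * bogomolnyDensity u ut ux t x :=
        intervalIntegral.integral_mono_interval le_rfl hR (by linarith)
          (Eventually.of_forall fun x =>
            mul_nonneg (coneWeight_nonneg _ x) (bogomolnyDensity_nonneg u ut ux t x))
          (Continuous.intervalIntegrable (by fun_prop) _ _)
    _ ≤ ∫ x in (0 : ℝ)..L, coneWeight L x * bogomolnyDensity u ut ux 0 x :=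
        h.cone_energy_le ht (by linarith)
    _ ≤ ∫ x in (0 : ℝ)..L, 2 * L ^ 4 * (u 0 x ^ 2 + ux 0 x ^ 2 + ut 0 x ^ 2) := by
        refine integral_le_integral_of_continuous hL.le (by fun_prop) (by fun_prop) fun x _ _ => ?_
        have hdensity :
            bogomolnyDensity u ut ux 0 x ≤ 2 * (u 0 x ^ 2 + ux 0 x ^ 2 + ut 0 x ^ 2) := by
          rw [bogomolnyDensity]
          nlinarith [bogomolny_sq_le u ux 0 x]
        calc _ ≤ L ^ 4 * (2 * (u 0 x ^ 2 + ux 0 x ^ 2 + ut 0 x ^ 2)) :=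
              mul_le_mul (coneWeight_le L x) hdensity (bogomolnyDensity_nonneg u ut ux 0 x)
                (by positivity)
          _ = _ := by ring
    _ = 2 * L ^ 4 * ∫ x in (0 : ℝ)..L, (u 0 x ^ 2 + ux 0 x ^ 2 + ut 0 x ^ 2) :=
        intervalIntegral.integral_const_mul _ _
    _ ≤ 2 * L ^ 4 * δ ^ 2 := mul_le_mul_of_nonneg_left (hE L hL.le) (by positivity)
    _ = L ^ 4 / 4 * (8 * δ ^ 2) := by ring

lemma sq_div_two_le_mul_sin {y : ℝ} (hy : |y| ≤ π / 2) : y ^ 2 / 2 ≤ y * sin y := by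
  have hslope : 1 / 2 ≤ 2 / π := (div_le_div_iff₀ two_pos pi_pos).2 (by linarith [pi_le_four])
  have hjordan : 2 / π * |y| ≤ sin |y| := mul_le_sin (abs_nonneg y) hy
  calc y ^ 2 / 2 = |y| * (1 / 2 * |y|) := by rw [← sq_abs]; ring
    _ ≤ |y| * sin |y| := by
        gcongr
        exact (mul_le_mul_of_nonneg_right hslope (abs_nonneg y)).trans hjordan
    _ = y * sin y := by rcases abs_choice y with hy | hy <;> simp [hy]

/- The term `-3/2 sech · v²` comes from the integrating factor `exp (-3 K / 4)`; it compensates for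
the loss of the damping `-tanh · v` near the origin. -/
lemma kink_ode_damping {x v : ℝ} (ρ : ℝ) (hx : 0 ≤ x) (hv : |v| ≤ 1) :
    2 * v * (ρ - 2 * sech x + 2 * sin ((K x + v) / 2)) - 3 / 2 * sech x * v ^ 2
      ≤ 2 * ρ ^ 2 - 1 / 2 * v ^ 2 := by
  have hsech := sech_pos x
  have hsplit : 2 * sin ((K x + v) / 2) - 2 * sech x
      = 2 * sech x * (cos (v / 2) - 1) - 2 * tanh x * sin (v / 2) := by
    rw [add_div, sin_add, sin_half_K, cos_half_K]
    ring
  have hcos : v * (cos (v / 2) - 1) ≤ v ^ 2 / 8 := by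
    have habs : |cos (v / 2) - 1| ≤ v ^ 2 / 8 := by
      rw [abs_le]
      constructor <;> linarith [one_sub_sq_div_two_le_cos (x := v / 2), cos_le_one (v / 2),
        sq_nonneg v]
    calc v * (cos (v / 2) - 1) ≤ |v| * |cos (v / 2) - 1| := (le_abs_self _).trans (abs_mul _ _).le
      _ ≤ 1 * (v ^ 2 / 8) := by gcongr
      _ = v ^ 2 / 8 := one_mul _
  have hsin : v ^ 2 / 4 ≤ v * sin (v / 2) := by
    have hhalf : |v / 2| ≤ π / 2 := by
      rw [abs_div, abs_two]
      linarith [pi_gt_three]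
    linarith [sq_div_two_le_mul_sin hhalf]
  have hdamping := mul_le_mul_of_nonneg_left hsin (tanh_nonneg hx)
  have hcore := mul_le_mul_of_nonneg_left hcos hsech.le
  have hpartition := mul_le_mul_of_nonneg_right (one_sub_tanh_le_sech hx) (sq_nonneg v)
  have hyoung := sq_nonneg (v - 2 * ρ)
  calc _ = 2 * v * ρ + 4 * (sech x * (v * (cos (v / 2) - 1)))
          - 4 * (tanh x * (v * sin (v / 2))) - 3 / 2 * sech x * v ^ 2 := by
        linear_combination 2 * v * hsplit
    _ ≤ 2 * ρ ^ 2 - 1 / 2 * v ^ 2 := by linarith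

lemma exp_five_lt : exp 5 < 150 := by
  calc exp 5 = exp 1 ^ 5 := by rw [← exp_nat_mul]; norm_num
    _ < 2.7183 ^ 5 :=
        pow_lt_pow_left₀ (exp_one_lt_d9.trans (by norm_num)) (exp_pos _).le (by norm_num)
    _ < 150 := by norm_num

section KinkODE

variable {v vx ρ : ℝ → ℝ} {X : ℝ}

lemma kink_ode_integral_bound (hX : 0 ≤ X) (hv : ∀ x, HasDerivAt v (vx x) x)
    (hρ : Continuous ρ) (hv0 : v 0 = 0)
    (hode : ∀ x, vx x = ρ x - 2 * sech x + 2 * sin ((K x + v x) / 2))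
    (hsmall : ∀ x, 0 < x → x < X → |v x| < 1) :
    exp (-5) * (v X ^ 2 + 1 / 2 * ∫ x in (0 : ℝ)..X, v x ^ 2)
      ≤ 2 * ∫ x in (0 : ℝ)..X, ρ x ^ 2 := by
  have hv_cont : Continuous v := continuous_iff_continuousAt.2 fun x => (hv x).continuousAt
  have hK : ∀ x, 3 / 4 * K x ≤ 5 := fun x => by linarith [K_lt_two_pi x, pi_lt_d2]
  let weighted : ℝ → ℝ := fun x => v x ^ 2 * exp (-(3 / 4 * K x))
  have hderiv : ∀ x, HasDerivAt weighted
      ((2 * v x * vx x - 3 / 2 * sech x * v x ^ 2) * exp (-(3 / 4 * K x))) x := by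
    intro x
    refine (((hv x).fun_pow 2).mul
      (((hasDerivAt_K x).const_mul (3 / 4)).fun_neg.exp)).congr_deriv ?_
    push_cast
    ring
  have hle : ∀ x, 0 < x → x < X →
      (2 * v x * vx x - 3 / 2 * sech x * v x ^ 2) * exp (-(3 / 4 * K x))
        ≤ 2 * ρ x ^ 2 - exp (-5) / 2 * v x ^ 2 := by
    intro x hx hxX
    have hdamping := kink_ode_damping (ρ x) hx.le (hsmall x hx hxX).le
    rw [← hode] at hdamping
    calc _ ≤ (2 * ρ x ^ 2 - 1 / 2 * v x ^ 2) * exp (-(3 / 4 * K x)) := by gcongr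
      _ = 2 * ρ x ^ 2 * exp (-(3 / 4 * K x)) - exp (-(3 / 4 * K x)) / 2 * v x ^ 2 := by ring
      _ ≤ 2 * ρ x ^ 2 * 1 - exp (-5) / 2 * v x ^ 2 := by
          gcongr
          · exact exp_le_one_iff.2 (by linarith [K_pos x])
          · exact hK x
      _ = _ := by rw [mul_one]
  have hFTC := sub_le_integral_of_deriv_le hX
    (fun x _ => (hderiv x).continuousAt.continuousWithinAt) (fun x _ _ => hderiv x)
    (by fun_prop) hle
  rw [intervalIntegral.integral_sub (Continuous.intervalIntegrable (by fun_prop) _ _)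
    (Continuous.intervalIntegrable (by fun_prop) _ _), intervalIntegral.integral_const_mul,
    intervalIntegral.integral_const_mul] at hFTC
  have hstart : weighted 0 = 0 := by simp [weighted, hv0]
  have hend : exp (-5) * v X ^ 2 ≤ weighted X :=
    (mul_comm _ _).trans_le
      (mul_le_mul_of_nonneg_left (exp_le_exp.2 (neg_le_neg (hK X))) (sq_nonneg _))
  linarith

lemma kink_ode_bound (hX : 0 ≤ X) (hv : ∀ x, HasDerivAt v (vx x) x)
    (hρ : Continuous ρ) (hv0 : v 0 = 0)
    (hode : ∀ x, vx x = ρ x - 2 * sech x + 2 * sin ((K x + v x) / 2))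
    (hsmall : ∀ x, 0 < x → x < X → |v x| < 1) :
    v X ^ 2 + 1 / 2 * ∫ x in (0 : ℝ)..X, v x ^ 2 ≤ 300 * ∫ x in (0 : ℝ)..X, ρ x ^ 2 := by
  have hbound := kink_ode_integral_bound hX hv hρ hv0 hode hsmall
  have hexp : exp 5 * exp (-5) = 1 := by rw [← exp_add]; norm_num
  calc v X ^ 2 + 1 / 2 * ∫ x in (0 : ℝ)..X, v x ^ 2
      = exp 5 * (exp (-5) * (v X ^ 2 + 1 / 2 * ∫ x in (0 : ℝ)..X, v x ^ 2)) := by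
        rw [← mul_assoc, hexp, one_mul]
    _ ≤ 150 * (2 * ∫ x in (0 : ℝ)..X, ρ x ^ 2) :=
        mul_le_mul exp_five_lt.le hbound
          (mul_nonneg (exp_pos _).le (add_nonneg (sq_nonneg _)
            (mul_nonneg (by norm_num) (integral_sq_nonneg v hX)))) (by norm_num)
    _ = 300 * ∫ x in (0 : ℝ)..X, ρ x ^ 2 := by ring

end KinkODE

lemma lt_of_continuous_bootstrap {f : ℝ → ℝ} {a b : ℝ} (hf : Continuous f)
    (hstep : ∀ X, a ≤ X → (∀ x, a < x → x < X → f x < b) → f X < b) {x : ℝ} (hx : a ≤ x) :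
    f x < b := by
  by_contra! hbx
  have hcompact : IsCompact (Set.Icc a x ∩ {y | b ≤ f y}) :=
    isCompact_Icc.inter_right (isClosed_le continuous_const hf)
  obtain ⟨X, ⟨⟨haX, hXx⟩, hbX⟩, hfirst⟩ := hcompact.exists_isLeast ⟨x, ⟨hx, le_rfl⟩, hbx⟩
  refine (hstep X haX fun y hay hyX => ?_).not_ge hbX
  by_contra! hby
  exact (hfirst ⟨⟨hay.le, hyX.le.trans hXx⟩, hby⟩).not_gt hyX

/-- Smallness of a perturbation in the energy space and in sup norm on the half-line, uniformly in
time. The integral bounds are stated on bounded intervals, which avoids integrability side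
conditions. -/
structure UniformlySmall (u ut ux : ℝ → ℝ → ℝ) (E : ℝ) : Prop where
  pos : 0 < E
  le_one : E ≤ 1
  sup : ∀ t, 0 ≤ t → ∀ x, 0 ≤ x → |u t x| ≤ E
  int_u : ∀ t, 0 ≤ t → ∀ R, 0 ≤ R → ∫ x in (0 : ℝ)..R, u t x ^ 2 ≤ E ^ 2
  int_ux : ∀ t, 0 ≤ t → ∀ R, 0 ≤ R → ∫ x in (0 : ℝ)..R, ux t x ^ 2 ≤ E ^ 2
  int_ut : ∀ t, 0 ≤ t → ∀ R, 0 ≤ R → ∫ x in (0 : ℝ)..R, ut t x ^ 2 ≤ E ^ 2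

lemma KinkPerturbation.sq_add_integral_sq_le (h : KinkPerturbation u ut ux utt uxx utx)
    {t M X : ℝ} (ht : 0 ≤ t) (hM : M < 1 / 300)
    (hb : ∀ R, 0 ≤ R → ∫ x in (0 : ℝ)..R, bogomolny u ux t x ^ 2 ≤ M) (hX : 0 ≤ X) :
    u t X ^ 2 + 1 / 2 * ∫ x in (0 : ℝ)..X, u t x ^ 2 ≤ 300 * M := by
  have hode : ∀ X, 0 ≤ X → (∀ x, 0 < x → x < X → |u t x| < 1) →
      u t X ^ 2 + 1 / 2 * ∫ x in (0 : ℝ)..X, u t x ^ 2 ≤ 300 * M := by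
    intro X hX hsmall
    have hbound := kink_ode_bound hX (h.hasDerivAt_space t)
      (continuous_slice h.continuous_bogomolny t) (h.u_zero t ht)
      (fun x => by rw [bogomolny]; ring) hsmall
    linarith [hb X hX]
  refine hode X hX fun x hx _ =>
    lt_of_continuous_bootstrap (continuous_slice h.continuous_u t).abs (fun X hX hsmall => ?_) hx.le
  rw [← sq_lt_one_iff_abs_lt_one]
  linarith [hode X hX hsmall, integral_sq_nonneg (u t) hX]

lemma KinkPerturbation.uniformlySmall (h : KinkPerturbation u ut ux utt uxx utx) {δ : ℝ}
    (hδ : 0 < δ) (hδ_le : δ ≤ 1 / 100)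
    (hE : ∀ L, 0 ≤ L → ∫ x in (0 : ℝ)..L, (u 0 x ^ 2 + ux 0 x ^ 2 + ut 0 x ^ 2) ≤ δ ^ 2) :
    UniformlySmall u ut ux (100 * δ) := by
  have := continuous_slice h.continuous_u
  have := continuous_slice h.continuous_ut
  have := continuous_slice h.continuous_ux
  have := continuous_slice h.continuous_bogomolny
  have henergy : ∀ t, 0 ≤ t → ∀ R, 0 ≤ R → (∫ x in (0 : ℝ)..R, ut t x ^ 2)
      + ∫ x in (0 : ℝ)..R, bogomolny u ux t x ^ 2 ≤ 8 * δ ^ 2 := by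
    intro t ht R hR
    rw [← intervalIntegral.integral_add (Continuous.intervalIntegrable (by fun_prop) _ _)
      (Continuous.intervalIntegrable (by fun_prop) _ _)]
    exact h.integral_bogomolnyDensity_le hE ht hR
  have hb : ∀ t, 0 ≤ t → ∀ R, 0 ≤ R →
      ∫ x in (0 : ℝ)..R, bogomolny u ux t x ^ 2 ≤ 8 * δ ^ 2 := fun t ht R hR => by
    linarith [henergy t ht R hR, integral_sq_nonneg (ut t) hR]
  have hu : ∀ t, 0 ≤ t → ∀ X, 0 ≤ X →
      u t X ^ 2 + 1 / 2 * ∫ x in (0 : ℝ)..X, u t x ^ 2 ≤ 300 * (8 * δ ^ 2) := fun t ht X hX =>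
    h.sq_add_integral_sq_le ht (by nlinarith) (hb t ht) hX
  refine ⟨by positivity, by linarith, fun t ht x hx => ?_, fun t ht R hR => ?_,
    fun t ht R hR => ?_, fun t ht R hR => ?_⟩
  · refine abs_le_of_sq_le_sq ?_ (by positivity)
    nlinarith [hu t ht x hx, integral_sq_nonneg (u t) hx]
  · nlinarith [hu t ht R hR, sq_nonneg (u t R)]
  · have hux : ∫ x in (0 : ℝ)..R, ux t x ^ 2
        ≤ ∫ x in (0 : ℝ)..R, (2 * u t x ^ 2 + 2 * bogomolny u ux t x ^ 2) :=
      integral_le_integral_of_continuous hR (by fun_prop) (by fun_prop)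
        fun x _ _ => ux_sq_le u ux t x
    rw [intervalIntegral.integral_add (Continuous.intervalIntegrable (by fun_prop) _ _)
      (Continuous.intervalIntegrable (by fun_prop) _ _), intervalIntegral.integral_const_mul,
      intervalIntegral.integral_const_mul] at hux
    nlinarith [hu t ht R hR, sq_nonneg (u t R), hb t ht R hR]
  · nlinarith [henergy t ht R hR, integral_sq_nonneg (bogomolny u ux t) hR]

/-! ### The transformed variable `uₓ - (sech² / tanh) u` -/

/-- The continuous extension to the origin of `u / tanh`, for `u` vanishing at the origin. -/
def tanhQuot (ux : ℝ → ℝ → ℝ) (t x : ℝ) : ℝ := (tanhSlope x)⁻¹ * ∫ y in (0 : ℝ)..1, ux t (x * y)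

/-- The continuous extension to the origin of `uₓ - (sech² / tanh) u = tanh · (u / tanh)ₓ`.
The function `tanh` is the odd threshold resonance of the linearised operator
`-∂ₓ² + 1 - 2 sech²`, and this Darboux transform vanishes exactly on its multiples. -/
def darboux (ux : ℝ → ℝ → ℝ) (t x : ℝ) : ℝ := ux t x - sech x ^ 2 * tanhQuot ux t x

/-- The spatial derivative of `darboux` on the open half-line. -/
def darbouxDeriv (u ux uxx : ℝ → ℝ → ℝ) (t x : ℝ) : ℝ :=
  uxx t x + 2 * sech x ^ 2 * u t x - sech x ^ 2 / tanh x * darboux ux t x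

lemma KinkPerturbation.continuous_tanhQuot (h : KinkPerturbation u ut ux utt uxx utx) :
    Continuous (Function.uncurry (tanhQuot ux)) := by
  have haverage : Continuous fun q : ℝ × ℝ => ∫ y in (0 : ℝ)..1, ux q.1 (q.2 * y) := by
    refine intervalIntegral.continuous_parametric_intervalIntegral_of_continuous' ?_ 0 1
    have := h.continuous_ux
    unfold Function.uncurry at *
    fun_prop
  have hinv : Continuous fun q : ℝ × ℝ => (tanhSlope q.2)⁻¹ :=
    Continuous.inv₀ (by fun_prop) fun q => (tanhSlope_pos q.2).ne'
  exact hinv.mul haverage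

lemma KinkPerturbation.continuous_darboux (h : KinkPerturbation u ut ux utt uxx utx) :
    Continuous (Function.uncurry (darboux ux)) := by
  have := h.continuous_tanhQuot
  have := h.continuous_ux
  unfold Function.uncurry at *
  unfold darboux
  fun_prop

lemma KinkPerturbation.tanh_mul_tanhQuot (h : KinkPerturbation u ut ux utt uxx utx) {t : ℝ}
    (ht : 0 ≤ t) (x : ℝ) : tanh x * tanhQuot ux t x = u t x := by
  have haverage : x * ∫ y in (0 : ℝ)..1, ux t (x * y) = u t x := by
    rw [intervalIntegral.mul_integral_comp_mul_left (f := fun z => ux t z),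
      intervalIntegral.integral_eq_sub_of_hasDerivAt (fun z _ => h.hasDerivAt_space t z)
        ((continuous_slice h.continuous_ux t).intervalIntegrable _ _)]
    simp [h.u_zero t ht]
  have hslope := tanhSlope_pos x
  rw [tanhQuot, ← mul_tanhSlope, ← haverage]
  field_simp

lemma KinkPerturbation.hasDerivAt_tanhQuot (h : KinkPerturbation u ut ux utt uxx utx) {t x : ℝ}
    (ht : 0 ≤ t) (hx : 0 < x) : HasDerivAt (tanhQuot ux t) (darboux ux t x / tanh x) x := by
  have htanh := tanh_pos hx
  have hquot : tanhQuot ux t =ᶠ[nhds x] fun z => u t z / tanh z := by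
    filter_upwards [Ioi_mem_nhds hx] with z hz
    rw [← h.tanh_mul_tanhQuot ht z, mul_div_cancel_left₀ _ (tanh_pos hz).ne']
  refine (((h.hasDerivAt_space t x).div (hasDerivAt_tanh x) htanh.ne').congr_of_eventuallyEq
    hquot).congr_deriv ?_
  rw [darboux, ← h.tanh_mul_tanhQuot ht x]
  field_simp

lemma KinkPerturbation.hasDerivAt_darboux (h : KinkPerturbation u ut ux utt uxx utx) {t x : ℝ}
    (ht : 0 ≤ t) (hx : 0 < x) :
    HasDerivAt (darboux ux t) (darbouxDeriv u ux uxx t x) x := by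
  refine ((h.hasDerivAt_ux_space t x).sub
    (((hasDerivAt_sech x).fun_pow 2).mul (h.hasDerivAt_tanhQuot ht hx))).congr_deriv ?_
  rw [darbouxDeriv, ← h.tanh_mul_tanhQuot ht x]
  push_cast
  ring

/-- The nonlinearity `sin (K + u) - sin K - cos K · u` of the equation for the perturbation. -/
def sineRemainder (u : ℝ → ℝ → ℝ) (t x : ℝ) : ℝ :=
  cos (K x) * (sin (u t x) - u t x) + sin (K x) * (cos (u t x) - 1)

lemma KinkPerturbation.utt_eq (h : KinkPerturbation u ut ux utt uxx utx) {t : ℝ} (ht : 0 ≤ t)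
    (x : ℝ) :
    utt t x = darbouxDeriv u ux uxx t x + sech x ^ 2 / tanh x * darboux ux t x - u t x
      - sineRemainder u t x := by
  rw [h.wave_eq t ht x, darbouxDeriv, sineRemainder, sin_add]
  linear_combination (-u t x) * cos_K x

lemma KinkPerturbation.tanhQuot_mul_nonneg (h : KinkPerturbation u ut ux utt uxx utx) {t x : ℝ}
    (ht : 0 ≤ t) (hx : 0 ≤ x) : 0 ≤ tanhQuot ux t x * u t x := by
  have htanh := tanh_nonneg hx
  calc 0 ≤ tanh x * tanhQuot ux t x ^ 2 := by positivity
    _ = tanhQuot ux t x * u t x := by rw [← h.tanh_mul_tanhQuot ht x]; ring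

lemma KinkPerturbation.integral_ux_sq_eq (h : KinkPerturbation u ut ux utt uxx utx) {t L : ℝ}
    (ht : 0 ≤ t) (hL : 0 ≤ L) :
    ∫ x in (0 : ℝ)..L, ux t x ^ 2 = (∫ x in (0 : ℝ)..L, darboux ux t x ^ 2)
      + (∫ x in (0 : ℝ)..L, 2 * sech x ^ 2 * u t x ^ 2)
      + sech L ^ 2 * (tanhQuot ux t L * u t L) := by
  have := continuous_slice h.continuous_u t
  have := continuous_slice h.continuous_ux t
  have := continuous_slice h.continuous_darboux t
  have := continuous_slice h.continuous_tanhQuot t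
  let boundary : ℝ → ℝ := fun x => sech x ^ 2 * (tanhQuot ux t x * u t x)
  have hderiv : ∀ x ∈ Set.Ioo 0 L, HasDerivAt boundary
      (ux t x ^ 2 - darboux ux t x ^ 2 - 2 * sech x ^ 2 * u t x ^ 2) x := by
    intro x hx
    have htanh := tanh_pos hx.1
    refine (((hasDerivAt_sech x).fun_pow 2).mul ((h.hasDerivAt_tanhQuot ht hx.1).mul
      (h.hasDerivAt_space t x))).congr_deriv ?_
    simp only [darboux, Pi.mul_apply]
    rw [← h.tanh_mul_tanhQuot ht x]
    field_simp
    push_cast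
    ring
  have hFTC := intervalIntegral.integral_eq_sub_of_hasDerivAt_of_le hL (by fun_prop) hderiv
    (Continuous.intervalIntegrable (by fun_prop) _ _)
  have hstart : boundary 0 = 0 := by simp [boundary, h.u_zero t ht]
  rw [hstart, intervalIntegral.integral_sub (Continuous.intervalIntegrable (by fun_prop) _ _)
    (Continuous.intervalIntegrable (by fun_prop) _ _),
    intervalIntegral.integral_sub (Continuous.intervalIntegrable (by fun_prop) _ _)
    (Continuous.intervalIntegrable (by fun_prop) _ _)] at hFTC
  linarith

lemma KinkPerturbation.integral_darboux_sq_le (h : KinkPerturbation u ut ux utt uxx utx)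
    {E t L : ℝ} (hs : UniformlySmall u ut ux E) (ht : 0 ≤ t) (hL : 0 ≤ L) :
    ∫ x in (0 : ℝ)..L, darboux ux t x ^ 2 ≤ E ^ 2 := by
  have hpotential : 0 ≤ ∫ x in (0 : ℝ)..L, 2 * sech x ^ 2 * u t x ^ 2 :=
    intervalIntegral.integral_nonneg hL fun x _ => by positivity
  have hboundary : 0 ≤ sech L ^ 2 * (tanhQuot ux t L * u t L) :=
    mul_nonneg (sq_nonneg _) (h.tanhQuot_mul_nonneg ht hL)
  linarith [h.integral_ux_sq_eq ht hL, hs.int_ux t ht L hL]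

lemma KinkPerturbation.integral_ux_sq_le (h : KinkPerturbation u ut ux utt uxx utx) {t Y : ℝ}
    (ht : 0 ≤ t) (hY : 1 ≤ Y) :
    ∫ x in (0 : ℝ)..Y, ux t x ^ 2 ≤ (∫ x in (0 : ℝ)..Y, darboux ux t x ^ 2)
      + 2 * (∫ x in (0 : ℝ)..Y, u t x ^ 2) + u t Y ^ 2 := by
  have hY_nonneg : 0 ≤ Y := zero_le_one.trans hY
  have := continuous_slice h.continuous_u t
  have hpotential : ∫ x in (0 : ℝ)..Y, 2 * sech x ^ 2 * u t x ^ 2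
      ≤ 2 * ∫ x in (0 : ℝ)..Y, u t x ^ 2 := by
    rw [← intervalIntegral.integral_const_mul]
    refine integral_le_integral_of_continuous hY_nonneg (by fun_prop) (by fun_prop)
      fun x _ _ => mul_le_mul_of_nonneg_right ?_ (sq_nonneg _)
    linarith [pow_le_one₀ (sech_pos x).le (sech_le_one x) (n := 2)]
  have hsech : sech Y ^ 2 ≤ tanh Y := by
    nlinarith [mul_sech_le_tanh hY_nonneg, sech_le_one Y, sech_pos Y]
  have hboundary : sech Y ^ 2 * (tanhQuot ux t Y * u t Y) ≤ u t Y ^ 2 := by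
    calc _ ≤ tanh Y * (tanhQuot ux t Y * u t Y) :=
          mul_le_mul_of_nonneg_right hsech (h.tanhQuot_mul_nonneg ht hY_nonneg)
      _ = u t Y ^ 2 := by rw [← mul_assoc, h.tanh_mul_tanhQuot ht, sq]
  linarith [h.integral_ux_sq_eq ht hY_nonneg]

/-- The localised norm of the Darboux transform that the virial argument controls. -/
def dissipation (ux : ℝ → ℝ → ℝ) (A t : ℝ) : ℝ := ∫ x in (0 : ℝ)..A, bump A x * darboux ux t x ^ 2

/-- The integral that bounds `bump · u²` from above after integrating `((u / tanh)²)ₓ`; `E` is the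
size of the perturbation. -/
def supBound (u ux : ℝ → ℝ → ℝ) (E A t : ℝ) : ℝ :=
  4 * E ^ 2 / A + 2 * ∫ x in (0 : ℝ)..A, bump A x * (|u t x| * |darboux ux t x|)

lemma supBound_nonneg (u ux : ℝ → ℝ → ℝ) (E : ℝ) {A : ℝ} (hA : 0 < A) (t : ℝ) :
    0 ≤ supBound u ux E A t := by
  have : 0 ≤ ∫ x in (0 : ℝ)..A, bump A x * (|u t x| * |darboux ux t x|) :=
    intervalIntegral.integral_nonneg hA.le fun x _ => mul_nonneg (bump_nonneg A x) (by positivity)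
  unfold supBound
  positivity

/-- A majorant, up to the factor `tanh⁻²`, of the derivative of `bump · (u / tanh)²`. -/
def supMajorant (u ux : ℝ → ℝ → ℝ) (A t x : ℝ) : ℝ :=
  |bumpDeriv A x| * u t x ^ 2 + 2 * (bump A x * (|u t x| * |darboux ux t x|))

lemma supMajorant_nonneg (u ux : ℝ → ℝ → ℝ) (A t x : ℝ) : 0 ≤ supMajorant u ux A t x := by
  have := bump_nonneg A x
  unfold supMajorant
  positivity

lemma KinkPerturbation.continuous_supMajorant (h : KinkPerturbation u ut ux utt uxx utx)
    (A t : ℝ) : Continuous (supMajorant u ux A t) := by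
  have := continuous_slice h.continuous_u t
  have := continuous_slice h.continuous_darboux t
  unfold supMajorant
  fun_prop

lemma KinkPerturbation.hasDerivAt_bump_mul_tanhQuot_sq (h : KinkPerturbation u ut ux utt uxx utx)
    (A : ℝ) {t x : ℝ} (ht : 0 ≤ t) (hx : 0 < x) :
    HasDerivAt (fun y => bump A y * tanhQuot ux t y ^ 2) ((tanh x ^ 2)⁻¹
      * (bumpDeriv A x * u t x ^ 2 + 2 * (bump A x * (u t x * darboux ux t x)))) x := by
  have htanh := tanh_pos hx
  refine ((hasDerivAt_bump A x).mul ((h.hasDerivAt_tanhQuot ht hx).fun_pow 2)).congr_deriv ?_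
  rw [← h.tanh_mul_tanhQuot ht x]
  field_simp
  push_cast
  ring

lemma KinkPerturbation.bump_mul_sq_le_integral (h : KinkPerturbation u ut ux utt uxx utx)
    {A t x : ℝ} (hA : 0 < A) (ht : 0 ≤ t) (hx : 0 < x) (hxA : x ≤ A) :
    bump A x * u t x ^ 2 ≤ ∫ y in x..A, supMajorant u ux A t y := by
  have := continuous_slice h.continuous_tanhQuot t
  have := h.continuous_supMajorant A t
  have htanh := tanh_pos hx
  have hle : ∀ y, x < y → y < A → -((tanh x ^ 2)⁻¹ * supMajorant u ux A t y) ≤ (tanh y ^ 2)⁻¹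
      * (bumpDeriv A y * u t y ^ 2 + 2 * (bump A y * (u t y * darboux ux t y))) := by
    intro y hxy _
    have hmono : (tanh y ^ 2)⁻¹ ≤ (tanh x ^ 2)⁻¹ :=
      inv_anti₀ (by positivity) (pow_le_pow_left₀ htanh.le (monotone_tanh hxy.le) 2)
    have habs : |bumpDeriv A y * u t y ^ 2 + 2 * (bump A y * (u t y * darboux ux t y))|
        ≤ supMajorant u ux A t y := by
      refine (abs_add_le _ _).trans_eq ?_
      simp only [supMajorant, abs_mul, abs_two, abs_of_nonneg (bump_nonneg A y), abs_sq]
    refine neg_le_of_neg_le ?_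
    rw [← mul_neg]
    exact (mul_le_mul_of_nonneg_left ((neg_le_abs _).trans habs) (by positivity)).trans
      (mul_le_mul_of_nonneg_right hmono (supMajorant_nonneg u ux A t y))
  have hFTC := integral_le_sub_of_le_deriv hxA (by fun_prop)
    (fun y hxy _ => h.hasDerivAt_bump_mul_tanhQuot_sq A ht (hx.trans hxy)) (by fun_prop) hle
  rw [intervalIntegral.integral_neg, intervalIntegral.integral_const_mul, bump_eq_zero hA le_rfl,
    zero_mul, zero_sub, neg_le_neg_iff] at hFTC
  calc bump A x * u t x ^ 2 = tanh x ^ 2 * (bump A x * tanhQuot ux t x ^ 2) := by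
        rw [← h.tanh_mul_tanhQuot ht x]
        ring
    _ ≤ tanh x ^ 2 * ((tanh x ^ 2)⁻¹ * ∫ y in x..A, supMajorant u ux A t y) := by gcongr
    _ = ∫ y in x..A, supMajorant u ux A t y := mul_inv_cancel_left₀ (by positivity) _

lemma KinkPerturbation.integral_supMajorant_le (h : KinkPerturbation u ut ux utt uxx utx)
    {E A t : ℝ} (hs : UniformlySmall u ut ux E) (hA : 0 < A) (ht : 0 ≤ t) :
    ∫ x in (0 : ℝ)..A, supMajorant u ux A t x ≤ supBound u ux E A t := by
  have := continuous_slice h.continuous_u t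
  have := continuous_slice h.continuous_darboux t
  have hgradient : ∫ x in (0 : ℝ)..A, |bumpDeriv A x| * u t x ^ 2 ≤ 4 * E ^ 2 / A :=
    calc _ ≤ ∫ x in (0 : ℝ)..A, 4 / A * u t x ^ 2 :=
          integral_le_integral_of_continuous hA.le (by fun_prop) (by fun_prop) fun x _ _ =>
            mul_le_mul_of_nonneg_right (abs_bumpDeriv_le hA x) (sq_nonneg _)
      _ = 4 / A * ∫ x in (0 : ℝ)..A, u t x ^ 2 := intervalIntegral.integral_const_mul _ _
      _ ≤ 4 / A * E ^ 2 := by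
          gcongr
          exact hs.int_u t ht A hA.le
      _ = 4 * E ^ 2 / A := by ring
  simp only [supMajorant, supBound]
  rw [intervalIntegral.integral_add (Continuous.intervalIntegrable (by fun_prop) _ _)
    (Continuous.intervalIntegrable (by fun_prop) _ _), intervalIntegral.integral_const_mul]
  linarith

lemma KinkPerturbation.bump_mul_sq_le (h : KinkPerturbation u ut ux utt uxx utx) {E A t x : ℝ}
    (hs : UniformlySmall u ut ux E) (hA : 0 < A) (ht : 0 ≤ t) (hx : 0 ≤ x) :
    bump A x * u t x ^ 2 ≤ supBound u ux E A t := by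
  rcases le_or_gt A x with hAx | hxA
  · rw [bump_eq_zero hA hAx, zero_mul]
    exact supBound_nonneg u ux E hA t
  rcases hx.eq_or_lt with rfl | hx
  · simpa [h.u_zero t ht] using supBound_nonneg u ux E hA t
  calc bump A x * u t x ^ 2 ≤ ∫ y in x..A, supMajorant u ux A t y :=
        h.bump_mul_sq_le_integral hA ht hx hxA.le
    _ ≤ ∫ y in (0 : ℝ)..A, supMajorant u ux A t y :=
        intervalIntegral.integral_mono_interval hx.le hxA.le le_rfl
          (Eventually.of_forall fun y => supMajorant_nonneg u ux A t y)
          ((h.continuous_supMajorant A t).intervalIntegrable _ _)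
    _ ≤ supBound u ux E A t := h.integral_supMajorant_le hs hA ht

lemma KinkPerturbation.supBound_sq_le (h : KinkPerturbation u ut ux utt uxx utx) {E A t : ℝ}
    (hs : UniformlySmall u ut ux E) (hA : 0 < A) (ht : 0 ≤ t) :
    supBound u ux E A t ^ 2 ≤ 32 * E ^ 4 / A ^ 2 + 8 * E ^ 2 * dissipation ux A t := by
  have := continuous_slice h.continuous_u t
  have := continuous_slice h.continuous_darboux t
  have hcross : (∫ x in (0 : ℝ)..A, bump A x * (|u t x| * |darboux ux t x|)) ^ 2
      ≤ E ^ 2 * dissipation ux A t := by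
    calc _ = (∫ x in (0 : ℝ)..A, |u t x| * (bump A x * |darboux ux t x|)) ^ 2 := by
          simp only [mul_left_comm]
      _ ≤ (∫ x in (0 : ℝ)..A, |u t x| ^ 2) * ∫ x in (0 : ℝ)..A, (bump A x * |darboux ux t x|) ^ 2 :=
          sq_integral_mul_le hA.le (by fun_prop) (by fun_prop)
      _ ≤ E ^ 2 * dissipation ux A t := by
          simp only [sq_abs, mul_pow]
          refine mul_le_mul (hs.int_u t ht A hA.le) ?_
            (intervalIntegral.integral_nonneg hA.le fun x _ => by positivity) (sq_nonneg E)
          refine integral_le_integral_of_continuous hA.le (by fun_prop) (by fun_prop) fun x _ _ =>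
            mul_le_mul_of_nonneg_right ?_ (sq_nonneg _)
          exact pow_le_of_le_one (bump_nonneg A x) (bump_le_one A x) two_ne_zero
  calc supBound u ux E A t ^ 2 ≤ 2 * ((4 * E ^ 2 / A) ^ 2
        + (2 * ∫ x in (0 : ℝ)..A, bump A x * (|u t x| * |darboux ux t x|)) ^ 2) := add_sq_le
    _ ≤ 2 * ((4 * E ^ 2 / A) ^ 2 + 2 ^ 2 * (E ^ 2 * dissipation ux A t)) := by
        rw [mul_pow 2]
        gcongr
    _ = 32 * E ^ 4 / A ^ 2 + 8 * E ^ 2 * dissipation ux A t := by ring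

/-! ### The virial identity -/

/-- The primitive in `u` of the nonlinearity `sineRemainder`, at fixed `x`. -/
def remainderPotential (u : ℝ → ℝ → ℝ) (t x : ℝ) : ℝ :=
  cos (K x) * (1 - cos (u t x) - u t x ^ 2 / 2) + sin (K x) * (sin (u t x) - u t x)

/-- The derivative in `x` of `remainderPotential` at fixed value of `u`. -/
def remainderPotentialDeriv (u : ℝ → ℝ → ℝ) (t x : ℝ) : ℝ :=
  2 * sech x * (-(sin (K x)) * (1 - cos (u t x) - u t x ^ 2 / 2)
    + cos (K x) * (sin (u t x) - u t x))

lemma KinkPerturbation.hasDerivAt_remainderPotential (h : KinkPerturbation u ut ux utt uxx utx)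
    (t x : ℝ) :
    HasDerivAt (remainderPotential u t)
      (remainderPotentialDeriv u t x + sineRemainder u t x * ux t x) x := by
  have hu := h.hasDerivAt_space t x
  refine (((hasDerivAt_K x).cos.mul
    ((hu.cos.const_sub 1).sub ((hu.fun_pow 2).div_const 2))).add
    ((hasDerivAt_K x).sin.mul (hu.sin.sub hu))).congr_deriv ?_
  simp only [remainderPotentialDeriv, sineRemainder, Pi.sub_apply]
  push_cast
  ring

lemma KinkPerturbation.continuous_remainderPotential (h : KinkPerturbation u ut ux utt uxx utx)
    (t : ℝ) : Continuous (remainderPotential u t) :=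
  continuous_iff_continuousAt.2 fun x => (h.hasDerivAt_remainderPotential t x).continuousAt

/-- The virial density `(ψ p + bump · u / 2) uₜ`, where `ψ` is `virialWeight` and `p` is `darboux`,
with `ψ p` expanded so that it involves only `u` and `uₓ`. -/
def virialDensity (u ut ux : ℝ → ℝ → ℝ) (A t x : ℝ) : ℝ :=
  (virialWeight A x * ux t x + (1 / 2 * bump A x - sech x ^ 2 * weightQuot A x) * u t x) * ut t x

/-- The time derivative of `virialDensity`. -/
def virialDensityDeriv (u ut ux utt utx : ℝ → ℝ → ℝ) (A t x : ℝ) : ℝ :=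
  (virialWeight A x * utx t x + (1 / 2 * bump A x - sech x ^ 2 * weightQuot A x) * ut t x) * ut t x
    + (virialWeight A x * ux t x + (1 / 2 * bump A x - sech x ^ 2 * weightQuot A x) * u t x)
      * utt t x

/-- The flux of the virial density. -/
def virialFlux (u ut ux : ℝ → ℝ → ℝ) (A t x : ℝ) : ℝ :=
  1 / 2 * virialWeight A x * ut t x ^ 2 + 1 / 2 * virialWeight A x * darboux ux t x ^ 2
    + 1 / 2 * bump A x * (u t x * darboux ux t x) - 1 / 2 * virialWeight A x * u t x ^ 2
    - virialWeight A x * remainderPotential u t x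

/-- The contribution of the nonlinearity to the bulk term of the virial identity. -/
def virialRemainder (u : ℝ → ℝ → ℝ) (A t x : ℝ) : ℝ :=
  virialWeightDeriv A x * remainderPotential u t x
    + virialWeight A x * remainderPotentialDeriv u t x
    + sech x ^ 2 * weightQuot A x * (u t x * sineRemainder u t x)
    - 1 / 2 * bump A x * (u t x * sineRemainder u t x)

/-- The bulk term of the virial identity. -/
def virialBulk (u ux : ℝ → ℝ → ℝ) (A t x : ℝ) : ℝ :=
  virialWeightDeriv A x * darboux ux t x ^ 2 + 1 / 2 * bumpDeriv A x * (u t x * darboux ux t x)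
    - virialRemainder u A t x

lemma KinkPerturbation.hasDerivAt_virialDensity (h : KinkPerturbation u ut ux utt uxx utx)
    (A t x : ℝ) :
    HasDerivAt (fun s => virialDensity u ut ux A s x)
      (virialDensityDeriv u ut ux utt utx A t x) t :=
  (((h.hasDerivAt_ux_time t x).const_mul _).add ((h.hasDerivAt_time t x).const_mul _)).mul
    (h.hasDerivAt_ut_time t x)

lemma KinkPerturbation.continuous_virialDensity (h : KinkPerturbation u ut ux utt uxx utx)
    (A : ℝ) : Continuous (Function.uncurry (virialDensity u ut ux A)) := by
  have := h.continuous_u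
  have := h.continuous_ut
  have := h.continuous_ux
  unfold Function.uncurry at *
  unfold virialDensity
  fun_prop

lemma KinkPerturbation.continuous_virialDensityDeriv (h : KinkPerturbation u ut ux utt uxx utx)
    (A : ℝ) : Continuous (Function.uncurry (virialDensityDeriv u ut ux utt utx A)) := by
  have := h.continuous_u
  have := h.continuous_ut
  have := h.continuous_ux
  have := h.continuous_utt
  have := h.continuous_utx
  unfold Function.uncurry at *
  unfold virialDensityDeriv
  fun_prop

lemma KinkPerturbation.continuous_virialFlux (h : KinkPerturbation u ut ux utt uxx utx)
    (A t : ℝ) : Continuous (virialFlux u ut ux A t) := by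
  have := continuous_slice h.continuous_u t
  have := continuous_slice h.continuous_ut t
  have := continuous_slice h.continuous_darboux t
  have := h.continuous_remainderPotential t
  unfold virialFlux
  fun_prop

lemma KinkPerturbation.hasDerivAt_virialFlux (h : KinkPerturbation u ut ux utt uxx utx) (A : ℝ)
    {t x : ℝ} (ht : 0 ≤ t) (hx : 0 < x) :
    HasDerivAt (virialFlux u ut ux A t)
      (virialDensityDeriv u ut ux utt utx A t x + virialBulk u ux A t x) x := by
  have htanh := tanh_pos hx
  have hψ := hasDerivAt_virialWeight A hx
  have hp := h.hasDerivAt_darboux ht hx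
  have hbump := hasDerivAt_bump A x
  have hu := h.hasDerivAt_space t x
  refine ((((((hψ.const_mul (1 / 2)).mul ((h.hasDerivAt_ut_space t x).fun_pow 2)).add
    ((hψ.const_mul (1 / 2)).mul (hp.fun_pow 2))).add
    ((hbump.const_mul (1 / 2)).mul (hu.mul hp))).sub
    ((hψ.const_mul (1 / 2)).mul (hu.fun_pow 2))).sub
    (hψ.mul (h.hasDerivAt_remainderPotential t x))).congr_deriv ?_
  have hux : ux t x = darboux ux t x + sech x ^ 2 / tanh x * u t x := by
    rw [← h.tanh_mul_tanhQuot ht x, darboux]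
    field_simp
    ring
  simp only [virialDensityDeriv, virialBulk, virialRemainder, Pi.mul_apply]
  rw [h.utt_eq ht x, hux]
  simp only [virialWeightDeriv, virialWeight]
  push_cast
  field_simp
  ring

/-! ### Pointwise bounds in the virial identity -/

lemma abs_sin_sub_self_le {z : ℝ} (hz : |z| ≤ 1) : |sin z - z| ≤ |z| ^ 3 / 5 := by
  have hpow : |z| ^ 5 ≤ |z| ^ 3 := pow_le_pow_of_le_one (abs_nonneg z) hz (by norm_num)
  calc |sin z - z| = |(sin z - (z - z ^ 3 / 6)) - z ^ 3 / 6| := by ring_nf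
    _ ≤ |sin z - (z - z ^ 3 / 6)| + |z ^ 3 / 6| := abs_sub _ _
    _ ≤ |z| ^ 5 / 100 + |z| ^ 3 / 6 :=
        add_le_add (sin_bound hz) (by rw [abs_div, abs_pow, abs_of_pos (by norm_num : (0 : ℝ) < 6)])
    _ ≤ |z| ^ 3 / 5 := by linarith [pow_nonneg (abs_nonneg z) 3]

lemma abs_one_sub_cos_sub_le {z : ℝ} (hz : |z| ≤ 1) : |1 - cos z - z ^ 2 / 2| ≤ |z| ^ 4 / 10 := by
  calc |1 - cos z - z ^ 2 / 2| = |cos z - (1 - z ^ 2 / 2)| := by rw [← abs_neg]; ring_nf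
    _ ≤ |z| ^ 4 * (5 / 96) := cos_bound hz
    _ ≤ |z| ^ 4 / 10 := by linarith [pow_nonneg (abs_nonneg z) 4]

lemma abs_cos_sub_one_le (z : ℝ) : |cos z - 1| ≤ |z| ^ 2 / 2 := by
  rw [sq_abs, abs_le]
  constructor <;> linarith [one_sub_sq_div_two_le_cos (x := z), cos_le_one z, sq_nonneg z]

lemma abs_mul_add_mul_le {a b c d a' b' c' d' : ℝ} (ha : |a| ≤ a') (hb : |b| ≤ b') (hc : |c| ≤ c')
    (hd : |d| ≤ d') : |a * b + c * d| ≤ a' * b' + c' * d' := by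
  refine (abs_add_le _ _).trans ?_
  rw [abs_mul, abs_mul]
  exact add_le_add (mul_le_mul ha hb (abs_nonneg b) ((abs_nonneg a).trans ha))
    (mul_le_mul hc hd (abs_nonneg d) ((abs_nonneg c).trans hc))

lemma abs_remainderPotential_le {t x : ℝ} (hu : |u t x| ≤ 1) :
    |remainderPotential u t x| ≤ |u t x| ^ 4 / 10 + 2 / 5 * (sech x * |u t x| ^ 3) :=
  (abs_mul_add_mul_le (abs_cos_le_one (K x)) (abs_one_sub_cos_sub_le hu) (abs_sin_K_le x)
    (abs_sin_sub_self_le hu)).trans_eq (by ring)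

lemma abs_remainderPotential_le_sq {t x : ℝ} (hu : |u t x| ≤ 1) :
    |remainderPotential u t x| ≤ u t x ^ 2 := by
  have hfour : |u t x| ^ 4 ≤ |u t x| ^ 2 := pow_le_pow_of_le_one (abs_nonneg _) hu (by norm_num)
  have hthree : |u t x| ^ 3 ≤ |u t x| ^ 2 := pow_le_pow_of_le_one (abs_nonneg _) hu (by norm_num)
  have hsech : sech x * |u t x| ^ 3 ≤ 1 * |u t x| ^ 2 :=
    mul_le_mul (sech_le_one x) hthree (by positivity) zero_le_one
  rw [← sq_abs]
  linarith [abs_remainderPotential_le hu, sq_nonneg |u t x|]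

lemma abs_sineRemainder_le {t x : ℝ} (hu : |u t x| ≤ 1) :
    |sineRemainder u t x| ≤ |u t x| ^ 3 / 5 + sech x * |u t x| ^ 2 :=
  (abs_mul_add_mul_le (abs_cos_le_one (K x)) (abs_sin_sub_self_le hu) (abs_sin_K_le x)
    (abs_cos_sub_one_le (u t x))).trans_eq (by ring)

lemma abs_mul_sineRemainder_le {t x : ℝ} (hu : |u t x| ≤ 1) :
    |u t x * sineRemainder u t x| ≤ |u t x| ^ 4 / 5 + sech x * |u t x| ^ 3 := by
  rw [abs_mul]
  exact (mul_le_mul_of_nonneg_left (abs_sineRemainder_le hu) (abs_nonneg _)).trans_eq (by ring)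

lemma abs_remainderPotentialDeriv_le {t x : ℝ} (hu : |u t x| ≤ 1) :
    |remainderPotentialDeriv u t x| ≤ sech x * |u t x| ^ 3 := by
  have hsech := sech_pos x
  have hpow : |u t x| ^ 4 ≤ |u t x| ^ 3 := pow_le_pow_of_le_one (abs_nonneg _) hu (by norm_num)
  have hsin : |-(sin (K x))| ≤ 1 := (abs_neg _).trans_le (abs_sin_le_one _)
  rw [remainderPotentialDeriv, abs_mul, abs_of_pos (by positivity : 0 < 2 * sech x)]
  calc _ ≤ 2 * sech x * (1 * (|u t x| ^ 4 / 10) + 1 * (|u t x| ^ 3 / 5)) := by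
        gcongr
        exact abs_mul_add_mul_le hsin (abs_one_sub_cos_sub_le hu) (abs_cos_le_one _)
          (abs_sin_sub_self_le hu)
    _ ≤ 2 * sech x * (1 * (|u t x| ^ 3 / 10) + 1 * (|u t x| ^ 3 / 5)) := by gcongr
    _ ≤ sech x * |u t x| ^ 3 := by nlinarith [pow_nonneg (abs_nonneg (u t x)) 3]

/- The remainder is quartic where `bump` lives, and cubic only with an exponentially localised
coefficient. -/
lemma abs_virialRemainder_le {A t x : ℝ} (hx : 0 ≤ x) (hu : |u t x| ≤ 1) :
    |virialRemainder u A t x|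
      ≤ bump A x * u t x ^ 4 + 4 * ((1 + x) * sech x * |u t x| ^ 3) := by
  have hsech := sech_pos x
  have hbump := bump_nonneg A x
  have hψ := virialWeight_nonneg A hx
  have hquot : 0 ≤ sech x ^ 2 * weightQuot A x := mul_nonneg (sq_nonneg _) (weightQuot_nonneg A x)
  have hpow : sech x * |u t x| ^ 4 ≤ sech x * |u t x| ^ 3 := by
    gcongr ?_ * ?_
    exact pow_le_pow_of_le_one (abs_nonneg _) hu (by norm_num)
  have hsech_sq : sech x * (sech x * |u t x| ^ 3) ≤ sech x * |u t x| ^ 3 :=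
    mul_le_of_le_one_left (by positivity) (sech_le_one x)
  have hbump_sech : bump A x * (sech x * |u t x| ^ 3) ≤ sech x * |u t x| ^ 3 :=
    mul_le_of_le_one_left (by positivity) (bump_le_one A x)
  have hpotential := abs_mul_add_mul_le (abs_virialWeightDeriv_le A hx)
    (abs_remainderPotential_le hu)
    ((abs_of_nonneg hψ).trans_le (virialWeight_le_self A hx)) (abs_remainderPotentialDeriv_le hu)
  have hforce := abs_mul_add_mul_le
    ((abs_of_nonneg hquot).trans_le (sech_sq_mul_weightQuot_le_sech A hx))
    (abs_mul_sineRemainder_le hu)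
    (by rw [abs_neg, abs_of_nonneg (by positivity)] : |-(1 / 2 * bump A x)| ≤ 1 / 2 * bump A x)
    (abs_mul_sineRemainder_le hu)
  have hfour : u t x ^ 4 = |u t x| ^ 4 := by rw [← abs_pow, abs_of_nonneg (by positivity)]
  have hbump_four : 0 ≤ bump A x * |u t x| ^ 4 := by positivity
  have hx_three : 0 ≤ x * (sech x * |u t x| ^ 3) := by positivity
  have hthree : 0 ≤ sech x * |u t x| ^ 3 := by positivity
  calc |virialRemainder u A t x|
      ≤ |virialWeightDeriv A x * remainderPotential u t x
          + virialWeight A x * remainderPotentialDeriv u t x|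
        + |sech x ^ 2 * weightQuot A x * (u t x * sineRemainder u t x)
          + -(1 / 2 * bump A x) * (u t x * sineRemainder u t x)| := by
        refine le_of_eq_of_le ?_ (abs_add_le _ _)
        rw [virialRemainder]
        ring_nf
    _ ≤ bump A x * u t x ^ 4 + 4 * ((1 + x) * sech x * |u t x| ^ 3) := by
        rw [hfour]
        linarith

lemma le_virialBulk {A t x : ℝ} (hA : 0 < A) (hx : 0 ≤ x) (hu : |u t x| ≤ 1) :
    bump A x * darboux ux t x ^ 2 / 8 - 2000 / A ^ 2 * darboux ux t x ^ 2 - 8 / A ^ 2 * u t x ^ 2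
      - (bump A x * u t x ^ 4 + 4 * ((1 + x) * sech x * |u t x| ^ 3)) ≤ virialBulk u ux A t x := by
  have hremainder := (abs_le.1 (abs_virialRemainder_le (A := A) hx hu)).2
  have hcoercive :=
    mul_le_mul_of_nonneg_right (le_virialWeightDeriv hA hx) (sq_nonneg (darboux ux t x))
  have hcross : -(bump A x * darboux ux t x ^ 2 / 8 + 8 / A ^ 2 * u t x ^ 2)
      ≤ 1 / 2 * bumpDeriv A x * (u t x * darboux ux t x) := by
    have hyoung : -(A ^ 2 / 128 * (bumpDeriv A x ^ 2 * darboux ux t x ^ 2) + 8 / A ^ 2 * u t x ^ 2)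
        ≤ 1 / 2 * bumpDeriv A x * (u t x * darboux ux t x) := by
      have hsq := sq_nonneg (A / 16 * (bumpDeriv A x * darboux ux t x) + 2 / A * u t x)
      field_simp at hsq ⊢
      linarith
    have hgradient : A ^ 2 / 128 * (bumpDeriv A x ^ 2 * darboux ux t x ^ 2)
        ≤ A ^ 2 / 128 * (16 / A ^ 2 * bump A x * darboux ux t x ^ 2) := by
      gcongr
      exact bumpDeriv_sq_le hA x
    have hcancel : A ^ 2 / 128 * (16 / A ^ 2 * bump A x * darboux ux t x ^ 2)
        = bump A x * darboux ux t x ^ 2 / 8 := by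
      field_simp
      ring
    linarith
  rw [virialBulk]
  linarith

lemma abs_mul_le_half_add_sq (a b : ℝ) : |a * b| ≤ (a ^ 2 + b ^ 2) / 2 := by
  rw [abs_mul]
  linarith [two_mul_le_add_sq |a| |b|, sq_abs a, sq_abs b]

lemma abs_virialFlux_le {A t x : ℝ} (hA : 1 ≤ A) (hx : 0 ≤ x) (hu : |u t x| ≤ 1) :
    |virialFlux u ut ux A t x| ≤ A * (ut t x ^ 2 + darboux ux t x ^ 2 + 2 * u t x ^ 2) := by
  have hA_pos : 0 < A := one_pos.trans_le hA
  have hψ := virialWeight_nonneg A hx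
  have hψ_le := virialWeight_le_width hA_pos hx
  have hcross : |u t x * darboux ux t x| ≤ (u t x ^ 2 + darboux ux t x ^ 2) / 2 :=
    abs_mul_le_half_add_sq _ _
  calc |virialFlux u ut ux A t x|
      ≤ 1 / 2 * virialWeight A x * ut t x ^ 2 + 1 / 2 * virialWeight A x * darboux ux t x ^ 2
        + 1 / 2 * bump A x * |u t x * darboux ux t x| + 1 / 2 * virialWeight A x * u t x ^ 2
        + virialWeight A x * |remainderPotential u t x| := by
        have hmixed : |1 / 2 * bump A x * (u t x * darboux ux t x)|
            = 1 / 2 * bump A x * |u t x * darboux ux t x| := by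
          rw [abs_mul, abs_of_nonneg (mul_nonneg one_half_pos.le (bump_nonneg A x))]
        have hpotential : |virialWeight A x * remainderPotential u t x|
            = virialWeight A x * |remainderPotential u t x| := by rw [abs_mul, abs_of_nonneg hψ]
        have : 0 ≤ virialWeight A x * ut t x ^ 2 := by positivity
        have : 0 ≤ virialWeight A x * darboux ux t x ^ 2 := by positivity
        have : 0 ≤ virialWeight A x * u t x ^ 2 := by positivity
        rw [virialFlux, abs_le]
        constructor <;> linarith [le_abs_self (1 / 2 * bump A x * (u t x * darboux ux t x)),
          neg_abs_le (1 / 2 * bump A x * (u t x * darboux ux t x)),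
          le_abs_self (virialWeight A x * remainderPotential u t x),
          neg_abs_le (virialWeight A x * remainderPotential u t x)]
    _ ≤ 1 / 2 * A * ut t x ^ 2 + 1 / 2 * A * darboux ux t x ^ 2
        + 1 / 2 * A * ((u t x ^ 2 + darboux ux t x ^ 2) / 2) + 1 / 2 * A * u t x ^ 2
        + A * u t x ^ 2 := by
        gcongr
        · exact (bump_le_one A x).trans hA
        · exact abs_remainderPotential_le_sq hu
    _ ≤ A * (ut t x ^ 2 + darboux ux t x ^ 2 + 2 * u t x ^ 2) := by
        have : 0 ≤ A * ut t x ^ 2 := by positivity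
        have : 0 ≤ A * darboux ux t x ^ 2 := by positivity
        have : 0 ≤ A * u t x ^ 2 := by positivity
        linarith

/-! ### The virial estimate -/

lemma dissipation_nonneg (ux : ℝ → ℝ → ℝ) {A : ℝ} (hA : 0 < A) (t : ℝ) :
    0 ≤ dissipation ux A t :=
  intervalIntegral.integral_nonneg hA.le fun x _ => mul_nonneg (bump_nonneg A x) (sq_nonneg _)

/-- The error terms of the virial identity at scale `A` cut off at the outer scale `L`. -/
def virialError (u ut ux : ℝ → ℝ → ℝ) (A L t x : ℝ) : ℝ :=
  4 * A / L * (ut t x ^ 2 + darboux ux t x ^ 2 + 2 * u t x ^ 2) + 2000 / A ^ 2 * darboux ux t x ^ 2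
    + 8 / A ^ 2 * u t x ^ 2

lemma KinkPerturbation.continuous_virialError (h : KinkPerturbation u ut ux utt uxx utx)
    (A L t : ℝ) : Continuous (virialError u ut ux A L t) := by
  have := continuous_slice h.continuous_u t
  have := continuous_slice h.continuous_ut t
  have := continuous_slice h.continuous_darboux t
  unfold virialError
  fun_prop

lemma KinkPerturbation.integral_virialError_le (h : KinkPerturbation u ut ux utt uxx utx)
    {E A t : ℝ} (hs : UniformlySmall u ut ux E) (hA : 0 < A) (ht : 0 ≤ t) :
    ∫ x in (0 : ℝ)..(2 * A ^ 3), virialError u ut ux A (2 * A ^ 3) t x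
      ≤ 2016 * (E ^ 2 / A ^ 2) := by
  have := continuous_slice h.continuous_u t
  have := continuous_slice h.continuous_ut t
  have := continuous_slice h.continuous_darboux t
  have hL : 0 ≤ 2 * A ^ 3 := by positivity
  simp only [virialError]
  rw [intervalIntegral.integral_add, intervalIntegral.integral_add,
    intervalIntegral.integral_const_mul, intervalIntegral.integral_const_mul,
    intervalIntegral.integral_const_mul, intervalIntegral.integral_add,
    intervalIntegral.integral_add, intervalIntegral.integral_const_mul]
  · calc _ ≤ 4 * A / (2 * A ^ 3) * (E ^ 2 + E ^ 2 + 2 * E ^ 2) + 2000 / A ^ 2 * E ^ 2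
          + 8 / A ^ 2 * E ^ 2 := by
          gcongr
          exacts [hs.int_ut t ht _ hL, h.integral_darboux_sq_le hs ht hL, hs.int_u t ht _ hL,
            h.integral_darboux_sq_le hs ht hL, hs.int_u t ht _ hL]
      _ = 2016 * (E ^ 2 / A ^ 2) := by
          field_simp
          ring
  all_goals exact Continuous.intervalIntegrable (by fun_prop) _ _

lemma le_deriv_bump_mul_virialFlux {A L t x : ℝ} (hA : 1 ≤ A) (hAL : A ≤ L / 2) (hx : 0 ≤ x)
    (hu : |u t x| ≤ 1) :
    1 / 16 * (bump A x * darboux ux t x ^ 2) - virialError u ut ux A L t x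
        - bump A x * u t x ^ 4 - 4 * ((1 + x) * sech x * |u t x| ^ 3)
      ≤ bumpDeriv L x * virialFlux u ut ux A t x + bump L x * virialBulk u ux A t x := by
  have hA_pos : 0 < A := one_pos.trans_le hA
  have hL : 0 < L := by linarith
  have hsech := sech_pos x
  have hbump := bump_nonneg A x
  have houter : bump L x ≤ 1 := bump_le_one L x
  have htruncation : -(4 * A / L * (ut t x ^ 2 + darboux ux t x ^ 2 + 2 * u t x ^ 2))
      ≤ bumpDeriv L x * virialFlux u ut ux A t x := by
    refine neg_le_of_abs_le ?_
    calc |bumpDeriv L x * virialFlux u ut ux A t x|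
        ≤ 4 / L * (A * (ut t x ^ 2 + darboux ux t x ^ 2 + 2 * u t x ^ 2)) := by
          rw [abs_mul]
          exact mul_le_mul (abs_bumpDeriv_le hL x) (abs_virialFlux_le hA hx hu) (abs_nonneg _)
            (by positivity)
      _ = 4 * A / L * (ut t x ^ 2 + darboux ux t x ^ 2 + 2 * u t x ^ 2) := by ring
  have hbulk := mul_le_mul_of_nonneg_left (le_virialBulk (ux := ux) hA_pos hx hu)
    (bump_nonneg L x)
  -- The outer cutoff is bounded below on the support of the inner one.
  have hcoercive : 1 / 16 * (bump A x * darboux ux t x ^ 2)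
      ≤ bump L x * (bump A x * darboux ux t x ^ 2 / 8) := by
    rcases le_total A x with hAx | hxA
    · simp [bump_eq_zero hA_pos hAx]
    · calc 1 / 16 * (bump A x * darboux ux t x ^ 2)
          ≤ 9 / 16 * (bump A x * darboux ux t x ^ 2 / 8) := by
            linarith [mul_nonneg hbump (sq_nonneg (darboux ux t x))]
        _ ≤ bump L x * (bump A x * darboux ux t x ^ 2 / 8) :=
            mul_le_mul_of_nonneg_right (le_bump_of_le_half hL hx (hxA.trans hAL)) (by positivity)
  have hdarboux : bump L x * (2000 / A ^ 2 * darboux ux t x ^ 2)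
      ≤ 2000 / A ^ 2 * darboux ux t x ^ 2 := mul_le_of_le_one_left (by positivity) houter
  have hlower : bump L x * (8 / A ^ 2 * u t x ^ 2) ≤ 8 / A ^ 2 * u t x ^ 2 :=
    mul_le_of_le_one_left (by positivity) houter
  have hnonlinear : bump L x * (bump A x * u t x ^ 4 + 4 * ((1 + x) * sech x * |u t x| ^ 3))
      ≤ bump A x * u t x ^ 4 + 4 * ((1 + x) * sech x * |u t x| ^ 3) :=
    mul_le_of_le_one_left (by positivity) houter
  rw [virialError]
  linarith

lemma KinkPerturbation.virial_localized (h : KinkPerturbation u ut ux utt uxx utx) {E A t : ℝ}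
    (hs : UniformlySmall u ut ux E) (hA : 1 ≤ A) (ht : 0 ≤ t) :
    (∫ x in (0 : ℝ)..(2 * A ^ 3), bump (2 * A ^ 3) x * virialDensityDeriv u ut ux utt utx A t x)
      + dissipation ux A t / 16
      ≤ 2016 * (E ^ 2 / A ^ 2) + (∫ x in (0 : ℝ)..(2 * A ^ 3), bump A x * u t x ^ 4)
        + 4 * ∫ x in (0 : ℝ)..(2 * A ^ 3), (1 + x) * sech x * |u t x| ^ 3 := by
  have hA_pos : 0 < A := one_pos.trans_le hA
  have herror := h.integral_virialError_le hs hA_pos ht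
  obtain ⟨L, hL_def⟩ : ∃ L, L = 2 * A ^ 3 := ⟨_, rfl⟩
  rw [← hL_def] at herror ⊢
  have hAL : A ≤ L / 2 := by linarith [le_self_pow₀ hA three_ne_zero]
  have hL : 0 < L := by linarith
  have := continuous_slice h.continuous_u t
  have := continuous_slice h.continuous_darboux t
  have := continuous_slice (h.continuous_virialDensityDeriv A) t
  have := h.continuous_virialFlux A t
  have := h.continuous_virialError A L t
  have hFTC := integral_le_sub_of_le_deriv hL.le
    (by fun_prop : ContinuousOn (fun x => bump L x * virialFlux u ut ux A t x) _)
    (fun x hx _ => (hasDerivAt_bump L x).mul (h.hasDerivAt_virialFlux A ht hx))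
    (f := fun x => bump L x * virialDensityDeriv u ut ux utt utx A t x
      + 1 / 16 * (bump A x * darboux ux t x ^ 2) - virialError u ut ux A L t x
      - bump A x * u t x ^ 4 - 4 * ((1 + x) * sech x * |u t x| ^ 3)) (by fun_prop)
    fun x hx _ => by
      linarith [le_deriv_bump_mul_virialFlux (ut := ut) (ux := ux) hA hAL hx.le
        ((hs.sup t ht x hx.le).trans hs.le_one)]
  have hstart : virialFlux u ut ux A t 0 = 0 := by
    simp [virialFlux, virialWeight_zero, h.u_zero t ht]
  rw [bump_eq_zero hL le_rfl, hstart, zero_mul, mul_zero, sub_zero, intervalIntegral.integral_sub,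
    intervalIntegral.integral_sub, intervalIntegral.integral_sub, intervalIntegral.integral_add,
    intervalIntegral.integral_const_mul, intervalIntegral.integral_const_mul] at hFTC
  · have hdissipation : dissipation ux A t ≤ ∫ x in (0 : ℝ)..L, bump A x * darboux ux t x ^ 2 :=
      intervalIntegral.integral_mono_interval le_rfl hA_pos.le (by linarith)
        (Eventually.of_forall fun x => mul_nonneg (bump_nonneg A x) (sq_nonneg _))
        (Continuous.intervalIntegrable (by fun_prop) _ _)
    linarith
  all_goals exact Continuous.intervalIntegrable (by fun_prop) _ _

lemma integral_one_add_mul_sech_le {L : ℝ} (hL : 0 ≤ L) :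
    ∫ x in (0 : ℝ)..L, (1 + x) * sech x ≤ 64 := by
  have hcont : Continuous fun x : ℝ => 32 * (1 / (1 + x ^ 2)) :=
    continuous_const.mul (continuous_const.div (by fun_prop) fun x => by positivity)
  calc ∫ x in (0 : ℝ)..L, (1 + x) * sech x ≤ ∫ x in (0 : ℝ)..L, 32 * (1 / (1 + x ^ 2)) := by
        refine integral_le_integral_of_continuous hL (by fun_prop) hcont fun x hx _ => ?_
        rw [mul_one_div]
        exact one_add_mul_sech_le hx
    _ = 32 * arctan L := by
        rw [intervalIntegral.integral_const_mul, integral_one_div_one_add_sq, arctan_zero, sub_zero]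
    _ ≤ 64 := by linarith [arctan_lt_pi_div_two L, pi_lt_four]

lemma pow_three_le_mul_pow_four_add {a κ : ℝ} (ha : 0 ≤ a) (hκ : 0 < κ) :
    a ^ 3 ≤ κ * a ^ 4 + 1 / κ ^ 3 := by
  rcases le_total 1 (κ * a) with hlarge | hsmall
  · calc a ^ 3 ≤ a ^ 3 * (κ * a) := le_mul_of_one_le_right (by positivity) hlarge
      _ ≤ κ * a ^ 4 + 1 / κ ^ 3 := by
          have : 0 ≤ 1 / κ ^ 3 := by positivity
          linarith
  · calc a ^ 3 = (κ * a) ^ 3 / κ ^ 3 := by field_simp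
      _ ≤ 1 / κ ^ 3 := by
          gcongr
          exact pow_le_one₀ (by positivity) hsmall
      _ ≤ κ * a ^ 4 + 1 / κ ^ 3 := le_add_of_nonneg_left (by positivity)

lemma KinkPerturbation.integral_bump_mul_pow_four_le (h : KinkPerturbation u ut ux utt uxx utx)
    {E A L t : ℝ} (hs : UniformlySmall u ut ux E) (hA : 0 < A) (hL : 0 ≤ L) (ht : 0 ≤ t) :
    ∫ x in (0 : ℝ)..L, bump A x * u t x ^ 4 ≤ supBound u ux E A t * E ^ 2 := by
  have := continuous_slice h.continuous_u t
  calc ∫ x in (0 : ℝ)..L, bump A x * u t x ^ 4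
      ≤ ∫ x in (0 : ℝ)..L, supBound u ux E A t * u t x ^ 2 :=
        integral_le_integral_of_continuous hL (by fun_prop) (by fun_prop) fun x hx _ => by
          calc bump A x * u t x ^ 4 = bump A x * u t x ^ 2 * u t x ^ 2 := by ring
            _ ≤ supBound u ux E A t * u t x ^ 2 :=
                mul_le_mul_of_nonneg_right (h.bump_mul_sq_le hs hA ht hx) (sq_nonneg _)
    _ = supBound u ux E A t * ∫ x in (0 : ℝ)..L, u t x ^ 2 :=
        intervalIntegral.integral_const_mul _ _
    _ ≤ supBound u ux E A t * E ^ 2 :=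
        mul_le_mul_of_nonneg_left (hs.int_u t ht L hL) (supBound_nonneg u ux E hA t)

lemma KinkPerturbation.sech_mul_pow_three_le (h : KinkPerturbation u ut ux utt uxx utx)
    {E A κ t x : ℝ} (hs : UniformlySmall u ut ux E) (hA : 0 < A) (hκ : 0 < κ) (ht : 0 ≤ t)
    (hx : 0 ≤ x) :
    (1 + x) * sech x * |u t x| ^ 3
      ≤ (κ * (4 * supBound u ux E A t ^ 2) + 1 / κ ^ 3) * ((1 + x) * sech x)
        + 128 / A ^ 2 * u t x ^ 2 := by
  have hsech := sech_pos x
  rcases le_total x (A / 2) with hxA | hAx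
  · have hsq : 9 / 16 * u t x ^ 2 ≤ supBound u ux E A t :=
      (mul_le_mul_of_nonneg_right (le_bump_of_le_half hA hx hxA) (sq_nonneg _)).trans
        (h.bump_mul_sq_le hs hA ht hx)
    have hfour : |u t x| ^ 4 ≤ 4 * supBound u ux E A t ^ 2 :=
      calc |u t x| ^ 4 = (u t x ^ 2) ^ 2 := by rw [← sq_abs (u t x), ← pow_mul]
        _ ≤ (2 * supBound u ux E A t) ^ 2 := by
            gcongr
            linarith [sq_nonneg (u t x)]
        _ = 4 * supBound u ux E A t ^ 2 := by ring
    have hcube : |u t x| ^ 3 ≤ κ * (4 * supBound u ux E A t ^ 2) + 1 / κ ^ 3 :=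
      (pow_three_le_mul_pow_four_add (abs_nonneg _) hκ).trans (by gcongr)
    calc (1 + x) * sech x * |u t x| ^ 3
        ≤ (1 + x) * sech x * (κ * (4 * supBound u ux E A t ^ 2) + 1 / κ ^ 3) := by gcongr
      _ = (κ * (4 * supBound u ux E A t ^ 2) + 1 / κ ^ 3) * ((1 + x) * sech x) := mul_comm _ _
      _ ≤ _ := le_add_of_nonneg_right (by positivity)
  · have hcube : |u t x| ^ 3 ≤ u t x ^ 2 := by
      rw [← sq_abs]
      exact pow_le_pow_of_le_one (abs_nonneg _) ((hs.sup t ht x hx).trans hs.le_one) (by norm_num)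
    have hweight : (1 + x) * sech x ≤ 128 / A ^ 2 := by
      refine (one_add_mul_sech_le hx).trans ?_
      rw [div_le_div_iff₀ (by positivity) (by positivity)]
      linarith [pow_le_pow_left₀ (by positivity) hAx 2, div_pow A 2 2]
    calc (1 + x) * sech x * |u t x| ^ 3 ≤ 128 / A ^ 2 * u t x ^ 2 := by gcongr
      _ ≤ _ := le_add_of_nonneg_left (by positivity)

lemma KinkPerturbation.integral_sech_mul_pow_three_le
    (h : KinkPerturbation u ut ux utt uxx utx) {E A L κ t : ℝ} (hs : UniformlySmall u ut ux E)
    (hA : 0 < A) (hL : 0 ≤ L) (hκ : 0 < κ) (ht : 0 ≤ t) :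
    ∫ x in (0 : ℝ)..L, (1 + x) * sech x * |u t x| ^ 3
      ≤ (κ * (4 * supBound u ux E A t ^ 2) + 1 / κ ^ 3) * 64 + 128 * (E ^ 2 / A ^ 2) := by
  have := continuous_slice h.continuous_u t
  have hmono := integral_le_integral_of_continuous hL (by fun_prop) (by fun_prop)
    fun x hx _ => h.sech_mul_pow_three_le hs hA hκ ht hx
  rw [intervalIntegral.integral_add (Continuous.intervalIntegrable (by fun_prop) _ _)
    (Continuous.intervalIntegrable (by fun_prop) _ _), intervalIntegral.integral_const_mul,
    intervalIntegral.integral_const_mul] at hmono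
  calc _ ≤ _ := hmono
    _ ≤ (κ * (4 * supBound u ux E A t ^ 2) + 1 / κ ^ 3) * 64 + 128 / A ^ 2 * E ^ 2 := by
        gcongr
        exacts [integral_one_add_mul_sech_le hL, hs.int_u t ht L hL]
    _ = (κ * (4 * supBound u ux E A t ^ 2) + 1 / κ ^ 3) * 64 + 128 * (E ^ 2 / A ^ 2) := by ring

/- The weights in the two Young inequalities make `supBound² / E²` appear with a small coefficient;
`supBound_sq_le` then lets the dissipation absorb it. -/
lemma KinkPerturbation.virial_closed (h : KinkPerturbation u ut ux utt uxx utx) {E A t : ℝ}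
    (hs : UniformlySmall u ut ux E) (hA : 1 ≤ A) (ht : 0 ≤ t) :
    (∫ x in (0 : ℝ)..(2 * A ^ 3), bump (2 * A ^ 3) x * virialDensityDeriv u ut ux utt utx A t x)
      + dissipation ux A t / 64 ≤ 2 ^ 63 * (E ^ 2 / A ^ 2 + E ^ 6) := by
  have hA_pos : 0 < A := one_pos.trans_le hA
  have hL : 0 ≤ 2 * A ^ 3 := by positivity
  have hE := hs.pos
  set S := supBound u ux E A t
  have habsorb : S ^ 2 / E ^ 2 ≤ 32 * (E ^ 2 / A ^ 2) + 8 * dissipation ux A t := by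
    rw [div_le_iff₀ (by positivity)]
    refine (h.supBound_sq_le hs hA_pos ht).trans_eq ?_
    field_simp
  have hquartic : ∫ x in (0 : ℝ)..(2 * A ^ 3), bump A x * u t x ^ 4
      ≤ 1 / 1024 * (S ^ 2 / E ^ 2) + 256 * E ^ 6 := by
    refine (h.integral_bump_mul_pow_four_le hs hA_pos hL ht).trans ?_
    have hsq := sq_nonneg (1 / 32 * (S / E) - 16 * E ^ 3)
    have hexpand : (1 / 32 * (S / E) - 16 * E ^ 3) ^ 2
        = 1 / 1024 * (S ^ 2 / E ^ 2) - S * E ^ 2 + 256 * E ^ 6 := by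
      field_simp
      ring
    linarith
  have hcubic : ∫ x in (0 : ℝ)..(2 * A ^ 3), (1 + x) * sech x * |u t x| ^ 3
      ≤ (1 / 2 ^ 16 * (S ^ 2 / E ^ 2) + 2 ^ 54 * E ^ 6) * 64 + 128 * (E ^ 2 / A ^ 2) := by
    refine (h.integral_sech_mul_pow_three_le hs hA_pos hL
      (by positivity : 0 < 1 / (2 ^ 18 * E ^ 2)) ht).trans_eq ?_
    field_simp
    ring
  have : 0 ≤ E ^ 2 / A ^ 2 := by positivity
  have : 0 ≤ E ^ 6 := by positivity
  linarith [h.virial_localized hs hA ht, dissipation_nonneg ux hA_pos t]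

lemma abs_virialDensity_le {A x : ℝ} (hA : 1 ≤ A) (t : ℝ) (hx : 0 ≤ x) :
    |virialDensity u ut ux A t x| ≤ A * (u t x ^ 2 + ux t x ^ 2 + ut t x ^ 2) := by
  have hA_pos : 0 < A := one_pos.trans_le hA
  have hψ : |virialWeight A x| ≤ A :=
    (abs_of_nonneg (virialWeight_nonneg A hx)).trans_le (virialWeight_le_width hA_pos hx)
  have hcoeff : |1 / 2 * bump A x - sech x ^ 2 * weightQuot A x| ≤ A := by
    have : 0 ≤ sech x ^ 2 * weightQuot A x := mul_nonneg (sq_nonneg _) (weightQuot_nonneg A x)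
    rw [abs_le]
    constructor <;> linarith [sech_sq_mul_weightQuot_le_third A hx, bump_nonneg A x,
      bump_le_one A x]
  calc |virialDensity u ut ux A t x| = |virialWeight A x * (ux t x * ut t x)
        + (1 / 2 * bump A x - sech x ^ 2 * weightQuot A x) * (u t x * ut t x)| := by
        rw [virialDensity]
        ring_nf
    _ ≤ A * ((ux t x ^ 2 + ut t x ^ 2) / 2) + A * ((u t x ^ 2 + ut t x ^ 2) / 2) :=
        abs_mul_add_mul_le hψ (abs_mul_le_half_add_sq _ _) hcoeff (abs_mul_le_half_add_sq _ _)
    _ ≤ A * (u t x ^ 2 + ux t x ^ 2 + ut t x ^ 2) := by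
        have : 0 ≤ A * ux t x ^ 2 := by positivity
        have : 0 ≤ A * u t x ^ 2 := by positivity
        linarith

lemma KinkPerturbation.abs_integral_virialDensity_le (h : KinkPerturbation u ut ux utt uxx utx)
    {E A L t : ℝ} (hs : UniformlySmall u ut ux E) (hA : 1 ≤ A) (hL : 0 ≤ L) (ht : 0 ≤ t) :
    |∫ x in (0 : ℝ)..L, bump L x * virialDensity u ut ux A t x| ≤ 3 * (A * E ^ 2) := by
  have := continuous_slice h.continuous_u t
  have := continuous_slice h.continuous_ut t
  have := continuous_slice h.continuous_ux t
  have := continuous_slice (h.continuous_virialDensity A) t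
  calc |∫ x in (0 : ℝ)..L, bump L x * virialDensity u ut ux A t x|
      ≤ ∫ x in (0 : ℝ)..L, |bump L x * virialDensity u ut ux A t x| :=
        intervalIntegral.abs_integral_le_integral_abs hL
    _ ≤ ∫ x in (0 : ℝ)..L, A * (u t x ^ 2 + ux t x ^ 2 + ut t x ^ 2) := by
        refine integral_le_integral_of_continuous hL (by fun_prop) (by fun_prop) fun x hx _ => ?_
        rw [abs_mul, abs_of_nonneg (bump_nonneg L x)]
        exact (mul_le_of_le_one_left (abs_nonneg _) (bump_le_one L x)).trans
          (abs_virialDensity_le hA t hx)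
    _ = A * ((∫ x in (0 : ℝ)..L, u t x ^ 2) + (∫ x in (0 : ℝ)..L, ux t x ^ 2)
          + ∫ x in (0 : ℝ)..L, ut t x ^ 2) := by
        rw [intervalIntegral.integral_const_mul, intervalIntegral.integral_add,
          intervalIntegral.integral_add]
        all_goals exact Continuous.intervalIntegrable (by fun_prop) _ _
    _ ≤ A * (E ^ 2 + E ^ 2 + E ^ 2) := by
        gcongr
        exacts [hs.int_u t ht L hL, hs.int_ux t ht L hL, hs.int_ut t ht L hL]
    _ = 3 * (A * E ^ 2) := by ring

lemma KinkPerturbation.continuous_dissipation (h : KinkPerturbation u ut ux utt uxx utx) (A : ℝ) :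
    Continuous (dissipation ux A) := by
  unfold dissipation
  refine intervalIntegral.continuous_parametric_intervalIntegral_of_continuous' ?_ 0 A
  have := h.continuous_darboux
  unfold Function.uncurry at *
  fun_prop

lemma KinkPerturbation.integral_dissipation_le (h : KinkPerturbation u ut ux utt uxx utx)
    {E A t₀ t₁ : ℝ} (hs : UniformlySmall u ut ux E) (hA : 1 ≤ A) (ht₀ : 0 ≤ t₀) (ht : t₀ ≤ t₁) :
    ∫ t in t₀..t₁, dissipation ux A t
      ≤ 2 ^ 70 * (A * E ^ 2 + (t₁ - t₀) * (E ^ 2 / A ^ 2 + E ^ 6)) := by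
  have : 0 < A := one_pos.trans_le hA
  have hclosed (t : ℝ) (ht : 0 ≤ t) := h.virial_closed hs hA ht
  obtain ⟨L, hL_def⟩ : ∃ L, L = 2 * A ^ 3 := ⟨_, rfl⟩
  have hL : 0 ≤ L := hL_def ▸ by positivity
  simp only [← hL_def] at hclosed
  have hdensity : Continuous (Function.uncurry fun t x =>
      bump L x * virialDensity u ut ux A t x) := by
    have := h.continuous_virialDensity A
    unfold Function.uncurry at *
    fun_prop
  have hderiv : Continuous (Function.uncurry fun t x =>
      bump L x * virialDensityDeriv u ut ux utt utx A t x) := by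
    have := h.continuous_virialDensityDeriv A
    unfold Function.uncurry at *
    fun_prop
  have hFTC := integral_sub_integral_eq_integral_deriv hdensity hderiv
    (fun t x => (h.hasDerivAt_virialDensity A t x).const_mul (bump L x)) t₀ t₁ 0 L
  have : Continuous fun t =>
      ∫ x in (0 : ℝ)..L, bump L x * virialDensityDeriv u ut ux utt utx A t x :=
    intervalIntegral.continuous_parametric_intervalIntegral_of_continuous' hderiv 0 L
  have := h.continuous_dissipation A
  have hint := integral_le_integral_of_continuous ht (by fun_prop) (by fun_prop)
    fun t htt _ => hclosed t (ht₀.trans htt)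
  rw [intervalIntegral.integral_add (Continuous.intervalIntegrable (by fun_prop) _ _)
    (Continuous.intervalIntegrable (by fun_prop) _ _), ← hFTC, intervalIntegral.integral_div,
    intervalIntegral.integral_const, smul_eq_mul] at hint
  have hend := neg_le_of_abs_le (h.abs_integral_virialDensity_le hs hA hL (ht₀.trans ht))
  have hstart := le_of_abs_le (h.abs_integral_virialDensity_le hs hA hL ht₀)
  have : 0 ≤ A * E ^ 2 := by positivity
  have : 0 ≤ (t₁ - t₀) * (E ^ 2 / A ^ 2 + E ^ 6) := mul_nonneg (sub_nonneg.2 ht) (by positivity)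
  linarith

/-! ### Local energy on a fixed interval -/

/-- A pointwise bound for `u²` on bounded intervals, in terms of the dissipation. -/
def localBound (ux : ℝ → ℝ → ℝ) (E A t : ℝ) : ℝ := 12 * E ^ 2 / A + 2 * A * dissipation ux A t

lemma localBound_nonneg (ux : ℝ → ℝ → ℝ) (E : ℝ) {A : ℝ} (hA : 0 < A) (t : ℝ) :
    0 ≤ localBound ux E A t := by
  have := dissipation_nonneg ux hA t
  unfold localBound
  positivity

lemma KinkPerturbation.continuous_localBound (h : KinkPerturbation u ut ux utt uxx utx)
    (E A : ℝ) : Continuous (localBound ux E A) := by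
  have := h.continuous_dissipation A
  unfold localBound
  fun_prop

lemma KinkPerturbation.supBound_le (h : KinkPerturbation u ut ux utt uxx utx) {E A t : ℝ}
    (hs : UniformlySmall u ut ux E) (hA : 0 < A) (ht : 0 ≤ t) :
    supBound u ux E A t ≤ 6 * E ^ 2 / A + A * dissipation ux A t := by
  have hd := dissipation_nonneg ux hA t
  refine le_of_abs_le (abs_le_of_sq_le_sq ?_ (by positivity))
  have hexpand : (6 * E ^ 2 / A + A * dissipation ux A t) ^ 2
      = 32 * E ^ 4 / A ^ 2 + 8 * E ^ 2 * dissipation ux A t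
        + (2 * E ^ 2 / A + A * dissipation ux A t) ^ 2 := by
    field_simp
    ring
  linarith [h.supBound_sq_le hs hA ht, sq_nonneg (2 * E ^ 2 / A + A * dissipation ux A t)]

lemma KinkPerturbation.sq_le_localBound (h : KinkPerturbation u ut ux utt uxx utx) {E A t x : ℝ}
    (hs : UniformlySmall u ut ux E) (hA : 0 < A) (ht : 0 ≤ t) (hx : 0 ≤ x) (hxA : x ≤ A / 2) :
    u t x ^ 2 ≤ localBound ux E A t := by
  have hbump : 9 / 16 * u t x ^ 2 ≤ bump A x * u t x ^ 2 :=
    mul_le_mul_of_nonneg_right (le_bump_of_le_half hA hx hxA) (sq_nonneg _)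
  calc u t x ^ 2 ≤ 2 * (9 / 16 * u t x ^ 2) := by linarith [sq_nonneg (u t x)]
    _ ≤ 2 * (6 * E ^ 2 / A + A * dissipation ux A t) := by
        linarith [h.bump_mul_sq_le hs hA ht hx, h.supBound_le hs hA ht]
    _ = localBound ux E A t := by
        rw [localBound]
        ring

lemma KinkPerturbation.integral_sq_le_localBound (h : KinkPerturbation u ut ux utt uxx utx)
    {E A Y t : ℝ} (hs : UniformlySmall u ut ux E) (hY : 1 ≤ Y) (hA : 2 * Y ≤ A) (ht : 0 ≤ t) :
    ∫ x in (0 : ℝ)..Y, u t x ^ 2 ≤ Y * localBound ux E A t := by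
  have := continuous_slice h.continuous_u t
  calc ∫ x in (0 : ℝ)..Y, u t x ^ 2 ≤ ∫ _x in (0 : ℝ)..Y, localBound ux E A t :=
        integral_le_integral_of_continuous (by linarith) (by fun_prop) (by fun_prop)
          fun x hx hxY => h.sq_le_localBound hs (by linarith) ht hx (by linarith)
    _ = Y * localBound ux E A t := by simp

lemma integral_sq_le_two_mul_integral_bump_mul {f : ℝ → ℝ} (hf : Continuous f) {Y Z : ℝ}
    (hY : 0 < Y) (hZ : 2 * Y ≤ Z) :
    ∫ x in (0 : ℝ)..Y, f x ^ 2 ≤ 2 * ∫ x in (0 : ℝ)..Z, bump Z x * f x ^ 2 := by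
  rw [← intervalIntegral.integral_const_mul]
  calc ∫ x in (0 : ℝ)..Y, f x ^ 2 ≤ ∫ x in (0 : ℝ)..Y, 2 * (bump Z x * f x ^ 2) := by
        refine integral_le_integral_of_continuous hY.le (by fun_prop) (by fun_prop)
          fun x hx hxY => ?_
        rw [← mul_assoc]
        refine le_mul_of_one_le_left (sq_nonneg _) ?_
        linarith [le_bump_of_le_half (by linarith : 0 < Z) hx (by linarith)]
    _ ≤ ∫ x in (0 : ℝ)..Z, 2 * (bump Z x * f x ^ 2) :=
        intervalIntegral.integral_mono_interval le_rfl hY.le (by linarith)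
          (Eventually.of_forall fun x =>
            mul_nonneg zero_le_two (mul_nonneg (bump_nonneg Z x) (sq_nonneg _)))
          (Continuous.intervalIntegrable (by fun_prop) _ _)

lemma KinkPerturbation.integral_ux_sq_le_localBound (h : KinkPerturbation u ut ux utt uxx utx)
    {E A Y t : ℝ} (hs : UniformlySmall u ut ux E) (hY : 1 ≤ Y) (hA : 2 * Y ≤ A) (ht : 0 ≤ t) :
    ∫ x in (0 : ℝ)..Y, ux t x ^ 2 ≤ 4 * Y * localBound ux E A t := by
  have hA_pos : 0 < A := by linarith
  have hA_sq : 0 ≤ 12 * E ^ 2 / A := by positivity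
  have hdarboux : ∫ x in (0 : ℝ)..Y, darboux ux t x ^ 2 ≤ 2 * dissipation ux A t :=
    integral_sq_le_two_mul_integral_bump_mul (continuous_slice h.continuous_darboux t)
      (by linarith) hA
  have hdissipation : 2 * dissipation ux A t ≤ localBound ux E A t := by
    have := mul_le_mul_of_nonneg_right (by linarith : 1 ≤ A) (dissipation_nonneg ux hA_pos t)
    rw [localBound]
    linarith
  linarith [h.integral_ux_sq_le ht hY, h.integral_sq_le_localBound hs hY hA ht,
    h.sq_le_localBound hs hA_pos ht (by linarith : 0 ≤ Y) (by linarith),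
    le_mul_of_one_le_left (localBound_nonneg ux E hA_pos t) hY]

lemma KinkPerturbation.deriv_bump_mul_le (h : KinkPerturbation u ut ux utt uxx utx) {Y t : ℝ}
    (hY : 2 ≤ Y) (ht : 0 ≤ t) (x : ℝ) :
    bumpDeriv Y x * (u t x * ux t x) + bump Y x * (ux t x * ux t x + u t x * uxx t x)
      ≤ bump Y x * (ut t x * ut t x + u t x * utt t x) - bump Y x * ut t x ^ 2
        + (2 * ux t x ^ 2 + 2 * u t x ^ 2) := by
  have hY_pos : 0 < Y := by linarith
  have hbump := bump_nonneg Y x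
  have hcutoff : bumpDeriv Y x * (u t x * ux t x) ≤ u t x ^ 2 + ux t x ^ 2 := by
    have hslope : |bumpDeriv Y x| ≤ 2 :=
      (abs_bumpDeriv_le hY_pos x).trans ((div_le_iff₀ hY_pos).2 (by linarith))
    calc bumpDeriv Y x * (u t x * ux t x) ≤ |bumpDeriv Y x| * |u t x * ux t x| :=
          (le_abs_self _).trans_eq (abs_mul _ _)
      _ ≤ 2 * ((u t x ^ 2 + ux t x ^ 2) / 2) := by
          gcongr
          exact abs_mul_le_half_add_sq _ _
      _ = u t x ^ 2 + ux t x ^ 2 := by ring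
  have hforce : bump Y x * (u t x * (sin (K x + u t x) - sin (K x))) ≤ u t x ^ 2 := by
    have hlip : |sin (K x + u t x) - sin (K x)| ≤ |u t x| := by
      simpa using abs_sin_sub_sin_le (K x + u t x) (K x)
    calc bump Y x * (u t x * (sin (K x + u t x) - sin (K x)))
        ≤ bump Y x * (|u t x| * |u t x|) := by
          refine mul_le_mul_of_nonneg_left ?_ hbump
          calc u t x * (sin (K x + u t x) - sin (K x))
              ≤ |u t x| * |sin (K x + u t x) - sin (K x)| :=
                (le_abs_self _).trans_eq (abs_mul _ _)
            _ ≤ |u t x| * |u t x| := by gcongr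
      _ ≤ |u t x| * |u t x| := mul_le_of_le_one_left (by positivity) (bump_le_one Y x)
      _ = u t x ^ 2 := by rw [abs_mul_abs_self, sq]
  have hgradient : bump Y x * ux t x ^ 2 ≤ ux t x ^ 2 :=
    mul_le_of_le_one_left (sq_nonneg _) (bump_le_one Y x)
  rw [h.wave_eq t ht x]
  linarith

/- Testing the equation against `bump · u` exchanges `uₜ²` for `uₓ²` and `u²`. -/
lemma KinkPerturbation.integral_bump_mul_ut_sq_le (h : KinkPerturbation u ut ux utt uxx utx)
    {Y t : ℝ} (hY : 2 ≤ Y) (ht : 0 ≤ t) :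
    ∫ x in (0 : ℝ)..Y, bump Y x * ut t x ^ 2
      ≤ (∫ x in (0 : ℝ)..Y, bump Y x * (ut t x * ut t x + u t x * utt t x))
        + (2 * (∫ x in (0 : ℝ)..Y, ux t x ^ 2) + 2 * ∫ x in (0 : ℝ)..Y, u t x ^ 2) := by
  have hY_pos : 0 < Y := by linarith
  have := continuous_slice h.continuous_u t
  have := continuous_slice h.continuous_ut t
  have := continuous_slice h.continuous_ux t
  have := continuous_slice h.continuous_utt t
  have hFTC := sub_le_integral_of_deriv_le hY_pos.le
    (by fun_prop : ContinuousOn (fun x => bump Y x * (u t x * ux t x)) _)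
    (fun x _ _ => (hasDerivAt_bump Y x).mul
      ((h.hasDerivAt_space t x).mul (h.hasDerivAt_ux_space t x)))
    (by fun_prop) fun x _ _ => h.deriv_bump_mul_le hY ht x
  rw [h.u_zero t ht, bump_eq_zero hY_pos le_rfl, zero_mul, zero_mul, mul_zero, sub_zero,
    intervalIntegral.integral_add, intervalIntegral.integral_sub, intervalIntegral.integral_add,
    intervalIntegral.integral_const_mul, intervalIntegral.integral_const_mul] at hFTC
  · linarith
  all_goals exact Continuous.intervalIntegrable (by fun_prop) _ _

lemma KinkPerturbation.abs_integral_bump_mul_le (h : KinkPerturbation u ut ux utt uxx utx)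
    {E Y t : ℝ} (hs : UniformlySmall u ut ux E) (hY : 0 ≤ Y) (ht : 0 ≤ t) :
    |∫ x in (0 : ℝ)..Y, bump Y x * (u t x * ut t x)| ≤ E ^ 2 := by
  have := continuous_slice h.continuous_u t
  have := continuous_slice h.continuous_ut t
  calc |∫ x in (0 : ℝ)..Y, bump Y x * (u t x * ut t x)|
      ≤ ∫ x in (0 : ℝ)..Y, |bump Y x * (u t x * ut t x)| :=
        intervalIntegral.abs_integral_le_integral_abs hY
    _ ≤ ∫ x in (0 : ℝ)..Y, (u t x ^ 2 + ut t x ^ 2) / 2 := by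
        refine integral_le_integral_of_continuous hY (by fun_prop) (by fun_prop) fun x _ _ => ?_
        rw [abs_mul, abs_of_nonneg (bump_nonneg Y x)]
        exact (mul_le_of_le_one_left (abs_nonneg _) (bump_le_one Y x)).trans
          (abs_mul_le_half_add_sq _ _)
    _ = ((∫ x in (0 : ℝ)..Y, u t x ^ 2) + ∫ x in (0 : ℝ)..Y, ut t x ^ 2) / 2 := by
        rw [intervalIntegral.integral_div, intervalIntegral.integral_add]
        all_goals exact Continuous.intervalIntegrable (by fun_prop) _ _
    _ ≤ E ^ 2 := by linarith [hs.int_u t ht Y hY, hs.int_ut t ht Y hY]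

/-- Twice the linear energy of the perturbation on `[0, Y]`. -/
def localEnergy (u ut ux : ℝ → ℝ → ℝ) (Y t : ℝ) : ℝ :=
  ∫ x in (0 : ℝ)..Y, (ut t x ^ 2 + ux t x ^ 2 + u t x ^ 2)

lemma localEnergy_nonneg (u ut ux : ℝ → ℝ → ℝ) {Y : ℝ} (hY : 0 ≤ Y) (t : ℝ) :
    0 ≤ localEnergy u ut ux Y t :=
  intervalIntegral.integral_nonneg hY fun x _ => by positivity

lemma KinkPerturbation.continuous_localEnergy (h : KinkPerturbation u ut ux utt uxx utx) (Y : ℝ) :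
    Continuous (localEnergy u ut ux Y) := by
  unfold localEnergy
  refine intervalIntegral.continuous_parametric_intervalIntegral_of_continuous' ?_ 0 Y
  have := h.continuous_u
  have := h.continuous_ut
  have := h.continuous_ux
  unfold Function.uncurry at *
  fun_prop

lemma KinkPerturbation.localEnergy_le (h : KinkPerturbation u ut ux utt uxx utx) {E A Y t : ℝ}
    (hs : UniformlySmall u ut ux E) (hY : 1 ≤ Y) (hA : 4 * Y ≤ A) (ht : 0 ≤ t) :
    localEnergy u ut ux Y t
      ≤ 2 * (∫ x in (0 : ℝ)..(2 * Y), bump (2 * Y) x * (ut t x * ut t x + u t x * utt t x))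
        + 45 * Y * localBound ux E A t := by
  have := continuous_slice h.continuous_u t
  have hut := continuous_slice h.continuous_ut t
  have := continuous_slice h.continuous_ux t
  have hsplit : localEnergy u ut ux Y t = (∫ x in (0 : ℝ)..Y, ut t x ^ 2)
      + (∫ x in (0 : ℝ)..Y, ux t x ^ 2) + ∫ x in (0 : ℝ)..Y, u t x ^ 2 := by
    rw [localEnergy, intervalIntegral.integral_add, intervalIntegral.integral_add]
    all_goals exact Continuous.intervalIntegrable (by fun_prop) _ _
  linarith [integral_sq_le_two_mul_integral_bump_mul hut (by linarith) (le_refl (2 * Y)),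
    h.integral_bump_mul_ut_sq_le (by linarith : 2 ≤ 2 * Y) ht,
    h.integral_ux_sq_le_localBound hs (by linarith : 1 ≤ 2 * Y) (by linarith : 2 * (2 * Y) ≤ A) ht,
    h.integral_sq_le_localBound hs (by linarith : 1 ≤ 2 * Y) (by linarith : 2 * (2 * Y) ≤ A) ht,
    h.integral_ux_sq_le_localBound hs hY (by linarith : 2 * Y ≤ A) ht,
    h.integral_sq_le_localBound hs hY (by linarith : 2 * Y ≤ A) ht]

lemma KinkPerturbation.integral_localBound_le (h : KinkPerturbation u ut ux utt uxx utx)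
    {E A t₀ t₁ : ℝ} (hs : UniformlySmall u ut ux E) (hA : 1 ≤ A) (ht₀ : 0 ≤ t₀) (ht : t₀ ≤ t₁) :
    ∫ t in t₀..t₁, localBound ux E A t
      ≤ 2 ^ 72 * (A ^ 2 * E ^ 2 + (t₁ - t₀) * (E ^ 2 / A + A * E ^ 6)) := by
  have : 0 < A := one_pos.trans_le hA
  have hτ : 0 ≤ t₁ - t₀ := sub_nonneg.2 ht
  have hE := hs.pos
  have := h.continuous_dissipation A
  calc ∫ t in t₀..t₁, localBound ux E A t
      = (t₁ - t₀) * (12 * E ^ 2 / A) + 2 * A * ∫ t in t₀..t₁, dissipation ux A t := by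
        unfold localBound
        rw [intervalIntegral.integral_add (Continuous.intervalIntegrable (by fun_prop) _ _)
          (Continuous.intervalIntegrable (by fun_prop) _ _), intervalIntegral.integral_const_mul,
          intervalIntegral.integral_const, smul_eq_mul]
    _ ≤ (t₁ - t₀) * (12 * E ^ 2 / A)
        + 2 * A * (2 ^ 70 * (A * E ^ 2 + (t₁ - t₀) * (E ^ 2 / A ^ 2 + E ^ 6))) := by
        gcongr
        exact h.integral_dissipation_le hs hA ht₀ ht
    _ = 12 * ((t₁ - t₀) * (E ^ 2 / A))
        + 2 ^ 71 * (A ^ 2 * E ^ 2 + (t₁ - t₀) * (E ^ 2 / A + A * E ^ 6)) := by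
        field_simp
    _ ≤ 2 ^ 72 * (A ^ 2 * E ^ 2 + (t₁ - t₀) * (E ^ 2 / A + A * E ^ 6)) := by
        have : 0 ≤ A ^ 2 * E ^ 2 := by positivity
        have : 0 ≤ (t₁ - t₀) * (E ^ 2 / A) := by positivity
        have : 0 ≤ (t₁ - t₀) * (A * E ^ 6) := by positivity
        linarith

lemma KinkPerturbation.integral_localEnergy_le (h : KinkPerturbation u ut ux utt uxx utx)
    {E A Y t₀ t₁ : ℝ} (hs : UniformlySmall u ut ux E) (hY : 1 ≤ Y) (hA : 4 * Y ≤ A)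
    (ht₀ : 0 ≤ t₀) (ht : t₀ ≤ t₁) :
    ∫ t in t₀..t₁, localEnergy u ut ux Y t
      ≤ 2 ^ 80 * Y * (A ^ 2 * E ^ 2 + (t₁ - t₀) * (E ^ 2 / A + A * E ^ 6)) := by
  have hA_one : 1 ≤ A := by linarith
  have hE := hs.pos
  have := h.continuous_u
  have := h.continuous_ut
  have := h.continuous_utt
  have := h.continuous_localBound E A
  have hmoment : Continuous (Function.uncurry fun t x =>
      bump (2 * Y) x * (u t x * ut t x)) := by
    unfold Function.uncurry at *
    fun_prop
  have hderiv : Continuous (Function.uncurry fun t x =>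
      bump (2 * Y) x * (ut t x * ut t x + u t x * utt t x)) := by
    unfold Function.uncurry at *
    fun_prop
  have hFTC := integral_sub_integral_eq_integral_deriv hmoment hderiv (fun t x =>
    ((h.hasDerivAt_time t x).mul (h.hasDerivAt_ut_time t x)).const_mul (bump (2 * Y) x))
    t₀ t₁ 0 (2 * Y)
  have : Continuous fun t => ∫ x in (0 : ℝ)..(2 * Y),
      bump (2 * Y) x * (ut t x * ut t x + u t x * utt t x) :=
    intervalIntegral.continuous_parametric_intervalIntegral_of_continuous' hderiv 0 (2 * Y)
  have hint := integral_le_integral_of_continuous ht (h.continuous_localEnergy Y) (by fun_prop)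
    fun t htt _ => h.localEnergy_le hs hY hA (ht₀.trans htt)
  rw [intervalIntegral.integral_add (Continuous.intervalIntegrable (by fun_prop) _ _)
    (Continuous.intervalIntegrable (by fun_prop) _ _), intervalIntegral.integral_const_mul,
    intervalIntegral.integral_const_mul, ← hFTC] at hint
  have hend := le_of_abs_le
    (h.abs_integral_bump_mul_le hs (by linarith : 0 ≤ 2 * Y) (ht₀.trans ht))
  have hstart := neg_le_of_abs_le (h.abs_integral_bump_mul_le hs (by linarith : 0 ≤ 2 * Y) ht₀)
  have hbound := mul_le_mul_of_nonneg_left (h.integral_localBound_le hs hA_one ht₀ ht)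
    (by positivity : 0 ≤ 45 * Y)
  have hE_sq : E ^ 2 ≤ A ^ 2 * E ^ 2 :=
    le_mul_of_one_le_left (sq_nonneg E) (one_le_pow₀ hA_one)
  have hτ : 0 ≤ (t₁ - t₀) * (E ^ 2 / A + A * E ^ 6) :=
    mul_nonneg (sub_nonneg.2 ht) (by positivity)
  have hY_mul := le_mul_of_one_le_left (add_nonneg (mul_nonneg (sq_nonneg A) (sq_nonneg E)) hτ) hY
  linarith [sq_nonneg E]

/-! ### Summation over dyadic time intervals -/

lemma KinkPerturbation.continuousOn_inv_one_add_mul_localEnergy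
    (h : KinkPerturbation u ut ux utt uxx utx) (Y : ℝ) :
    ContinuousOn (fun t => (1 + t)⁻¹ * localEnergy u ut ux Y t) (Set.Ici 0) :=
  (ContinuousOn.inv₀ (by fun_prop) fun t ht => by linarith [Set.mem_Ici.1 ht]).mul
    (h.continuous_localEnergy Y).continuousOn

lemma KinkPerturbation.intervalIntegrable_inv_one_add_mul_localEnergy
    (h : KinkPerturbation u ut ux utt uxx utx) (Y : ℝ) {a b : ℝ} (ha : 0 ≤ a) (hb : 0 ≤ b) :
    IntervalIntegrable (fun t => (1 + t)⁻¹ * localEnergy u ut ux Y t) volume a b :=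
  ((h.continuousOn_inv_one_add_mul_localEnergy Y).mono fun _ ht =>
    (le_min ha hb).trans ht.1).intervalIntegrable

lemma two_pow_sub_one_nonneg (n : ℕ) : (0 : ℝ) ≤ 2 ^ n - 1 :=
  sub_nonneg.2 (one_le_pow₀ one_le_two)

/- The scale `A = 4 Y (n + 1) ^ 2` makes the time-uniform error `E ^ 2 / A` summable in `n`, while
`A ^ 2 E ^ 2` is beaten by the length `2 ^ n` of the interval. -/
lemma KinkPerturbation.integral_dyadic_le (h : KinkPerturbation u ut ux utt uxx utx) {E Y : ℝ}
    (hs : UniformlySmall u ut ux E) (hY : 1 ≤ Y) (n : ℕ) :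
    ∫ t in (2 ^ n - 1 : ℝ)..(2 ^ (n + 1) - 1), (1 + t)⁻¹ * localEnergy u ut ux Y t
      ≤ 2 ^ 84 * Y ^ 3 * (((n + 1 : ℝ) ^ 4 / 2 ^ n + ((n + 1 : ℝ) ^ 2)⁻¹) * E ^ 2
          + (n + 1 : ℝ) ^ 2 * E ^ 6) := by
  have hstart := two_pow_sub_one_nonneg n
  have hle : (2 : ℝ) ^ n - 1 ≤ 2 ^ (n + 1) - 1 := by
    gcongr
    exacts [one_le_two, n.le_succ]
  have hscale : 4 * Y ≤ 4 * Y * (n + 1 : ℝ) ^ 2 :=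
    le_mul_of_one_le_right (by positivity) (one_le_pow₀ (by simp))
  have hE := hs.pos
  have hY_sq : 2 ^ 82 * Y ^ 2 ≤ 2 ^ 84 * Y ^ 3 :=
    mul_le_mul (by norm_num) (pow_le_pow_right₀ hY (by norm_num)) (by positivity) (by positivity)
  have hY_one : 2 ^ 78 ≤ 2 ^ 84 * Y ^ 3 := by linarith [one_le_pow₀ hY (n := 3)]
  calc ∫ t in (2 ^ n - 1 : ℝ)..(2 ^ (n + 1) - 1), (1 + t)⁻¹ * localEnergy u ut ux Y t
      ≤ ∫ t in (2 ^ n - 1 : ℝ)..(2 ^ (n + 1) - 1), (2 ^ n)⁻¹ * localEnergy u ut ux Y t := by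
        refine intervalIntegral.integral_mono_on hle
          (h.intervalIntegrable_inv_one_add_mul_localEnergy Y hstart (hstart.trans hle))
          (((h.continuous_localEnergy Y).const_mul _).intervalIntegrable _ _) fun t ht => ?_
        have := localEnergy_nonneg u ut ux (by linarith : 0 ≤ Y) t
        gcongr
        linarith [ht.1]
    _ = (2 ^ n)⁻¹ * ∫ t in (2 ^ n - 1 : ℝ)..(2 ^ (n + 1) - 1), localEnergy u ut ux Y t :=
        intervalIntegral.integral_const_mul _ _
    _ ≤ (2 ^ n)⁻¹ * (2 ^ 80 * Y * ((4 * Y * (n + 1 : ℝ) ^ 2) ^ 2 * E ^ 2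
          + (2 ^ (n + 1) - 1 - (2 ^ n - 1)) * (E ^ 2 / (4 * Y * (n + 1 : ℝ) ^ 2)
            + 4 * Y * (n + 1 : ℝ) ^ 2 * E ^ 6))) := by
        gcongr
        exact h.integral_localEnergy_le hs hY hscale hstart hle
    _ = 2 ^ 84 * Y ^ 3 * ((n + 1 : ℝ) ^ 4 / 2 ^ n * E ^ 2)
          + 2 ^ 78 * (((n + 1 : ℝ) ^ 2)⁻¹ * E ^ 2)
          + 2 ^ 82 * Y ^ 2 * ((n + 1 : ℝ) ^ 2 * E ^ 6) := by
        rw [pow_succ (2 : ℝ) n]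
        field_simp
        ring
    _ ≤ 2 ^ 84 * Y ^ 3 * ((n + 1 : ℝ) ^ 4 / 2 ^ n * E ^ 2)
          + 2 ^ 84 * Y ^ 3 * (((n + 1 : ℝ) ^ 2)⁻¹ * E ^ 2)
          + 2 ^ 84 * Y ^ 3 * ((n + 1 : ℝ) ^ 2 * E ^ 6) := by gcongr
    _ = _ := by ring

lemma sum_pow_four_div_two_pow_le (n : ℕ) :
    ∑ k ∈ Finset.range n, (k + 1 : ℝ) ^ 4 / 2 ^ k ≤ 300 := by
  have hclosed : ∑ k ∈ Finset.range n, (k + 1 : ℝ) ^ 4 / 2 ^ k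
      = 300 - (2 * (n + 1 : ℝ) ^ 4 + 8 * (n + 1 : ℝ) ^ 3 + 36 * (n + 1 : ℝ) ^ 2
        + 104 * (n + 1 : ℝ) + 150) / 2 ^ n := by
    induction n with
    | zero => norm_num
    | succ n ih =>
      rw [Finset.sum_range_succ, ih, pow_succ (2 : ℝ)]
      push_cast
      field_simp
      ring
  rw [hclosed]
  exact sub_le_self _ (by positivity)

lemma sum_inv_sq_le_two (n : ℕ) : ∑ k ∈ Finset.range n, ((k + 1 : ℝ) ^ 2)⁻¹ ≤ 2 := by
  have hshift : ∑ k ∈ Finset.range n, ((k + 1 : ℝ) ^ 2)⁻¹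
      = ∑ k ∈ Finset.Ioo 0 (n + 1), ((k : ℝ) ^ 2)⁻¹ := by
    rw [← Finset.Ico_add_one_left_eq_Ioo, ← Finset.sum_Ico_add', ← Finset.range_eq_Ico]
    push_cast
    rfl
  simpa [hshift] using sum_Ioo_inv_sq_le (α := ℝ) 0 (n + 1)

lemma sum_sq_le_pow_three (n : ℕ) : ∑ k ∈ Finset.range n, (k + 1 : ℝ) ^ 2 ≤ n ^ 3 := by
  calc ∑ k ∈ Finset.range n, (k + 1 : ℝ) ^ 2 ≤ ∑ _k ∈ Finset.range n, (n : ℝ) ^ 2 := by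
        gcongr with k hk
        exact_mod_cast Finset.mem_range.1 hk
    _ = n ^ 3 := by
        rw [Finset.sum_const, Finset.card_range, nsmul_eq_mul]
        ring

lemma KinkPerturbation.integral_two_pow_le (h : KinkPerturbation u ut ux utt uxx utx) {E Y : ℝ}
    (hs : UniformlySmall u ut ux E) (hY : 1 ≤ Y) (n : ℕ) :
    ∫ t in (0 : ℝ)..(2 ^ n - 1), (1 + t)⁻¹ * localEnergy u ut ux Y t
      ≤ 2 ^ 93 * Y ^ 3 * (E ^ 2 + n ^ 3 * E ^ 6) := by
  have hE := hs.pos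
  calc ∫ t in (0 : ℝ)..(2 ^ n - 1), (1 + t)⁻¹ * localEnergy u ut ux Y t
      = ∑ k ∈ Finset.range n, ∫ t in (2 ^ k - 1 : ℝ)..(2 ^ (k + 1) - 1),
          (1 + t)⁻¹ * localEnergy u ut ux Y t := by
        rw [intervalIntegral.sum_integral_adjacent_intervals
          (a := fun k => (2 : ℝ) ^ k - 1) fun k _ =>
            h.intervalIntegrable_inv_one_add_mul_localEnergy Y (two_pow_sub_one_nonneg k)
              (two_pow_sub_one_nonneg (k + 1)), pow_zero, sub_self]
    _ ≤ ∑ k ∈ Finset.range n, 2 ^ 84 * Y ^ 3 *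
          (((k + 1 : ℝ) ^ 4 / 2 ^ k + ((k + 1 : ℝ) ^ 2)⁻¹) * E ^ 2 + (k + 1 : ℝ) ^ 2 * E ^ 6) :=
        Finset.sum_le_sum fun k _ => h.integral_dyadic_le hs hY k
    _ = 2 ^ 84 * Y ^ 3 * ((∑ k ∈ Finset.range n, (k + 1 : ℝ) ^ 4 / 2 ^ k
          + ∑ k ∈ Finset.range n, ((k + 1 : ℝ) ^ 2)⁻¹) * E ^ 2
          + (∑ k ∈ Finset.range n, (k + 1 : ℝ) ^ 2) * E ^ 6) := by
        rw [← Finset.mul_sum, Finset.sum_add_distrib, ← Finset.sum_mul, ← Finset.sum_mul,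
          Finset.sum_add_distrib]
    _ ≤ 2 ^ 84 * Y ^ 3 * ((300 + 2) * E ^ 2 + n ^ 3 * E ^ 6) := by
        gcongr
        exacts [sum_pow_four_div_two_pow_le n, sum_inv_sq_le_two n, sum_sq_le_pow_three n]
    _ ≤ 2 ^ 84 * Y ^ 3 * (2 ^ 9 * (E ^ 2 + n ^ 3 * E ^ 6)) := by
        gcongr
        linarith [(by positivity : 0 ≤ E ^ 2), (by positivity : 0 ≤ n ^ 3 * E ^ 6)]
    _ = 2 ^ 93 * Y ^ 3 * (E ^ 2 + n ^ 3 * E ^ 6) := by ring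

lemma exists_exp_mul_le_two_pow_sub_one (c : ℝ) {R : ℝ} (hR : 1 ≤ R) :
    ∃ n : ℕ, exp (c * R) ≤ 2 ^ n - 1 ∧ n ≤ (2 * |c| + 3) * R := by
  have hn := Nat.le_ceil (2 * ((|c| + 1) * R))
  have hn_lt := Nat.ceil_lt_add_one (by positivity : 0 ≤ 2 * ((|c| + 1) * R))
  set n := ⌈2 * ((|c| + 1) * R)⌉₊
  refine ⟨n, ?_, by linarith⟩
  have hone : 1 ≤ exp (|c| * R) := one_le_exp (by positivity)
  have hc : exp (c * R) ≤ exp (|c| * R) := by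
    gcongr
    exact le_abs_self c
  have hdouble : 2 * exp (|c| * R) ≤ exp ((|c| + 1) * R) := by
    rw [add_mul, one_mul, exp_add, mul_comm]
    gcongr
    linarith [add_one_le_exp R]
  have hpow : exp ((|c| + 1) * R) ≤ 2 ^ n := by
    rw [← exp_log two_pos, ← exp_nat_mul]
    refine exp_le_exp.2 ?_
    calc (|c| + 1) * R ≤ n * (1 / 2) := by linarith
      _ ≤ n * log 2 := by
          gcongr
          linarith [log_two_gt_d9]
  linarith

lemma KinkPerturbation.integral_exp_le (h : KinkPerturbation u ut ux utt uxx utx) {Y δ : ℝ}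
    (c : ℝ) (hδ : 0 < δ) (hδ_le : δ ≤ 1) (hs : UniformlySmall u ut ux (100 * δ)) (hY : 1 ≤ Y) :
    ∫ t in (0 : ℝ)..exp (c * δ ^ (-(4 / 3) : ℝ)), (1 + t)⁻¹ * localEnergy u ut ux Y t
      ≤ 2 ^ 133 * Y ^ 3 * (1 + (2 * |c| + 3) ^ 3) * δ ^ 2 := by
  obtain ⟨R, hR_def⟩ : ∃ R, R = δ ^ (-(4 / 3) : ℝ) := ⟨_, rfl⟩
  rw [← hR_def]
  have hR : 1 ≤ R := hR_def ▸ one_le_rpow_of_pos_of_le_one_of_nonpos hδ hδ_le (by norm_num)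
  have hcritical : R ^ 3 * δ ^ 4 = 1 := by
    rw [hR_def, ← rpow_mul_natCast hδ.le, ← rpow_natCast, ← rpow_add hδ]
    norm_num
  obtain ⟨n, hexp, hn⟩ := exists_exp_mul_le_two_pow_sub_one c hR
  have hnonneg := (exp_pos (c * R)).le
  calc ∫ t in (0 : ℝ)..exp (c * R), (1 + t)⁻¹ * localEnergy u ut ux Y t
      ≤ ∫ t in (0 : ℝ)..(2 ^ n - 1), (1 + t)⁻¹ * localEnergy u ut ux Y t := by
        refine intervalIntegral.integral_mono_interval le_rfl hnonneg hexp ?_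
          (h.intervalIntegrable_inv_one_add_mul_localEnergy Y le_rfl (hnonneg.trans hexp))
        filter_upwards [ae_restrict_mem measurableSet_Ioc] with t ht
        have := ht.1
        exact mul_nonneg (by positivity) (localEnergy_nonneg _ _ _ (by linarith) t)
    _ ≤ 2 ^ 93 * Y ^ 3 * ((100 * δ) ^ 2 + n ^ 3 * (100 * δ) ^ 6) := h.integral_two_pow_le hs hY n
    _ ≤ 2 ^ 93 * Y ^ 3 * ((100 * δ) ^ 2 + ((2 * |c| + 3) * R) ^ 3 * (100 * δ) ^ 6) := by gcongr
    _ = 2 ^ 93 * Y ^ 3 * (100 ^ 2 + 100 ^ 6 * (2 * |c| + 3) ^ 3 * (R ^ 3 * δ ^ 4)) * δ ^ 2 := by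
        ring
    _ ≤ 2 ^ 93 * Y ^ 3 * (2 ^ 40 + 2 ^ 40 * (2 * |c| + 3) ^ 3) * δ ^ 2 := by
        rw [hcritical, mul_one]
        gcongr <;> norm_num
    _ = 2 ^ 133 * Y ^ 3 * (1 + (2 * |c| + 3) ^ 3) * δ ^ 2 := by ring

/-! ### From odd solutions on the line to the half-line -/

/-- The derivative of `g` in the direction `v`, as a function on the plane that can be
differentiated again; `(1, 0)` is the time direction and `(0, 1)` the space direction. -/
def dirDeriv (v : ℝ × ℝ) (g : ℝ × ℝ → ℝ) (p : ℝ × ℝ) : ℝ := fderiv ℝ g p v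

lemma contDiff_dirDeriv {m n : WithTop ℕ∞} {g : ℝ × ℝ → ℝ} (hg : ContDiff ℝ n g)
    (hmn : m + 1 ≤ n) (v : ℝ × ℝ) : ContDiff ℝ m (dirDeriv v g) :=
  (hg.fderiv_right hmn).clm_apply contDiff_const

lemma hasDerivAt_dirDeriv_time {g : ℝ × ℝ → ℝ} (hg : Differentiable ℝ g) (t x : ℝ) :
    HasDerivAt (fun s => g (s, x)) (dirDeriv (1, 0) g (t, x)) t :=
  (hg (t, x)).hasFDerivAt.comp_hasDerivAt t ((hasDerivAt_id t).prodMk (hasDerivAt_const t x))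

lemma hasDerivAt_dirDeriv_space {g : ℝ × ℝ → ℝ} (hg : Differentiable ℝ g) (t x : ℝ) :
    HasDerivAt (fun y => g (t, y)) (dirDeriv (0, 1) g (t, x)) x :=
  (hg (t, x)).hasFDerivAt.comp_hasDerivAt x ((hasDerivAt_const x t).prodMk (hasDerivAt_id x))

lemma dirDeriv_dirDeriv {g : ℝ × ℝ → ℝ} (hg : ContDiff ℝ 2 g) (v w p : ℝ × ℝ) :
    dirDeriv v (dirDeriv w g) p = fderiv ℝ (fderiv ℝ g) p v w := by
  have hfderiv : DifferentiableAt ℝ (fderiv ℝ g) p :=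
    (hg.fderiv_right (m := 1) one_add_one_eq_two.le).differentiable one_ne_zero p
  have happly : HasFDerivAt (dirDeriv w g) _ p :=
    hfderiv.hasFDerivAt.clm_apply (hasFDerivAt_const w p)
  rw [dirDeriv, happly.fderiv]
  simp

lemma dirDeriv_comm {g : ℝ × ℝ → ℝ} (hg : ContDiff ℝ 2 g) (v w p : ℝ × ℝ) :
    dirDeriv v (dirDeriv w g) p = dirDeriv w (dirDeriv v g) p := by
  rw [dirDeriv_dirDeriv hg, dirDeriv_dirDeriv hg]
  exact hg.contDiffAt.isSymmSndFDerivAt (by simp) v w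

lemma dirDeriv_wave_eq {φ : ℝ → ℝ → ℝ} {g : ℝ × ℝ → ℝ} (hg : ContDiff ℝ 2 g)
    (hφ : ∀ t x, φ t x = g (t, x) + K x) {t x : ℝ}
    (hpde : deriv (fun s => deriv (fun s' => φ s' x) s) t
      - deriv (fun y => deriv (fun y' => φ t y') y) x + sin (φ t x) = 0) :
    dirDeriv (1, 0) (dirDeriv (1, 0) g) (t, x)
      = dirDeriv (0, 1) (dirDeriv (0, 1) g) (t, x) - (sin (K x + g (t, x)) - sin (K x)) := by
  have hg_diff := hg.differentiable two_ne_zero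
  have hdirDeriv_diff (v : ℝ × ℝ) : Differentiable ℝ (dirDeriv v g) :=
    (contDiff_dirDeriv (m := 1) hg one_add_one_eq_two.le v).differentiable one_ne_zero
  have hφ_time (s : ℝ) : deriv (fun s' => φ s' x) s = dirDeriv (1, 0) g (s, x) := by
    simp only [hφ]
    exact ((hasDerivAt_dirDeriv_time hg_diff s x).add_const _).deriv
  have hφ_space (y : ℝ) : deriv (fun y' => φ t y') y = dirDeriv (0, 1) g (t, y) + 2 * sech y := by
    simp only [hφ]
    exact ((hasDerivAt_dirDeriv_space hg_diff t y).add (hasDerivAt_K y)).deriv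
  simp only [hφ_time, hφ_space] at hpde
  rw [(hasDerivAt_dirDeriv_time (hdirDeriv_diff _) t x).deriv,
    ((hasDerivAt_dirDeriv_space (hdirDeriv_diff _) t x).fun_add
      ((hasDerivAt_sech x).const_mul 2)).deriv, hφ, add_comm (g (t, x))] at hpde
  rw [sin_K]
  linarith

lemma exists_kinkPerturbation {φ : ℝ → ℝ → ℝ}
    (hφ : ContDiff ℝ 2 (fun p : ℝ × ℝ => φ p.1 p.2))
    (hpde : ∀ t, 0 ≤ t → ∀ x, deriv (fun s => deriv (fun s' => φ s' x) s) t
      - deriv (fun y => deriv (fun y' => φ t y') y) x + sin (φ t x) = 0)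
    (hu : ∀ t x, u t x = φ t x - K x) (hodd : ∀ t, 0 ≤ t → ∀ x, u t (-x) = -u t x) :
    ∃ ut ux utt uxx utx, KinkPerturbation u ut ux utt uxx utx := by
  obtain ⟨g, hg_def⟩ : ∃ g : ℝ × ℝ → ℝ, g = fun p => φ p.1 p.2 - K p.2 := ⟨_, rfl⟩
  obtain rfl : u = fun t x => g (t, x) := funext₂ fun t x => by rw [hu, hg_def]
  have hg : ContDiff ℝ 2 g := hg_def ▸ hφ.sub (contDiff_K.comp contDiff_snd)
  have hfirst (v : ℝ × ℝ) : ContDiff ℝ 1 (dirDeriv v g) :=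
    contDiff_dirDeriv hg one_add_one_eq_two.le v
  have hsecond (v w : ℝ × ℝ) : Continuous (dirDeriv v (dirDeriv w g)) :=
    (contDiff_dirDeriv (m := 0) (hfirst w) (zero_add 1).le v).continuous
  have hg_diff := hg.differentiable two_ne_zero
  have hfirst_diff (v : ℝ × ℝ) := (hfirst v).differentiable one_ne_zero
  exact ⟨fun t x => dirDeriv (1, 0) g (t, x), fun t x => dirDeriv (0, 1) g (t, x),
    fun t x => dirDeriv (1, 0) (dirDeriv (1, 0) g) (t, x),
    fun t x => dirDeriv (0, 1) (dirDeriv (0, 1) g) (t, x),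
    fun t x => dirDeriv (0, 1) (dirDeriv (1, 0) g) (t, x),
    { continuous_u := hg.continuous
      continuous_ut := (hfirst _).continuous
      continuous_ux := (hfirst _).continuous
      continuous_utt := hsecond _ _
      continuous_utx := hsecond _ _
      hasDerivAt_time := hasDerivAt_dirDeriv_time hg_diff
      hasDerivAt_space := hasDerivAt_dirDeriv_space hg_diff
      hasDerivAt_ut_time := hasDerivAt_dirDeriv_time (hfirst_diff _)
      hasDerivAt_ux_space := hasDerivAt_dirDeriv_space (hfirst_diff _)
      hasDerivAt_ux_time := fun t x =>
        dirDeriv_comm hg (1, 0) (0, 1) (t, x) ▸ hasDerivAt_dirDeriv_time (hfirst_diff _) t x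
      hasDerivAt_ut_space := hasDerivAt_dirDeriv_space (hfirst_diff _)
      wave_eq := fun t ht x => dirDeriv_wave_eq hg (by simp [hg_def]) (hpde t ht x)
      u_zero := fun t ht => by simpa [self_eq_neg] using hodd t ht 0 }⟩

lemma KinkPerturbation.ut_odd (h : KinkPerturbation u ut ux utt uxx utx)
    (hodd : ∀ t, 0 ≤ t → ∀ x, u t (-x) = -u t x) {t : ℝ} (ht : 0 ≤ t) (x : ℝ) :
    ut t (-x) = -ut t x :=
  hasDerivAt_unique_of_eqOn_Ici (fun s hs => hodd s hs x) ht (h.hasDerivAt_time t (-x))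
    (h.hasDerivAt_time t x).fun_neg

lemma KinkPerturbation.ux_even (h : KinkPerturbation u ut ux utt uxx utx) {t : ℝ}
    (hodd : ∀ x, u t (-x) = -u t x) (x : ℝ) : ux t (-x) = ux t x := by
  have hcomp : HasDerivAt (fun y => u t (-y)) (ux t (-x) * -1) x :=
    (h.hasDerivAt_space t (-x)).comp x (hasDerivAt_neg x)
  rw [funext hodd] at hcomp
  linarith [hcomp.unique (h.hasDerivAt_space t x).fun_neg]

lemma integral_Icc_le_two_mul_integral_of_even {f : ℝ → ℝ} (hf : Continuous f)
    (hf_nonneg : ∀ x, 0 ≤ f x) (heven : ∀ x, f (-x) = f x) {x₁ x₂ Y : ℝ} (hY : 0 ≤ Y)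
    (hx₁ : -Y ≤ x₁) (hx₂ : x₂ ≤ Y) :
    ∫ x in Set.Icc x₁ x₂, f x ≤ 2 * ∫ x in (0 : ℝ)..Y, f x := by
  have hreflect : ∫ x in (-Y)..0, f x = ∫ x in (0 : ℝ)..Y, f x := by
    simpa [heven] using (intervalIntegral.integral_comp_neg (a := 0) (b := Y) f).symm
  calc ∫ x in Set.Icc x₁ x₂, f x ≤ ∫ x in Set.Icc (-Y) Y, f x :=
        setIntegral_mono_set hf.integrableOn_Icc (ae_of_all _ hf_nonneg)
          (Set.Icc_subset_Icc hx₁ hx₂).eventuallyLE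
    _ = ∫ x in (-Y)..Y, f x := by
        rw [integral_Icc_eq_integral_Ioc, intervalIntegral.integral_of_le (by linarith)]
    _ = 2 * ∫ x in (0 : ℝ)..Y, f x := by
        rw [← intervalIntegral.integral_add_adjacent_intervals (b := 0)
          (hf.intervalIntegrable _ _) (hf.intervalIntegrable _ _), hreflect, two_mul]

lemma KinkPerturbation.integral_Icc_le_localEnergy (h : KinkPerturbation u ut ux utt uxx utx)
    (hodd : ∀ t, 0 ≤ t → ∀ x, u t (-x) = -u t x) {x₁ x₂ Y t : ℝ} (hY : 0 ≤ Y) (hx₁ : -Y ≤ x₁)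
    (hx₂ : x₂ ≤ Y) (ht : 0 ≤ t) :
    ∫ x in Set.Icc x₁ x₂, (ut t x ^ 2 + ux t x ^ 2 + u t x ^ 2)
      ≤ 2 * localEnergy u ut ux Y t := by
  have := continuous_slice h.continuous_u t
  have := continuous_slice h.continuous_ut t
  have := continuous_slice h.continuous_ux t
  exact integral_Icc_le_two_mul_integral_of_even (by fun_prop) (fun x => by positivity)
    (fun x => by rw [h.ut_odd hodd ht, h.ux_even (hodd t ht), hodd t ht, neg_sq, neg_sq]) hY hx₁ hx₂

lemma KinkPerturbation.integral_Ioc_le_integral_localEnergy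
    (h : KinkPerturbation u ut ux utt uxx utx) (hodd : ∀ t, 0 ≤ t → ∀ x, u t (-x) = -u t x)
    {x₁ x₂ Y T S : ℝ} (hY : 0 ≤ Y) (hx₁ : -Y ≤ x₁) (hx₂ : x₂ ≤ Y) (hS : 0 ≤ S) (hTS : T ≤ S) :
    ∫ t in Set.Ioc 0 T, (1 + t)⁻¹ *
        ∫ x in Set.Icc x₁ x₂, (ut t x ^ 2 + ux t x ^ 2 + u t x ^ 2)
      ≤ 2 * ∫ t in (0 : ℝ)..S, (1 + t)⁻¹ * localEnergy u ut ux Y t := by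
  have hint : IntegrableOn (fun t => 2 * ((1 + t)⁻¹ * localEnergy u ut ux Y t)) (Set.Ioc 0 S) :=
    ((h.intervalIntegrable_inv_one_add_mul_localEnergy Y le_rfl hS).const_mul 2).1
  have hweight {t : ℝ} (ht : 0 < t) : 0 ≤ (1 + t)⁻¹ := by positivity
  rw [intervalIntegral.integral_of_le hS, ← integral_const_mul]
  calc ∫ t in Set.Ioc 0 T, (1 + t)⁻¹ *
        ∫ x in Set.Icc x₁ x₂, (ut t x ^ 2 + ux t x ^ 2 + u t x ^ 2)
      ≤ ∫ t in Set.Ioc 0 T, 2 * ((1 + t)⁻¹ * localEnergy u ut ux Y t) := by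
        refine integral_mono_of_nonneg ?_ (hint.mono_set (Set.Ioc_subset_Ioc_right hTS)) ?_
        · filter_upwards [ae_restrict_mem measurableSet_Ioc] with t ht
          exact mul_nonneg (hweight ht.1) (integral_nonneg fun x => by positivity)
        · filter_upwards [ae_restrict_mem measurableSet_Ioc] with t ht
          rw [mul_left_comm]
          exact mul_le_mul_of_nonneg_left
            (h.integral_Icc_le_localEnergy hodd hY hx₁ hx₂ ht.1.le) (hweight ht.1)
    _ ≤ ∫ t in Set.Ioc 0 S, 2 * ((1 + t)⁻¹ * localEnergy u ut ux Y t) := by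
        refine setIntegral_mono_set hint ?_ (Set.Ioc_subset_Ioc_right hTS).eventuallyLE
        filter_upwards [ae_restrict_mem measurableSet_Ioc] with t ht
        exact mul_nonneg zero_le_two (mul_nonneg (hweight ht.1) (localEnergy_nonneg u ut ux hY t))

lemma intervalIntegral_le_sq_of_sqrt_integral_le {f : ℝ → ℝ} (hf : Integrable f)
    (hf_nonneg : ∀ x, 0 ≤ f x) {δ : ℝ} (hδ : √(∫ x, f x) ≤ δ) {L : ℝ} (hL : 0 ≤ L) :
    ∫ x in (0 : ℝ)..L, f x ≤ δ ^ 2 := by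
  rw [intervalIntegral.integral_of_le hL]
  exact (setIntegral_le_integral hf (ae_of_all _ hf_nonneg)).trans
    ((sqrt_le_left ((sqrt_nonneg _).trans hδ)).1 hδ)

end

end SineGordonKink

open SineGordonKink

theorem local_energy_control_sine_Gordon_kink_general (c x₁ x₂ : ℝ) :
    ∃ C > (0 : ℝ), ∀ δ : ℝ, 0 < δ → δ ≤ 1 / 100 → ∀ φ : ℝ → ℝ → ℝ,
      ContDiff ℝ 2 (fun p : ℝ × ℝ => φ p.1 p.2) →
      (∀ t, 0 ≤ t → ∀ x, deriv (fun s => deriv (fun s' => φ s' x) s) t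
        - deriv (fun y => deriv (fun y' => φ t y') y) x + sin (φ t x) = 0) →
      ∀ u : ℝ → ℝ → ℝ, (∀ t x, u t x = φ t x - K x) →
      (∀ t, 0 ≤ t → ∀ x, u t (-x) = -u t x) →
      Integrable (fun x => u 0 x ^ 2) → Integrable (fun x => deriv (fun y => u 0 y) x ^ 2) →
      Integrable (fun x => deriv (fun s => u s x) 0 ^ 2) →
      √(∫ x, (u 0 x ^ 2 + deriv (fun y => u 0 y) x ^ 2 + deriv (fun s => u s x) 0 ^ 2)) ≤ δ →
      ∀ T ≤ exp (c * δ ^ (-(4 / 3) : ℝ)),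
        ∫ t in Set.Ioc 0 T, (1 + t)⁻¹ * ∫ x in Set.Icc x₁ x₂,
          (deriv (fun s => u s x) t ^ 2 + deriv (fun y => u t y) x ^ 2 + u t x ^ 2)
            ≤ C * δ ^ 2 := by
  obtain ⟨Y, hY⟩ : ∃ Y, Y = 1 + |x₁| + |x₂| := ⟨_, rfl⟩
  have hY_one : 1 ≤ Y := by linarith [abs_nonneg x₁, abs_nonneg x₂]
  have hx₁ : -Y ≤ x₁ := by linarith [neg_abs_le x₁, abs_nonneg x₂]
  have hx₂ : x₂ ≤ Y := by linarith [le_abs_self x₂, abs_nonneg x₁]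
  refine ⟨2 * (2 ^ 133 * Y ^ 3 * (1 + (2 * |c| + 3) ^ 3)), by positivity,
    fun δ hδ hδ_le φ hφ hpde u hu hodd hint_u hint_ux hint_ut hinit T hT => ?_⟩
  obtain ⟨ut, ux, utt, uxx, utx, h⟩ := exists_kinkPerturbation hφ hpde hu hodd
  have hut (t x) : deriv (fun s => u s x) t = ut t x := (h.hasDerivAt_time t x).deriv
  have hux (t x) : deriv (fun y => u t y) x = ux t x := (h.hasDerivAt_space t x).deriv
  simp only [hut, hux] at hint_ux hint_ut hinit ⊢
  have hsmall := h.uniformlySmall hδ hδ_le fun L hL =>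
    intervalIntegral_le_sq_of_sqrt_integral_le ((hint_u.add hint_ux).add hint_ut)
      (fun x => add_nonneg (add_nonneg (sq_nonneg _) (sq_nonneg _)) (sq_nonneg _)) hinit hL
  have hlocal := h.integral_Ioc_le_integral_localEnergy hodd (by linarith) hx₁ hx₂ (exp_pos _).le hT
  linarith [h.integral_exp_le c hδ (by linarith) hsmall hY_one]

theorem local_energy_control_sine_Gordon_kink :
    ∀ β : ℝ, 0 < β → β < 4 / 3 →
    ∃ c > (0 : ℝ), ∃ δ₀ > (0 : ℝ), ∀ x₁ x₂ : ℝ, ∃ C > (0 : ℝ),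
      ∀ δ : ℝ, 0 < δ → δ < δ₀ →
      ∀ φ : ℝ → ℝ → ℝ,
        -- smoothness
        ContDiff ℝ (⊤ : ℕ∞) (fun p : ℝ × ℝ => φ p.1 p.2) →
        -- Sine-Gordon equation on [0,∞) × ℝ
        (∀ t, 0 ≤ t → ∀ x,
          deriv (fun s => deriv (fun s' => φ s' x) s) t
            - deriv (fun y => deriv (fun y' => φ t y') y) x
            + Real.sin (φ t x) = 0) →
        ∀ u : ℝ → ℝ → ℝ,
          (∀ t x, u t x = φ t x - K x) →
          -- the perturbation is odd in x
          (∀ t, 0 ≤ t → ∀ x, u t (-x) = -u t x) →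
          -- square integrability of the perturbation and its derivatives
          (∀ t, 0 ≤ t →
            Integrable (fun x => (u t x) ^ 2) ∧
            Integrable (fun x => (deriv (fun y => u t y) x) ^ 2) ∧
            Integrable (fun x => (deriv (fun s => u s x) t) ^ 2)) →
          -- smallness of the initial perturbation in the energy norm
          Real.sqrt (∫ x : ℝ,
              ((u 0 x) ^ 2
                + (deriv (fun y => u 0 y) x) ^ 2
                + (deriv (fun s => u s x) 0) ^ 2)) ≤ δ →
          -- control of the local energy up to time T_max = exp (c δ^{-β})
          (∫ t in Set.Ioc (0 : ℝ) (Real.exp (c * δ ^ (-β))),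
              (1 + t)⁻¹ *
                ∫ x in Set.Icc x₁ x₂,
                  ((deriv (fun s => u s x) t) ^ 2
                    + (deriv (fun y => u t y) x) ^ 2
                    + (u t x) ^ 2)) ≤ C * δ ^ 2 := by
  intro β _ hβ
  refine ⟨1, one_pos, 1 / 100, by norm_num, fun x₁ x₂ => ?_⟩
  obtain ⟨C, hC, hbound⟩ := local_energy_control_sine_Gordon_kink_general 1 x₁ x₂
  refine ⟨C, hC, fun δ hδ hδ_lt φ hφ hpde u hu hodd hint hinit => ?_⟩
  obtain ⟨hint_u, hint_ux, hint_ut⟩ := hint 0 le_rfl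
  have hT : exp (1 * δ ^ (-β)) ≤ exp (1 * δ ^ (-(4 / 3) : ℝ)) := by
    rw [one_mul, one_mul]
    exact exp_le_exp.2 (rpow_le_rpow_of_exponent_ge hδ (by linarith) (by linarith))
  exact hbound δ hδ hδ_lt.le φ (mod_cast contDiff_infty.1 hφ 2) hpde u hu hodd hint_u hint_ux
    hint_ut hinit _ hT
end

section
/- Let V, Φ : ℝ → ℝ be smooth with V, V′ bounded and Φ, Φ′, Φ″, Φ‴ bounded. Let f : ℝ × ℝ → ℝ be smooth and such that, locally uniformly in t, the functions x ↦ f(t,x) and all partial derivatives of f up to order two decay rapidly in x (e.g., all Schwartz seminorms in x are bounded on compact time intervals). Then the function t ↦ I(t) := ∫_ℝ ( Φ(x) ∂ₓf(t,x) + (1/2) Φ′(x) f(t,x) ) ∂ₜf(t,x) dx is differentiable and for every t one has I′(t) = − ∫_ℝ (∂ₓf)² Φ′ dx + (1/2) ∫_ℝ f² V′ Φ dx + (1/4) ∫_ℝ f² Φ‴ dx + ∫_ℝ ( Φ ∂ₓf + (1/2) Φ′ f ) ( ∂ₜ²f − ∂ₓ²f + f + V f ) dx. -/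
open MeasureTheory Real Filter

/-!
The operator `u ↦ Φ u' + ½ Φ' u` is antisymmetric on `L²`. Hence, when `I` is differentiated under
the integral sign, the term `∫ (Φ ∂ₓ∂ₜf + ½ Φ' ∂ₜf) ∂ₜf` vanishes and only
`I'(t) = ∫ (Φ ∂ₓf + ½ Φ' f) ∂ₜ²f` is left. Writing `∂ₜ²f = (□ + 1 + V) f + ∂ₓ²f - f - V f`, the term
in `f` vanishes by antisymmetry again, while the terms in `V f` and `∂ₓ²f` are computed by
integrating exact derivatives. Every integrand is a product of two `L²` functions and bounded
coefficients, so Hölder's inequality makes it integrable, locally uniformly in `t`.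
-/

open scoped ENNReal Topology

section LocallyDominated

variable {T α E : Type*} [TopologicalSpace T] [MeasurableSpace α] [NormedAddCommGroup E]
  {p q r : ℝ≥0∞} {μ : Measure α} {t : T}

/-- A family `u s` of functions is locally dominated in `L^p` at the parameter `t` if a single
`L^p` function bounds `‖u s ·‖` for all `s` near `t`. This is the hypothesis of dominated
differentiation under the integral sign; no measurability of `u s` is included. -/
def LocallyDominated (p : ℝ≥0∞) (μ : Measure α) (t : T) (u : T → α → E) : Prop :=
  ∃ g : α → ℝ, MemLp g p μ ∧ ∀ᶠ s in 𝓝 t, ∀ x, ‖u s x‖ ≤ g x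

namespace LocallyDominated

lemma of_memLp {c : α → E} (hc : MemLp c p μ) : LocallyDominated p μ t fun _ => c :=
  ⟨fun x => ‖c x‖, hc.norm, .of_forall fun _ _ => le_rfl⟩

lemma add {u v : T → α → E} (hu : LocallyDominated p μ t u) (hv : LocallyDominated p μ t v) :
    LocallyDominated p μ t fun s x => u s x + v s x := by
  obtain ⟨g, hg, hug⟩ := hu
  obtain ⟨h, hh, hvh⟩ := hv
  refine ⟨g + h, hg.add hh, ?_⟩
  filter_upwards [hug, hvh] with s hus hvs x
  exact norm_add_le_of_le (hus x) (hvs x)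

lemma mul {R : Type*} [NormedRing R] {u v : T → α → R} [ENNReal.HolderTriple p q r]
    (hu : LocallyDominated p μ t u) (hv : LocallyDominated q μ t v) :
    LocallyDominated r μ t fun s x => u s x * v s x := by
  obtain ⟨g, hg, hug⟩ := hu
  obtain ⟨h, hh, hvh⟩ := hv
  refine ⟨g * h, hh.mul hg, ?_⟩
  filter_upwards [hug, hvh] with s hus hvs x
  exact norm_mul_le_of_le (hus x) (hvs x)

lemma memLp {u : T → α → E} (hu : LocallyDominated p μ t u)
    (hmeas : AEStronglyMeasurable (u t) μ) : MemLp (u t) p μ := by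
  obtain ⟨g, hg, hug⟩ := hu
  exact hg.mono' hmeas (.of_forall hug.self_of_nhds)

lemma hasDerivAt_integral {𝕜 : Type*} [RCLike 𝕜] [NormedSpace ℝ E] [NormedSpace 𝕜 E] {t : 𝕜}
    {F F' : 𝕜 → α → E} (hF_meas : ∀ᶠ s in 𝓝 t, AEStronglyMeasurable (F s) μ)
    (hF_int : Integrable (F t) μ) (hF'_meas : AEStronglyMeasurable (F' t) μ)
    (hF' : LocallyDominated 1 μ t F')
    (hderiv : ∀ᶠ s in 𝓝 t, ∀ x, HasDerivAt (fun s => F s x) (F' s x) s) :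
    HasDerivAt (fun s => ∫ x, F s x ∂μ) (∫ x, F' t x ∂μ) t := by
  obtain ⟨g, hg, hF'g⟩ := hF'
  exact (hasDerivAt_integral_of_dominated_loc_of_deriv_le (hF'g.and hderiv) hF_meas hF_int
    hF'_meas (.of_forall fun x _ hs => hs.1 x) (memLp_one_iff_integrable.1 hg)
    (.of_forall fun x _ hs => hs.2 x)).2

end LocallyDominated

lemma memLp_one_add_norm_rpow_neg {F : Type*} [NormedAddCommGroup F] [NormedSpace ℝ F]
    [FiniteDimensional ℝ F] [MeasurableSpace F] [BorelSpace F] {ν : Measure F}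
    [ν.IsAddHaarMeasure] {p : ℝ≥0∞} {r : ℝ} (hr : Module.finrank ℝ F < r * p.toReal) :
    MemLp (fun x => (1 + ‖x‖) ^ (-r)) p ν := by
  have hp : 0 < p.toReal := by
    refine ENNReal.toReal_nonneg.lt_of_ne fun h => ?_
    rw [← h, mul_zero] at hr
    exact (Nat.cast_nonneg _).not_gt hr
  obtain ⟨hp0, hp_top⟩ := ENNReal.toReal_pos_iff.1 hp
  have hmeas : AEStronglyMeasurable (fun x : F => (1 + ‖x‖) ^ (-r)) ν :=
    (by fun_prop : Measurable fun x : F => (1 + ‖x‖) ^ (-r)).aestronglyMeasurable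
  rw [← integrable_norm_rpow_iff hmeas hp0.ne' hp_top.ne]
  refine (integrable_one_add_norm hr).congr (.of_forall fun x => ?_)
  have hx : 0 ≤ 1 + ‖x‖ := by positivity
  simp only [norm_of_nonneg (rpow_nonneg hx _), ← rpow_mul hx, neg_mul]

lemma LocallyDominated.of_one_add_abs_mul_le {u : ℝ → ℝ → ℝ}
    (hu : ∀ R : ℝ, 0 < R → ∃ C, ∀ t, |t| ≤ R → ∀ x, (1 + |x|) * |u t x| ≤ C) (t : ℝ) :
    LocallyDominated 2 volume t u := by
  obtain ⟨C, hC⟩ := hu (|t| + 1) (by positivity)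
  refine ⟨fun x => C * (1 + ‖x‖) ^ (-1 : ℝ),
    (memLp_one_add_norm_rpow_neg (by norm_num)).const_mul C, ?_⟩
  filter_upwards [continuous_abs.continuousAt.eventually_le_const (lt_add_one |t|)] with s hs x
  rw [rpow_neg_one, ← div_eq_mul_inv, le_div_iff₀' (by positivity)]
  exact hC s hs x

end LocallyDominated

section PartialDerivatives

variable {E : Type*} [NormedAddCommGroup E] [NormedSpace ℝ E] {f : ℝ → ℝ → E}
  {m n : WithTop ℕ∞}

/-- The partial derivative `∂ₜf` of `f t x`, curried like `f` so that it can be iterated. -/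
noncomputable def timeDeriv (f : ℝ → ℝ → E) (t x : ℝ) : E := deriv (fun s => f s x) t

/-- The partial derivative `∂ₓf` of `f t x`, curried like `f` so that it can be iterated. -/
noncomputable def spaceDeriv (f : ℝ → ℝ → E) (t x : ℝ) : E := deriv (f t) x

lemma hasDerivAt_time (hf : Differentiable ℝ f.uncurry) (t x : ℝ) :
    HasDerivAt (fun s => f s x) (fderiv ℝ f.uncurry (t, x) (1, 0)) t :=
  (hf (t, x)).hasFDerivAt.comp_hasDerivAt (f := fun s => (s, x)) t
    ((hasDerivAt_id t).prodMk (hasDerivAt_const t x))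

lemma hasDerivAt_space (hf : Differentiable ℝ f.uncurry) (t x : ℝ) :
    HasDerivAt (f t) (fderiv ℝ f.uncurry (t, x) (0, 1)) x :=
  (hf (t, x)).hasFDerivAt.comp_hasDerivAt (f := fun y => (t, y)) x
    ((hasDerivAt_const x t).prodMk (hasDerivAt_id x))

lemma hasDerivAt_timeDeriv (hf : Differentiable ℝ f.uncurry) (t x : ℝ) :
    HasDerivAt (fun s => f s x) (timeDeriv f t x) t :=
  (hasDerivAt_time hf t x).differentiableAt.hasDerivAt

lemma uncurry_timeDeriv (hf : Differentiable ℝ f.uncurry) :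
    (timeDeriv f).uncurry = fun z => fderiv ℝ f.uncurry z (1, 0) :=
  funext fun z => (hasDerivAt_time hf z.1 z.2).deriv

lemma uncurry_spaceDeriv (hf : Differentiable ℝ f.uncurry) :
    (spaceDeriv f).uncurry = fun z => fderiv ℝ f.uncurry z (0, 1) :=
  funext fun z => (hasDerivAt_space hf z.1 z.2).deriv

lemma contDiff_timeDeriv (hf : ContDiff ℝ n f.uncurry) (hmn : m + 1 ≤ n) :
    ContDiff ℝ m (timeDeriv f).uncurry := by
  rw [uncurry_timeDeriv ((hf.of_le hmn).differentiable (by simp))]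
  exact (hf.fderiv_right hmn).clm_apply contDiff_const

lemma contDiff_spaceDeriv (hf : ContDiff ℝ n f.uncurry) (hmn : m + 1 ≤ n) :
    ContDiff ℝ m (spaceDeriv f).uncurry := by
  rw [uncurry_spaceDeriv ((hf.of_le hmn).differentiable (by simp))]
  exact (hf.fderiv_right hmn).clm_apply contDiff_const

lemma spaceDeriv_timeDeriv (hf : ContDiff ℝ 2 f.uncurry) :
    spaceDeriv (timeDeriv f) = timeDeriv (spaceDeriv f) := by
  have hdf : Differentiable ℝ f.uncurry := hf.differentiable two_ne_zero
  have hd : Differentiable ℝ (fderiv ℝ f.uncurry) :=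
    (hf.fderiv_right (m := 1) (by norm_num)).differentiable one_ne_zero
  have hdt : Differentiable ℝ (timeDeriv f).uncurry :=
    (contDiff_timeDeriv hf (m := 1) (by norm_num)).differentiable one_ne_zero
  have hdx : Differentiable ℝ (spaceDeriv f).uncurry :=
    (contDiff_spaceDeriv hf (m := 1) (by norm_num)).differentiable one_ne_zero
  have fderiv_fderiv_apply (z v w : ℝ × ℝ) :
      fderiv ℝ (fun y => fderiv ℝ f.uncurry y v) z w = fderiv ℝ (fderiv ℝ f.uncurry) z w v := by
    simp [fderiv_clm_apply (hd z) (differentiableAt_const v)]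
  have hsymm (z : ℝ × ℝ) : IsSymmSndFDerivAt ℝ f.uncurry z :=
    hf.contDiffAt.isSymmSndFDerivAt (by simp)
  ext t x
  calc spaceDeriv (timeDeriv f) t x
      = fderiv ℝ (fderiv ℝ f.uncurry) (t, x) (0, 1) (1, 0) := by
        rw [← fderiv_fderiv_apply, ← uncurry_timeDeriv hdf]
        exact (hasDerivAt_space hdt t x).deriv
    _ = fderiv ℝ (fderiv ℝ f.uncurry) (t, x) (1, 0) (0, 1) := hsymm _ _ _
    _ = timeDeriv (spaceDeriv f) t x := by
        rw [← fderiv_fderiv_apply, ← uncurry_spaceDeriv hdf]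
        exact (hasDerivAt_time hdx t x).deriv.symm

end PartialDerivatives

section VirialMultiplier

/-- The multiplier `Φ u' + ½ Φ' u` of the virial functional: the antisymmetric part of `Φ ∂ₓ`
applied to `u`. -/
noncomputable def virialMultiplier (Φ u : ℝ → ℝ) (x : ℝ) : ℝ :=
  Φ x * deriv u x + 1 / 2 * deriv Φ x * u x

variable {V Φ u : ℝ → ℝ}

lemma aestronglyMeasurable_virialMultiplier {μ : Measure ℝ} (hΦ : AEStronglyMeasurable Φ μ)
    (hu : AEStronglyMeasurable u μ) : AEStronglyMeasurable (virialMultiplier Φ u) μ :=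
  (hΦ.mul (aestronglyMeasurable_deriv u μ)).add
    (((aestronglyMeasurable_deriv Φ μ).const_mul (1 / 2)).mul hu)

lemma memLp_virialMultiplier {p : ℝ≥0∞} {μ : Measure ℝ} (hΦ : MemLp Φ ∞ μ)
    (hΦ' : MemLp (deriv Φ) ∞ μ) (hu : MemLp u p μ) (hu' : MemLp (deriv u) p μ) :
    MemLp (virialMultiplier Φ u) p μ :=
  (hu'.mul' hΦ).add (hu.mul' (hΦ'.const_mul (1 / 2)))

lemma LocallyDominated.virialMultiplier {T : Type*} [TopologicalSpace T] {p : ℝ≥0∞}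
    {μ : Measure ℝ} {t : T} {v : T → ℝ → ℝ} (hΦ : MemLp Φ ∞ μ) (hΦ' : MemLp (deriv Φ) ∞ μ)
    (hv : LocallyDominated p μ t v) (hv' : LocallyDominated p μ t fun s => deriv (v s)) :
    LocallyDominated p μ t fun s => virialMultiplier Φ (v s) :=
  ((of_memLp hΦ).mul hv').add ((of_memLp (hΦ'.const_mul (1 / 2))).mul hv)

lemma integrable_mul_mul_of_memLp_two {α : Type*} [MeasurableSpace α] {μ : Measure α}
    {c a b : α → ℝ} (hc : MemLp c ∞ μ) (ha : MemLp a 2 μ) (hb : MemLp b 2 μ) :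
    Integrable (fun x => c x * (a x * b x)) μ :=
  hc.integrable_mul (q := 1) (hb.mul' (r := 1) ha)

lemma integral_virialMultiplier_mul_potential (hV : Differentiable ℝ V) (hΦ : Differentiable ℝ Φ)
    (hu : Differentiable ℝ u) (hV_top : MemLp V ∞) (hV'_top : MemLp (deriv V) ∞)
    (hΦ_top : MemLp Φ ∞) (hΦ'_top : MemLp (deriv Φ) ∞)
    (hu_two : MemLp u 2) (hu'_two : MemLp (deriv u) 2) :
    ∫ x, virialMultiplier Φ u x * (V x * u x) = -(1 / 2 * ∫ x, u x ^ 2 * deriv V x * Φ x) := by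
  have hderiv (x : ℝ) : HasDerivAt (fun y => 1 / 2 * (Φ y * V y * (u y * u y)))
      (virialMultiplier Φ u x * (V x * u x) + 1 / 2 * (u x ^ 2 * deriv V x * Φ x)) x := by
    have hΦx := (hΦ x).hasDerivAt
    have hux := (hu x).hasDerivAt
    refine (((hΦx.mul (hV x).hasDerivAt).mul (hux.mul hux)).const_mul (1 / 2)).congr_deriv ?_
    simp only [virialMultiplier, Pi.mul_apply]
    ring
  have hprim : Integrable fun y => 1 / 2 * (Φ y * V y * (u y * u y)) :=
    (integrable_mul_mul_of_memLp_two (hV_top.mul hΦ_top) hu_two hu_two).const_mul _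
  have hVu_two : MemLp (fun x => V x * u x) 2 := hu_two.mul' hV_top
  have hmul : Integrable fun x => virialMultiplier Φ u x * (V x * u x) :=
    (memLp_virialMultiplier hΦ_top hΦ'_top hu_two hu'_two).integrable_mul hVu_two
  have hV' : Integrable fun x => u x ^ 2 * deriv V x * Φ x := by
    convert integrable_mul_mul_of_memLp_two (hV'_top.mul hΦ_top) hu_two hu_two using 2
    simp only [Pi.mul_apply]
    ring
  have hzero := integral_eq_zero_of_hasDerivAt_of_integrable hderiv
    (hmul.add (hV'.const_mul _)) hprim
  rw [integral_add hmul (hV'.const_mul _), integral_const_mul] at hzero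
  exact eq_neg_of_add_eq_zero_left hzero

lemma integral_virialMultiplier_mul_self (hΦ : Differentiable ℝ Φ) (hu : Differentiable ℝ u)
    (hΦ_top : MemLp Φ ∞) (hΦ'_top : MemLp (deriv Φ) ∞)
    (hu_two : MemLp u 2) (hu'_two : MemLp (deriv u) 2) :
    ∫ x, virialMultiplier Φ u x * u x = 0 := by
  simpa using integral_virialMultiplier_mul_potential (V := fun _ => 1)
    (differentiable_const _) hΦ hu (memLp_top_const _) (by simp) hΦ_top hΦ'_top hu_two hu'_two

lemma integral_virialMultiplier_mul_deriv_deriv (hΦ : Differentiable ℝ Φ)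
    (hΦ' : Differentiable ℝ (deriv Φ)) (hΦ'' : Differentiable ℝ (deriv (deriv Φ)))
    (hu : Differentiable ℝ u) (hu' : Differentiable ℝ (deriv u))
    (hΦ_top : MemLp Φ ∞) (hΦ'_top : MemLp (deriv Φ) ∞) (hΦ''_top : MemLp (deriv (deriv Φ)) ∞)
    (hΦ'''_top : MemLp (deriv (deriv (deriv Φ))) ∞)
    (hu_two : MemLp u 2) (hu'_two : MemLp (deriv u) 2) (hu''_two : MemLp (deriv (deriv u)) 2) :
    ∫ x, virialMultiplier Φ u x * deriv (deriv u) x =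
      -(∫ x, deriv u x ^ 2 * deriv Φ x)
        + 1 / 4 * ∫ x, u x ^ 2 * deriv (deriv (deriv Φ)) x := by
  have hderiv (x : ℝ) : HasDerivAt
      (fun y => 1 / 2 * (Φ y * (deriv u y * deriv u y)) + 1 / 2 * (deriv Φ y * (u y * deriv u y))
        - 1 / 4 * (deriv (deriv Φ) y * (u y * u y)))
      (virialMultiplier Φ u x * deriv (deriv u) x + deriv u x ^ 2 * deriv Φ x
        - 1 / 4 * (u x ^ 2 * deriv (deriv (deriv Φ)) x)) x := by
    have hux := (hu x).hasDerivAt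
    have hu'x := (hu' x).hasDerivAt
    refine (((((hΦ x).hasDerivAt.mul (hu'x.mul hu'x)).const_mul (1 / 2)).add
      (((hΦ' x).hasDerivAt.mul (hux.mul hu'x)).const_mul (1 / 2))).sub
      (((hΦ'' x).hasDerivAt.mul (hux.mul hux)).const_mul (1 / 4))).congr_deriv ?_
    simp only [virialMultiplier, Pi.mul_apply]
    ring
  have hprim := (((integrable_mul_mul_of_memLp_two hΦ_top hu'_two hu'_two).const_mul (1 / 2)).add
    ((integrable_mul_mul_of_memLp_two hΦ'_top hu_two hu'_two).const_mul (1 / 2))).sub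
    ((integrable_mul_mul_of_memLp_two hΦ''_top hu_two hu_two).const_mul (1 / 4))
  have hmul : Integrable fun x => virialMultiplier Φ u x * deriv (deriv u) x :=
    (memLp_virialMultiplier hΦ_top hΦ'_top hu_two hu'_two).integrable_mul hu''_two
  have hΦ'_int : Integrable fun x => deriv u x ^ 2 * deriv Φ x := by
    simpa only [sq, mul_comm] using integrable_mul_mul_of_memLp_two hΦ'_top hu'_two hu'_two
  have hΦ'''_int : Integrable fun x => u x ^ 2 * deriv (deriv (deriv Φ)) x := by
    simpa only [sq, mul_comm] using integrable_mul_mul_of_memLp_two hΦ'''_top hu_two hu_two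
  have hsum : Integrable fun x =>
      virialMultiplier Φ u x * deriv (deriv u) x + deriv u x ^ 2 * deriv Φ x := hmul.add hΦ'_int
  have hzero := integral_eq_zero_of_hasDerivAt_of_integrable hderiv
    (hsum.sub (hΦ'''_int.const_mul _)) hprim
  rw [integral_sub hsum (hΦ'''_int.const_mul _), integral_add hmul hΦ'_int,
    integral_const_mul] at hzero
  linarith

lemma integral_virialMultiplier_mul_eq_add_kleinGordon {w : ℝ → ℝ} (hV : Differentiable ℝ V)
    (hΦ : ∀ i < 3, Differentiable ℝ (deriv^[i] Φ)) (hu : Differentiable ℝ u)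
    (hu' : Differentiable ℝ (deriv u)) (hV_top : MemLp V ∞) (hV'_top : MemLp (deriv V) ∞)
    (hΦ_top : ∀ i ≤ 3, MemLp (deriv^[i] Φ) ∞) (hu_two : MemLp u 2)
    (hu'_two : MemLp (deriv u) 2) (hu''_two : MemLp (deriv (deriv u)) 2) (hw : MemLp w 2) :
    ∫ x, virialMultiplier Φ u x * w x =
      -(∫ x, deriv u x ^ 2 * deriv Φ x)
        + 1 / 2 * (∫ x, u x ^ 2 * deriv V x * Φ x)
        + 1 / 4 * (∫ x, u x ^ 2 * deriv (deriv (deriv Φ)) x)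
        + ∫ x, virialMultiplier Φ u x * (w x - deriv (deriv u) x + u x + V x * u x) := by
  have hΦ0_top : MemLp Φ ∞ := hΦ_top 0 (by norm_num)
  have hΦ1_top : MemLp (deriv Φ) ∞ := hΦ_top 1 (by norm_num)
  have hΦ_diff : Differentiable ℝ Φ := hΦ 0 (by norm_num)
  have hmul {v : ℝ → ℝ} (hv : MemLp v 2) : Integrable fun x => virialMultiplier Φ u x * v x :=
    (memLp_virialMultiplier hΦ0_top hΦ1_top hu_two hu'_two).integrable_mul hv
  have hVu : MemLp (fun x => V x * u x) 2 := hu_two.mul' hV_top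
  have hsplit : ∫ x, virialMultiplier Φ u x * (w x - deriv (deriv u) x + u x + V x * u x) =
      (∫ x, virialMultiplier Φ u x * w x) - (∫ x, virialMultiplier Φ u x * deriv (deriv u) x)
        + (∫ x, virialMultiplier Φ u x * u x)
        + ∫ x, virialMultiplier Φ u x * (V x * u x) := by
    simp only [mul_add, mul_sub]
    rw [integral_add _ (hmul hVu), integral_add _ (hmul hu_two),
      integral_sub (hmul hw) (hmul hu''_two)]
    · exact (hmul hw).sub (hmul hu''_two)
    · exact ((hmul hw).sub (hmul hu''_two)).add (hmul hu_two)
  rw [hsplit, integral_virialMultiplier_mul_deriv_deriv hΦ_diff (hΦ 1 (by norm_num))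
      (hΦ 2 (by norm_num)) hu hu' hΦ0_top hΦ1_top (hΦ_top 2 (by norm_num)) (hΦ_top 3 le_rfl)
      hu_two hu'_two hu''_two,
    integral_virialMultiplier_mul_self hΦ_diff hu hΦ0_top hΦ1_top hu_two hu'_two,
    integral_virialMultiplier_mul_potential hV hΦ_diff hu hV_top hV'_top hΦ0_top hΦ1_top
      hu_two hu'_two]
  ring

end VirialMultiplier

section VirialIdentity

variable {Φ : ℝ → ℝ} {f : ℝ → ℝ → ℝ} {t : ℝ}

lemma hasDerivAt_virialMultiplier (hf : ContDiff ℝ 2 f.uncurry) (t x : ℝ) :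
    HasDerivAt (fun s => virialMultiplier Φ (f s) x) (virialMultiplier Φ (timeDeriv f t) x) t := by
  have hfx : Differentiable ℝ (spaceDeriv f).uncurry :=
    (contDiff_spaceDeriv hf (m := 1) (by norm_num)).differentiable one_ne_zero
  refine (((hasDerivAt_timeDeriv hfx t x).const_mul (Φ x)).add
    ((hasDerivAt_timeDeriv (hf.differentiable two_ne_zero) t x).const_mul _)).congr_deriv ?_
  rw [← spaceDeriv_timeDeriv hf]
  rfl

lemma hasDerivAt_integral_virialMultiplier_mul_timeDeriv (hΦ : Differentiable ℝ Φ)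
    (hΦ_top : MemLp Φ ∞) (hΦ'_top : MemLp (deriv Φ) ∞) (hf : ContDiff ℝ 2 f.uncurry)
    (hf_dom : LocallyDominated 2 volume t f)
    (hfx_dom : LocallyDominated 2 volume t (spaceDeriv f))
    (hft_dom : LocallyDominated 2 volume t (timeDeriv f))
    (hftx_dom : LocallyDominated 2 volume t (timeDeriv (spaceDeriv f)))
    (hftt_dom : LocallyDominated 2 volume t (timeDeriv (timeDeriv f))) :
    HasDerivAt (fun s => ∫ x, virialMultiplier Φ (f s) x * timeDeriv f s x)
      (∫ x, virialMultiplier Φ (f t) x * timeDeriv (timeDeriv f) t x) t := by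
  rw [← spaceDeriv_timeDeriv hf] at hftx_dom
  have hft : ContDiff ℝ 1 (timeDeriv f).uncurry := contDiff_timeDeriv hf (by norm_num)
  have hftt : ContDiff ℝ 0 (timeDeriv (timeDeriv f)).uncurry := contDiff_timeDeriv hft (by simp)
  have hft_diff : Differentiable ℝ (timeDeriv f).uncurry := hft.differentiable one_ne_zero
  have hf_meas (s : ℝ) : AEStronglyMeasurable (f s) :=
    (hf.continuous.uncurry_left s).aestronglyMeasurable
  have hft_meas (s : ℝ) : AEStronglyMeasurable (timeDeriv f s) :=
    (hft.continuous.uncurry_left s).aestronglyMeasurable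
  have hftt_meas : AEStronglyMeasurable (timeDeriv (timeDeriv f) t) :=
    (hftt.continuous.uncurry_left t).aestronglyMeasurable
  have hmul_f (s : ℝ) : AEStronglyMeasurable (virialMultiplier Φ (f s)) :=
    aestronglyMeasurable_virialMultiplier hΦ_top.1 (hf_meas s)
  have hmul_ft : AEStronglyMeasurable (virialMultiplier Φ (timeDeriv f t)) :=
    aestronglyMeasurable_virialMultiplier hΦ_top.1 (hft_meas t)
  have hmul_f_dom : LocallyDominated 2 volume t fun s => virialMultiplier Φ (f s) :=
    hf_dom.virialMultiplier hΦ_top hΦ'_top hfx_dom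
  have hmul_ft_dom : LocallyDominated 2 volume t fun s => virialMultiplier Φ (timeDeriv f s) :=
    hft_dom.virialMultiplier hΦ_top hΦ'_top hftx_dom
  have hft_two := hft_dom.memLp (hft_meas t)
  have hmul_f_two := hmul_f_dom.memLp (hmul_f t)
  have hI := LocallyDominated.hasDerivAt_integral
    (.of_forall fun s => (hmul_f s).mul (hft_meas s)) (hmul_f_two.integrable_mul hft_two)
    ((hmul_ft.mul (hft_meas t)).add ((hmul_f t).mul hftt_meas))
    ((hmul_ft_dom.mul hft_dom).add (hmul_f_dom.mul hftt_dom))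
    (.of_forall fun s x =>
      (hasDerivAt_virialMultiplier hf s x).mul (hasDerivAt_timeDeriv hft_diff s x))
  refine hI.congr_deriv ((integral_add ((hmul_ft_dom.memLp hmul_ft).integrable_mul hft_two)
    (hmul_f_two.integrable_mul (hftt_dom.memLp hftt_meas))).trans ?_)
  simp only [Pi.mul_apply]
  rw [integral_virialMultiplier_mul_self hΦ
      (fun x => (hasDerivAt_space hft_diff t x).differentiableAt) hΦ_top hΦ'_top hft_two
      (hftx_dom.memLp (aestronglyMeasurable_deriv _ _)), zero_add]

theorem virial_identity_modified_momentum_general {V : ℝ → ℝ}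
    (hV : Differentiable ℝ V) (hV_top : MemLp V ∞) (hV'_top : MemLp (deriv V) ∞)
    (hΦ : ∀ i < 3, Differentiable ℝ (deriv^[i] Φ)) (hΦ_top : ∀ i ≤ 3, MemLp (deriv^[i] Φ) ∞)
    (hf : ContDiff ℝ 2 f.uncurry)
    (hdom : ∀ j k : ℕ, j + k ≤ 2 →
      LocallyDominated 2 volume t fun s x => deriv^[j] (fun r => deriv^[k] (f r) x) s) :
    HasDerivAt (fun s => ∫ x, virialMultiplier Φ (f s) x * timeDeriv f s x)
      (-(∫ x, spaceDeriv f t x ^ 2 * deriv Φ x)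
        + 1 / 2 * (∫ x, f t x ^ 2 * deriv V x * Φ x)
        + 1 / 4 * (∫ x, f t x ^ 2 * deriv (deriv (deriv Φ)) x)
        + ∫ x, virialMultiplier Φ (f t) x * (timeDeriv (timeDeriv f) t x
            - spaceDeriv (spaceDeriv f) t x + f t x + V x * f t x))
      t := by
  have hft : ContDiff ℝ 1 (timeDeriv f).uncurry := contDiff_timeDeriv hf (by norm_num)
  have hfx : ContDiff ℝ 1 (spaceDeriv f).uncurry := contDiff_spaceDeriv hf (by norm_num)
  have hftt : ContDiff ℝ 0 (timeDeriv (timeDeriv f)).uncurry := contDiff_timeDeriv hft (by simp)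
  have hf_dom : LocallyDominated 2 volume t f := hdom 0 0 (by norm_num)
  have hfx_dom : LocallyDominated 2 volume t (spaceDeriv f) := hdom 0 1 (by norm_num)
  have hfxx_dom : LocallyDominated 2 volume t (spaceDeriv (spaceDeriv f)) := hdom 0 2 le_rfl
  have hftt_dom : LocallyDominated 2 volume t (timeDeriv (timeDeriv f)) := hdom 2 0 le_rfl
  refine (hasDerivAt_integral_virialMultiplier_mul_timeDeriv (Φ := Φ) (hΦ 0 (by norm_num))
    (hΦ_top 0 (by norm_num)) (hΦ_top 1 (by norm_num)) hf hf_dom hfx_dom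
    (hdom 1 0 (by norm_num)) (hdom 1 1 le_rfl) hftt_dom).congr_deriv ?_
  exact integral_virialMultiplier_mul_eq_add_kleinGordon hV hΦ
    (fun x => (hasDerivAt_space (hf.differentiable two_ne_zero) t x).differentiableAt)
    (fun x => (hasDerivAt_space (hfx.differentiable one_ne_zero) t x).differentiableAt)
    hV_top hV'_top hΦ_top
    (hf_dom.memLp (hf.continuous.uncurry_left t).aestronglyMeasurable)
    (hfx_dom.memLp (aestronglyMeasurable_deriv _ _))
    (hfxx_dom.memLp (aestronglyMeasurable_deriv _ _))
    (hftt_dom.memLp (hftt.continuous.uncurry_left t).aestronglyMeasurable)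

end VirialIdentity

theorem virial_identity_modified_momentum
    (V Φ : ℝ → ℝ) (f : ℝ → ℝ → ℝ)
    (hV : ContDiff ℝ (⊤ : ℕ∞) V)
    (hVbdd : ∃ M : ℝ, ∀ x, |V x| ≤ M ∧ |deriv V x| ≤ M)
    (hΦ : ContDiff ℝ (⊤ : ℕ∞) Φ)
    (hΦbdd : ∃ M : ℝ, ∀ x, |Φ x| ≤ M ∧ |deriv Φ x| ≤ M ∧
      |deriv (deriv Φ) x| ≤ M ∧ |deriv (deriv (deriv Φ)) x| ≤ M)
    (hf : ContDiff ℝ (⊤ : ℕ∞) (fun p : ℝ × ℝ => f p.1 p.2))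
    -- f and its partial derivatives up to order two decay rapidly in x,
    -- locally uniformly in t
    (hdecay : ∀ R : ℝ, 0 < R → ∀ n j k : ℕ, j + k ≤ 2 → ∃ C : ℝ,
      ∀ t : ℝ, |t| ≤ R → ∀ x : ℝ,
        (1 + |x|) ^ n * |deriv^[j] (fun s => deriv^[k] (fun y => f s y) x) t| ≤ C) :
    ∀ t : ℝ,
      HasDerivAt
        (fun τ => ∫ x : ℝ,
          (Φ x * deriv (fun y => f τ y) x + (1 / 2) * deriv Φ x * f τ x)
            * deriv (fun s => f s x) τ)
        (-(∫ x : ℝ, (deriv (fun y => f t y) x) ^ 2 * deriv Φ x)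
          + (1 / 2) * (∫ x : ℝ, (f t x) ^ 2 * deriv V x * Φ x)
          + (1 / 4) * (∫ x : ℝ, (f t x) ^ 2 * deriv (deriv (deriv Φ)) x)
          + ∫ x : ℝ,
              (Φ x * deriv (fun y => f t y) x + (1 / 2) * deriv Φ x * f t x)
                * (deriv (fun s => deriv (fun s' => f s' x) s) t
                    - deriv (fun y => deriv (fun y' => f t y') y) x
                    + f t x + V x * f t x))
        t := by
  obtain ⟨MV, hMV⟩ := hVbdd
  obtain ⟨M, hM⟩ := hΦbdd
  have hV_top : MemLp V ∞ := memLp_top_of_bound hV.continuous.aestronglyMeasurable MV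
    (.of_forall fun x => (hMV x).1)
  have hV'_top : MemLp (deriv V) ∞ := memLp_top_of_bound (aestronglyMeasurable_deriv V _) MV
    (.of_forall fun x => (hMV x).2)
  have hΦ_le : ∀ i ≤ 3, ∀ x, ‖deriv^[i] Φ x‖ ≤ M := by
    intro i hi x
    obtain ⟨h0, h1, h2, h3⟩ := hM x
    interval_cases i <;> assumption
  have hΦ_top : ∀ i ≤ 3, MemLp (deriv^[i] Φ) ∞ := fun i hi =>
    memLp_top_of_bound (hΦ.iterate_deriv i).continuous.aestronglyMeasurable M
      (.of_forall (hΦ_le i hi))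
  have hΦ_diff (i : ℕ) : Differentiable ℝ (deriv^[i] Φ) :=
    (hΦ.iterate_deriv i).differentiable (by simp)
  have hdom (j k : ℕ) (hjk : j + k ≤ 2) := LocallyDominated.of_one_add_abs_mul_le
    fun R hR => by simpa only [pow_one] using hdecay R hR 1 j k hjk
  exact fun t => virial_identity_modified_momentum_general (hV.differentiable (by simp))
    hV_top hV'_top (fun i _ => hΦ_diff i) hΦ_top (mod_cast contDiff_infty.1 hf 2)
    fun j k hjk => hdom j k hjk t
end
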